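/- arXiv:2405.15128 — 3 statements merged into one kernel-verified Lean document; each statement's English description precedes it below -/
import Mathlib

section
/- Let d ≥ 1, 0 < λ < d, and k ∈ ℕ ∪ {0}, and let χ be a smooth, compactly supported probability density on ℝ^d. Then there exists a constant C > 0, depending only on d, λ, k and χ, such that for every η > 0 the k-th derivative of V^η = χ^η * Φ satisfies sup_{x ∈ ℝ^d} ‖D^k V^η(x)‖ ≤ C η^{-(λ+k)}, where D^k denotes the k-th iterated (Fréchet) derivative. -/
open MeasureTheory

open scoped Convolution in
lemma riesz_aux_bound {E F' F : Type} [NormedAddCommGroup E] [NormedSpace ℝ E]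
    [FiniteDimensional ℝ E] [MeasurableSpace E] [BorelSpace E]
    {μ : Measure E} [μ.IsAddHaarMeasure]
    [NormedAddCommGroup F'] [NormedSpace ℝ F'] [NormedAddCommGroup F] [NormedSpace ℝ F]
    (f : E → ℝ) (hf : LocallyIntegrable f μ) (hf1 : ∀ x, 1 ≤ ‖x‖ → ‖f x‖ ≤ 1)
    (L : ℝ →L[ℝ] F' →L[ℝ] F) (g : E → F') (hg : Continuous g)
    (hgs : HasCompactSupport g) :
    ∃ C : ℝ, ∀ x, ‖(f ⋆[L, μ] g) x‖ ≤ C := by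
  obtain ⟨M, hM⟩ := hgs.exists_bound_of_continuous hg
  have hM0 : 0 ≤ M := (norm_nonneg _).trans (hM 0)
  have hB : IntegrableOn f (Metric.closedBall 0 1) μ :=
    hf.integrableOn_isCompact (isCompact_closedBall _ _)
  have hB' : Integrable ((Metric.closedBall (0:E) 1).indicator (fun t => ‖f t‖)) μ :=
    (integrable_indicator_iff measurableSet_closedBall).2 hB.norm
  have hgi : Integrable (fun t => ‖g t‖) μ := (hg.integrable_of_hasCompactSupport hgs).norm
  refine ⟨‖L‖ * (M * ∫ t, (Metric.closedBall (0:E) 1).indicator (fun t => ‖f t‖) t ∂μ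
    + ∫ t, ‖g t‖ ∂μ), fun x => ?_⟩
  have hgx : Integrable (fun t => ‖g (x - t)‖) μ := hgi.comp_sub_left x
  have e : ∫ t, ‖g t‖ ∂μ = ∫ t, ‖g (x - t)‖ ∂μ :=
    (integral_sub_left_eq_self (fun t => ‖g t‖) μ x).symm
  rw [e, ← integral_const_mul, ← integral_add (hB'.const_mul M) hgx, ← integral_const_mul]
  refine norm_integral_le_of_norm_le (((hB'.const_mul M).add hgx).const_mul _)
    (Filter.Eventually.of_forall fun t => ?_)
  refine (L.le_opNorm₂ _ _).trans ?_
  rw [mul_assoc]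
  refine mul_le_mul_of_nonneg_left ?_ L.opNorm_nonneg
  by_cases ht : t ∈ Metric.closedBall (0:E) 1
  · simp only [Pi.add_apply, Set.indicator_of_mem ht]
    nlinarith [mul_le_mul_of_nonneg_left (hM (x - t)) (norm_nonneg (f t)), norm_nonneg (g (x - t))]
  · simp only [Pi.add_apply, Set.indicator_of_notMem ht]
    have : 1 ≤ ‖t‖ := by
      simp only [Metric.mem_closedBall, dist_zero_right, not_le] at ht
      exact ht.le
    nlinarith [mul_le_mul_of_nonneg_right (hf1 t this) (norm_nonneg (g (x - t)))]

open scoped Convolution in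
lemma riesz_aux_deriv {E : Type} [NormedAddCommGroup E] [NormedSpace ℝ E]
    [FiniteDimensional ℝ E] [MeasurableSpace E] [BorelSpace E]
    {μ : Measure E} [μ.IsAddHaarMeasure]
    (f : E → ℝ) (hf : LocallyIntegrable f μ) (hf1 : ∀ x, 1 ≤ ‖x‖ → ‖f x‖ ≤ 1) (k : ℕ) :
    ∀ {F' F : Type} [NormedAddCommGroup F'] [NormedSpace ℝ F'] [NormedAddCommGroup F]
    [NormedSpace ℝ F]
    (L : ℝ →L[ℝ] F' →L[ℝ] F) (g : E → F') (_ : ContDiff ℝ (⊤ : ℕ∞) g)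
    (_ : HasCompactSupport g),
    ∃ C : ℝ, ∀ x, ‖iteratedFDeriv ℝ k (f ⋆[L, μ] g) x‖ ≤ C := by
  induction k with
  | zero =>
    intro F' F _ _ _ _ L g hg hgs
    simpa only [norm_iteratedFDeriv_zero] using riesz_aux_bound f hf hf1 L g hg.continuous hgs
  | succ k ih =>
    intro F' F _ _ _ _ L g hg hgs
    obtain ⟨C, hC⟩ := ih (L.precompR E) (fderiv ℝ g)
      (hg.fderiv_right (by norm_cast)) (hgs.fderiv ℝ)
    refine ⟨C, fun x => ?_⟩
    have e : fderiv ℝ (f ⋆[L, μ] g) = (f ⋆[L.precompR E, μ] fderiv ℝ g) := by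
      ext1 y
      exact (hgs.hasFDerivAt_convolution_right L hf (hg.of_le (by norm_cast)) y).fderiv
    rw [← norm_iteratedFDeriv_fderiv, e]
    exact hC x

open scoped Convolution in
/-- For `0 < λ < d` and a smooth compactly supported probability density `χ`, the
`k`-th derivative of the mollified Riesz potential `V^η = χ^η * Φ`,
`χ^η(x) = η^{-d} χ(x/η)`, `Φ(x) = |x|^{-λ}`, satisfies
`sup_x ‖D^k V^η(x)‖ ≤ C η^{-(λ+k)}` with `C` independent of `η`. -/
theorem mollified_riesz_derivative_bound
    (d k : ℕ) (hd : 1 ≤ d) (lam : ℝ) (hlam0 : 0 < lam) (hlamd : lam < d)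
    (χ : EuclideanSpace ℝ (Fin d) → ℝ)
    (hχsmooth : ContDiff ℝ (⊤ : ℕ∞) χ) (hχsupp : HasCompactSupport χ)
    (hχnonneg : ∀ x, 0 ≤ χ x) (hχint : (∫ x, χ x) = 1) :
    ∃ C : ℝ, 0 < C ∧ ∀ η : ℝ, 0 < η → ∀ x : EuclideanSpace ℝ (Fin d),
      ‖iteratedFDeriv ℝ k
          (fun z : EuclideanSpace ℝ (Fin d) =>
            ∫ y : EuclideanSpace ℝ (Fin d),
              (η ^ (-(d : ℝ)) * χ (η⁻¹ • (z - y))) * ‖y‖ ^ (-lam)) x‖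
        ≤ C * η ^ (-(lam + k)) := by
  set Φ : EuclideanSpace ℝ (Fin d) → ℝ := fun y => ‖y‖ ^ (-lam) with hΦ
  have hloc : LocallyIntegrable Φ volume := by
    refine locallyIntegrable_of_norm_le_rpow (C := 1) (α := lam) (by simpa using hd)
      (by simpa using hlamd) (Filter.Eventually.of_forall fun x => ?_) ?_
    · rw [one_mul, Real.norm_of_nonneg (by positivity)]
    · exact (measurable_norm.pow_const _).aestronglyMeasurable
  have h1 : ∀ x, 1 ≤ ‖x‖ → ‖Φ x‖ ≤ 1 := by
    intro x hx
    rw [Real.norm_of_nonneg (by positivity)]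
    exact Real.rpow_le_one_of_one_le_of_nonpos hx (by linarith)
  let L := ContinuousLinearMap.mul ℝ ℝ
  obtain ⟨C, hC⟩ := riesz_aux_deriv Φ hloc h1 k L χ hχsmooth hχsupp
  have hsm : ContDiff ℝ (⊤ : ℕ∞) (Φ ⋆[L, volume] χ) :=
    hχsupp.contDiff_convolution_right L hloc hχsmooth
  have hsmk : ContDiff ℝ k (Φ ⋆[L, volume] χ) := hsm.of_le (by norm_cast; exact le_top)
  refine ⟨|C| + 1, by positivity, fun η hη x => ?_⟩
  have key : (fun z : EuclideanSpace ℝ (Fin d) =>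
            ∫ y : EuclideanSpace ℝ (Fin d),
              (η ^ (-(d : ℝ)) * χ (η⁻¹ • (z - y))) * ‖y‖ ^ (-lam))
      = fun z => η ^ (-lam) • (Φ ⋆[L, volume] χ) (η⁻¹ • z) := by
    ext z
    have := Measure.integral_comp_inv_smul_of_nonneg (volume : Measure (EuclideanSpace ℝ (Fin d)))
      (fun u => (η ^ (-(d : ℝ)) * χ (η⁻¹ • z - u)) * ‖η • u‖ ^ (-lam)) hη.le
    simp only [smul_inv_smul₀ hη.ne', ← smul_sub] at this
    rw [this, finrank_euclideanSpace_fin, convolution_def, ← integral_smul, ← integral_smul]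
    congr 1
    ext u
    simp only [L, hΦ, ContinuousLinearMap.mul_apply', smul_eq_mul, norm_smul,
      Real.norm_of_nonneg hη.le, Real.mul_rpow hη.le (norm_nonneg u)]
    rw [Real.rpow_neg hη.le (d : ℝ), Real.rpow_natCast]
    field_simp
  have hcomp : ContDiff ℝ k (fun z => (Φ ⋆[L, volume] χ) (η⁻¹ • z)) :=
    hsmk.comp (contDiff_const_smul _)
  rw [key, iteratedFDeriv_const_smul_apply' hcomp.contDiffAt, iteratedFDeriv_comp_const_smul _ hsmk,
    norm_smul, norm_smul, neg_add, Real.rpow_add hη, Real.rpow_neg hη.le (k : ℝ),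
    Real.rpow_natCast, Real.norm_of_nonneg (by positivity), Real.norm_of_nonneg (by positivity),
    inv_pow, ← mul_assoc, mul_comm]
  gcongr
  exact (hC _).trans ((le_abs_self C).trans (by linarith))
end

section
/- Let d ≥ 3, 0 < λ < d − 2, and p* = d/(d−λ). Then there exists a constant C > 0, depending only on d and λ (in particular independent of p), such that for every real p ≥ 2 and every nonnegative smooth compactly supported function w : ℝ^d → ℝ, ∫_{ℝ^d} w(x)^p ( ∫_{ℝ^d} |x−y|^{-(λ+2)} w(y) dy ) dx ≤ C ‖∇(w^{p/2})‖²_{L²(ℝ^d)} ‖w‖_{L^{p*}(ℝ^d)}. -/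
open MeasureTheory

lemma radial_lintegral (d : ℕ) (hd : 3 ≤ d) (f : ℝ → ℝ) (hf : ∀ t, 0 ≤ f t)
    (h : IntegrableOn (fun y : ℝ => y ^ (d - 1) * f y) (Set.Ioi 0)) :
    ∫⁻ z : EuclideanSpace ℝ (Fin d), ENNReal.ofReal (f ‖z‖) =
      ENNReal.ofReal ((d * volume.real (Metric.ball (0 : EuclideanSpace ℝ (Fin d)) 1)) *
        ∫ y in Set.Ioi (0 : ℝ), y ^ (d - 1) * f y) := by
  have : Nontrivial (EuclideanSpace ℝ (Fin d)) := by
    apply Module.nontrivial_of_finrank_pos (R := ℝ)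
    simp; omega
  have h1 : Integrable (fun z : EuclideanSpace ℝ (Fin d) => f ‖z‖) := by
    rw [integrable_fun_norm_addHaar]
    simpa using h
  rw [← ofReal_integral_eq_lintegral_ofReal h1 (Filter.Eventually.of_forall fun z => hf _),
    integral_fun_norm_addHaar]
  simp [mul_assoc]

lemma radial_far (d : ℕ) (hd : 3 ≤ d) (s : ℝ) (hs : (d : ℝ) < s) :
    ∃ C : ℝ, 0 ≤ C ∧ ∀ R : ℝ, 0 < R →
    ∫⁻ z : EuclideanSpace ℝ (Fin d), ENNReal.ofReal ((Set.Ioi R).indicator (fun t => t ^ (-s)) ‖z‖) ≤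
      ENNReal.ofReal (C * R ^ ((d : ℝ) - s)) := by
  refine ⟨(d * volume.real (Metric.ball (0 : EuclideanSpace ℝ (Fin d)) 1)) * (s - d)⁻¹,
    mul_nonneg (by positivity) (inv_nonneg.2 (by linarith)), fun R hR => ?_⟩
  have e : ∀ y ∈ Set.Ioi (0:ℝ), y ^ (d - 1) * (Set.Ioi R).indicator (fun t => t ^ (-s)) y
      = (Set.Ioi R).indicator (fun t => t ^ ((d:ℝ) - 1 - s)) y := by
    intro y hy
    have hy : 0 < y := hy
    by_cases h : y ∈ Set.Ioi R
    · rw [Set.indicator_of_mem h, Set.indicator_of_mem h, ← Real.rpow_natCast, ← Real.rpow_add hy]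
      congr 1
      rw [Nat.cast_sub (by omega)]; push_cast; ring
    · simp [Set.indicator_of_notMem h]
  have hint : IntegrableOn (fun t : ℝ => t ^ ((d:ℝ) - 1 - s)) (Set.Ioi R) :=
    integrableOn_Ioi_rpow_of_lt (by linarith) hR
  rw [radial_lintegral d hd]
  · rw [setIntegral_congr_fun measurableSet_Ioi e, setIntegral_indicator measurableSet_Ioi]
    rw [show Set.Ioi (0:ℝ) ∩ Set.Ioi R = Set.Ioi R by
      rw [Set.Ioi_inter_Ioi, max_eq_right hR.le], integral_Ioi_rpow_of_lt (by linarith) hR]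
    apply le_of_eq
    congr 1
    rw [show (d:ℝ) - 1 - s + 1 = d - s by ring, show (d:ℝ) - s = -(s - d) by ring, div_eq_mul_inv, inv_neg]
    ring
  · intro t
    apply Set.indicator_nonneg
    intro x hx
    exact Real.rpow_nonneg (hR.le.trans (le_of_lt hx)) _
  · rw [integrableOn_congr_fun e measurableSet_Ioi]
    exact ((integrable_indicator_iff measurableSet_Ioi).2 hint).integrableOn

lemma radial_near (d : ℕ) (hd : 3 ≤ d) (s : ℝ) (hs : s < d) :
    ∃ C : ℝ, 0 ≤ C ∧ ∀ R : ℝ, 0 < R →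
    ∫⁻ z : EuclideanSpace ℝ (Fin d), ENNReal.ofReal ((Set.Icc 0 R).indicator (fun t => t ^ (-s)) ‖z‖) ≤
      ENNReal.ofReal (C * R ^ ((d : ℝ) - s)) := by
  refine ⟨(d * volume.real (Metric.ball (0 : EuclideanSpace ℝ (Fin d)) 1)) * (d - s)⁻¹,
    mul_nonneg (by positivity) (inv_nonneg.2 (by linarith)), fun R hR => ?_⟩
  have e : ∀ y ∈ Set.Ioi (0:ℝ), y ^ (d - 1) * (Set.Icc 0 R).indicator (fun t => t ^ (-s)) y
      = (Set.Ioc 0 R).indicator (fun t => t ^ ((d:ℝ) - 1 - s)) y := by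
    intro y hy
    have hy : 0 < y := hy
    by_cases h : y ≤ R
    · rw [Set.indicator_of_mem (show y ∈ Set.Icc 0 R from ⟨hy.le, h⟩), Set.indicator_of_mem (show y ∈ Set.Ioc 0 R from ⟨hy, h⟩), ← Real.rpow_natCast, ← Real.rpow_add hy]
      congr 1
      rw [Nat.cast_sub (by omega)]; push_cast; ring
    · simp [Set.indicator, h]
  have hint : IntegrableOn (fun t : ℝ => t ^ ((d:ℝ) - 1 - s)) (Set.Ioc 0 R) := by
    rw [← intervalIntegrable_iff_integrableOn_Ioc_of_le hR.le]
    exact intervalIntegral.intervalIntegrable_rpow' (by linarith)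
  rw [radial_lintegral d hd]
  · rw [setIntegral_congr_fun measurableSet_Ioi e, setIntegral_indicator measurableSet_Ioc]
    rw [show Set.Ioi (0:ℝ) ∩ Set.Ioc 0 R = Set.Ioc 0 R by
      ext; simp, ← intervalIntegral.integral_of_le hR.le, integral_rpow (Or.inl (by linarith))]
    apply le_of_eq
    congr 1
    rw [show (d:ℝ) - 1 - s + 1 = d - s by ring, Real.zero_rpow (by linarith), div_eq_mul_inv]
    ring
  · intro t
    apply Set.indicator_nonneg
    intro x hx
    exact Real.rpow_nonneg hx.1 _
  · rw [integrableOn_congr_fun e measurableSet_Ioi]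
    exact ((integrable_indicator_iff measurableSet_Ioc).2 hint).integrableOn

lemma hls_pointwise (d : ℕ) (hd : 3 ≤ d) (q r mu : ℝ) (hq : 1 < q) (hr : 1 < r) (hmu : 0 < mu)
    (hmud : mu < d) (hrel : 1 / q + 1 / r + mu / d = 2) :
    ∃ C : ℝ, 0 ≤ C ∧ ∀ g : EuclideanSpace ℝ (Fin d) → ENNReal, Measurable g →
      ∫⁻ y, g y ^ r ≤ 1 → ∀ a : ℝ, 0 < a → ∀ x : EuclideanSpace ℝ (Fin d),
      ∫⁻ y, (if g y ≤ ENNReal.ofReal (a ^ (q / r)) then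
        ENNReal.ofReal (‖x - y‖ ^ (-mu)) * g y else 0) ≤ ENNReal.ofReal (C * a ^ (q - 1)) := by
  have hd0 : (0:ℝ) < d := by positivity
  have hconj := Real.HolderConjugate.conjExponent hr
  set r' := Real.conjExponent r with hr'
  have hr'0 : 0 < r' := hconj.symm.pos
  have hinv : r⁻¹ + r'⁻¹ = 1 := hconj.inv_add_inv_eq_one
  have hq1 : 1 / q < 1 := by rw [div_lt_one (by linarith)]; exact hq
  have hmr : (d:ℝ) < mu * r' := by
    have : 1 / r' < mu / d := by
      simp only [one_div] at *; linarith
    rw [div_lt_div_iff₀ hr'0 hd0] at this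
    linarith
  obtain ⟨C1, hC1, h1⟩ := radial_far d hd (mu * r') hmr
  obtain ⟨C2, hC2, h2⟩ := radial_near d hd mu hmud
  refine ⟨C1 ^ (1 / r') + C2, by positivity, fun g hg hg1 a ha x => ?_⟩
  set R := a ^ (-q / d) with hRdef
  have hR : 0 < R := Real.rpow_pos_of_pos ha _
  let kf : EuclideanSpace ℝ (Fin d) → ENNReal := fun z =>
    ENNReal.ofReal ((Set.Ioi R).indicator (fun t => t ^ (-mu)) ‖z‖)
  let kn : EuclideanSpace ℝ (Fin d) → ENNReal := fun z =>
    ENNReal.ofReal ((Set.Icc 0 R).indicator (fun t => t ^ (-mu)) ‖z‖)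
  have hkf : Measurable kf := by
    apply ENNReal.measurable_ofReal.comp
    exact ((measurable_id.pow_const (-mu)).indicator measurableSet_Ioi).comp measurable_norm
  have hkn : Measurable kn := by
    apply ENNReal.measurable_ofReal.comp
    exact ((measurable_id.pow_const (-mu)).indicator measurableSet_Icc).comp measurable_norm
  have hsplit : ∀ z, ENNReal.ofReal (‖z‖ ^ (-mu)) = kf z + kn z := by
    intro z
    by_cases h : R < ‖z‖
    · simp [kf, kn, Set.indicator, h, not_le.2 h]
    · simp [kf, kn, Set.indicator, h, not_lt.1 h]
  have hq' : q * (1 / q) = 1 := by field_simp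
  have hfar : ∫⁻ y, kf (x - y) * g y ≤ ENNReal.ofReal (C1 ^ (1 / r') * a ^ (q - 1)) := by
    have hH := ENNReal.lintegral_mul_le_Lp_mul_Lq volume hconj.symm
      (f := fun y => kf (x - y)) (g := g) (hkf.comp (measurable_const.sub measurable_id)).aemeasurable hg.aemeasurable
    have hk : ∫⁻ y, kf (x - y) ^ r' ≤ ENNReal.ofReal (C1 * R ^ ((d:ℝ) - mu * r')) := by
      rw [lintegral_sub_left_eq_self (fun z => kf z ^ r') x]
      refine le_trans (le_of_eq ?_) (h1 R hR)
      congr 1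
      ext z
      by_cases h : R < ‖z‖
      · have hz : 0 < ‖z‖ := hR.trans h
        simp only [kf]
        rw [Set.indicator_of_mem (show ‖z‖ ∈ Set.Ioi R from h), Set.indicator_of_mem (show ‖z‖ ∈ Set.Ioi R from h), ENNReal.ofReal_rpow_of_nonneg (by positivity) hr'0.le,
          ← Real.rpow_mul hz.le]
        congr 2; ring
      · simp [kf, Set.indicator, h, hr'0]
    calc _ ≤ _ := hH
      _ ≤ (ENNReal.ofReal (C1 * R ^ ((d:ℝ) - mu * r'))) ^ (1 / r') * 1 ^ (1 / r) := by
        gcongr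
      _ = _ := by
        rw [ENNReal.one_rpow, mul_one, ENNReal.ofReal_rpow_of_nonneg (by positivity) (by positivity),
          Real.mul_rpow hC1 (by positivity), ← Real.rpow_mul hR.le, hRdef, ← Real.rpow_mul ha.le]
        congr 3
        have : 1 / r' = 1 - 1 / r := by simp only [one_div]; linarith
        have h3 : r' * (1 / r') = 1 := by field_simp
        have h4 : ((d:ℝ) - mu * r') * (1 / r') = d / r' - mu := by field_simp
        have h5 : mu / d = 1 / r' + 1 - 1 / q := by linarith
        rw [h4]
        calc -q / d * (d / r' - mu) = q * (mu / d - 1 / r') := by field_simp; ring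
          _ = q - 1 := by rw [h5]; linear_combination -hq'
  have hnear : ∫⁻ y, kn (x - y) * ENNReal.ofReal (a ^ (q / r)) ≤ ENNReal.ofReal (C2 * a ^ (q - 1)) := by
    rw [lintegral_mul_const' _ _ ENNReal.ofReal_ne_top,
      lintegral_sub_left_eq_self kn x]
    calc _ ≤ ENNReal.ofReal (C2 * R ^ ((d:ℝ) - mu)) * ENNReal.ofReal (a ^ (q / r)) := by
          gcongr; exact h2 R hR
      _ = _ := by
        rw [← ENNReal.ofReal_mul (by positivity), hRdef, ← Real.rpow_mul ha.le, mul_assoc,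
          ← Real.rpow_add ha]
        congr 3
        calc -q / d * (d - mu) + q / r = q * (mu / d + 1 / r - 1) := by field_simp; ring
          _ = q - 1 := by linear_combination q * hrel - hq'
  calc _ ≤ ∫⁻ y, (kf (x - y) * g y + kn (x - y) * ENNReal.ofReal (a ^ (q / r))) := by
        apply lintegral_mono
        intro y
        dsimp only
        split_ifs with h
        · rw [hsplit, add_mul]; gcongr
        · exact zero_le
    _ = _ := lintegral_add_left ((hkf.comp (measurable_const.sub measurable_id)).mul hg) _
    _ ≤ _ := add_le_add hfar hnear
    _ = _ := by rw [← ENNReal.ofReal_add (by positivity) (by positivity), add_mul]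

lemma hls_half (d : ℕ) (hd : 3 ≤ d) (q r mu : ℝ) (hq : 1 < q) (hr : 1 < r) (hmu : 0 < mu)
    (hmud : mu < d) (hrel : 1 / q + 1 / r + mu / d = 2) :
    ∃ C : ℝ, 0 ≤ C ∧ ∀ f g : EuclideanSpace ℝ (Fin d) → ENNReal, Measurable f → Measurable g →
      (∀ x, f x ≠ ⊤) → ∫⁻ y, f y ^ q ≤ 1 → ∫⁻ y, g y ^ r ≤ 1 → 
      ∫⁻ x, ∫⁻ y, (if g y ^ r ≤ f x ^ q then
        f x * (ENNReal.ofReal (‖x - y‖ ^ (-mu)) * g y) else 0) ≤ ENNReal.ofReal C := by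
  obtain ⟨C, hC, h⟩ := hls_pointwise d hd q r mu hq hr hmu hmud hrel
  refine ⟨C, hC, fun f g hf hg hft hf1 hg1 => ?_⟩
  have key : ∀ x, ∫⁻ y, (if g y ^ r ≤ f x ^ q then
        f x * (ENNReal.ofReal (‖x - y‖ ^ (-mu)) * g y) else 0) ≤ ENNReal.ofReal C * f x ^ q := by
    intro x
    by_cases h0 : f x = 0
    · simp [h0]
    have ha : 0 < (f x).toReal := ENNReal.toReal_pos h0 (hft x)
    have hfx : f x = ENNReal.ofReal (f x).toReal := (ENNReal.ofReal_toReal (hft x)).symm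
    have hcond : ∀ y, g y ^ r ≤ f x ^ q ↔ g y ≤ ENNReal.ofReal ((f x).toReal ^ (q / r)) := by
      intro y
      rw [← ENNReal.ofReal_rpow_of_pos ha, ← hfx, div_eq_mul_inv, ENNReal.rpow_mul,
        ENNReal.le_rpow_inv_iff (by linarith)]
    calc _ = ∫⁻ y, f x * (if g y ≤ ENNReal.ofReal ((f x).toReal ^ (q / r)) then
              ENNReal.ofReal (‖x - y‖ ^ (-mu)) * g y else 0) := by
            simp only [hcond, mul_ite, mul_zero]
      _ = f x * ∫⁻ y, (if g y ≤ ENNReal.ofReal ((f x).toReal ^ (q / r)) then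
              ENNReal.ofReal (‖x - y‖ ^ (-mu)) * g y else 0) := by
            rw [lintegral_const_mul' _ _ (hft x)]
      _ ≤ f x * ENNReal.ofReal (C * (f x).toReal ^ (q - 1)) := by
            gcongr; exact h g hg hg1 _ ha x
      _ = _ := by
            generalize (f x).toReal = a at *
            rw [hfx, ENNReal.ofReal_rpow_of_pos ha, ← ENNReal.ofReal_mul ha.le, ← ENNReal.ofReal_mul hC]
            congr 1
            rw [Real.rpow_sub_one ha.ne']
            field_simp
  calc _ ≤ ∫⁻ x, ENNReal.ofReal C * f x ^ q := lintegral_mono key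
    _ = ENNReal.ofReal C * ∫⁻ x, f x ^ q := by rw [lintegral_const_mul' _ _ ENNReal.ofReal_ne_top]
    _ ≤ ENNReal.ofReal C * 1 := by gcongr
    _ = _ := mul_one _

lemma hls_unit (d : ℕ) (hd : 3 ≤ d) (q r mu : ℝ) (hq : 1 < q) (hr : 1 < r) (hmu : 0 < mu)
    (hmud : mu < d) (hrel : 1 / q + 1 / r + mu / d = 2) :
    ∃ C : ℝ, 0 ≤ C ∧ ∀ f g : EuclideanSpace ℝ (Fin d) → ENNReal, Measurable f → Measurable g →
      (∀ x, f x ≠ ⊤) → (∀ x, g x ≠ ⊤) → ∫⁻ y, f y ^ q ≤ 1 → ∫⁻ y, g y ^ r ≤ 1 → 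
      ∫⁻ x, ∫⁻ y, f x * (ENNReal.ofReal (‖x - y‖ ^ (-mu)) * g y) ≤ ENNReal.ofReal C := by
  obtain ⟨C1, hC1, h1⟩ := hls_half d hd q r mu hq hr hmu hmud hrel
  obtain ⟨C2, hC2, h2⟩ := hls_half d hd r q mu hr hq hmu hmud (by linarith)
  refine ⟨C1 + C2, by positivity, fun f g hf hg hft hgt hf1 hg1 => ?_⟩
  have hK : Measurable (fun z : EuclideanSpace ℝ (Fin d) × EuclideanSpace ℝ (Fin d) =>
      ENNReal.ofReal (‖z.1 - z.2‖ ^ (-mu))) := by fun_prop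
  have m1 : Measurable (fun z : EuclideanSpace ℝ (Fin d) × EuclideanSpace ℝ (Fin d) =>
      if g z.2 ^ r ≤ f z.1 ^ q then
        f z.1 * (ENNReal.ofReal (‖z.1 - z.2‖ ^ (-mu)) * g z.2) else 0) := by
    refine Measurable.ite (measurableSet_le (by fun_prop) (by fun_prop)) (by fun_prop) measurable_const
  have m2 : Measurable (fun z : EuclideanSpace ℝ (Fin d) × EuclideanSpace ℝ (Fin d) =>
      if f z.1 ^ q ≤ g z.2 ^ r then
        g z.2 * (ENNReal.ofReal (‖z.2 - z.1‖ ^ (-mu)) * f z.1) else 0) := by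
    refine Measurable.ite (measurableSet_le (by fun_prop) (by fun_prop)) (by fun_prop) measurable_const
  calc _ ≤ ∫⁻ x, ∫⁻ y, ((if g y ^ r ≤ f x ^ q then
        f x * (ENNReal.ofReal (‖x - y‖ ^ (-mu)) * g y) else 0) +
        (if f x ^ q ≤ g y ^ r then
        g y * (ENNReal.ofReal (‖y - x‖ ^ (-mu)) * f x) else 0)) := by
          refine lintegral_mono fun x => lintegral_mono fun y => ?_
          dsimp only
          rcases le_total (g y ^ r) (f x ^ q) with h | h
          · rw [if_pos h]; exact le_self_add
          · rw [if_pos h, norm_sub_rev]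
            refine le_trans (le_of_eq ?_) le_add_self
            ring
    _ = ∫⁻ x, ((∫⁻ y, (if g y ^ r ≤ f x ^ q then
        f x * (ENNReal.ofReal (‖x - y‖ ^ (-mu)) * g y) else 0)) +
        ∫⁻ y, (if f x ^ q ≤ g y ^ r then
        g y * (ENNReal.ofReal (‖y - x‖ ^ (-mu)) * f x) else 0)) := by
          congr 1; ext x
          exact lintegral_add_left (m1.comp measurable_prodMk_left) _
    _ = (∫⁻ x, ∫⁻ y, (if g y ^ r ≤ f x ^ q then
        f x * (ENNReal.ofReal (‖x - y‖ ^ (-mu)) * g y) else 0)) +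
        ∫⁻ x, ∫⁻ y, (if f x ^ q ≤ g y ^ r then
        g y * (ENNReal.ofReal (‖y - x‖ ^ (-mu)) * f x) else 0) :=
          lintegral_add_left (m1.lintegral_prod_right') _
    _ ≤ ENNReal.ofReal C1 + ENNReal.ofReal C2 := by
          refine add_le_add (h1 f g hf hg hft hf1 hg1) ?_
          rw [lintegral_lintegral_swap m2.aemeasurable]
          exact h2 g f hg hf hgt hg1 hf1
    _ = _ := (ENNReal.ofReal_add hC1 hC2).symm

lemma hls_full (d : ℕ) (hd : 3 ≤ d) (q r mu : ℝ) (hq : 1 < q) (hr : 1 < r) (hmu : 0 < mu)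
    (hmud : mu < d) (hrel : 1 / q + 1 / r + mu / d = 2) :
    ∃ C : ℝ, 0 ≤ C ∧ ∀ f g : EuclideanSpace ℝ (Fin d) → ENNReal, Measurable f → Measurable g →
      (∀ x, f x ≠ ⊤) → (∀ x, g x ≠ ⊤) → ∫⁻ y, f y ^ q ≠ ⊤ → ∫⁻ y, g y ^ r ≠ ⊤ → 
      ∫⁻ x, f x * ∫⁻ y, (ENNReal.ofReal (‖x - y‖ ^ (-mu)) * g y) ≤
        ENNReal.ofReal C * (∫⁻ y, f y ^ q) ^ (1 / q) * (∫⁻ y, g y ^ r) ^ (1 / r) := by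
  obtain ⟨C, hC, h⟩ := hls_unit d hd q r mu hq hr hmu hmud hrel
  refine ⟨C, hC, fun f g hf hg hft hgt hf1 hg1 => ?_⟩
  have aux : ∀ (s : ℝ), 1 < s → ∀ k : EuclideanSpace ℝ (Fin d) → ENNReal, Measurable k →
      ∫⁻ y, k y ^ s = 0 → k =ᵐ[volume] 0 := by
    intro s hs k hk h0
    rw [lintegral_eq_zero_iff (hk.pow_const s)] at h0
    filter_upwards [h0] with x hx
    have : k x ^ s = 0 := hx
    rw [ENNReal.rpow_eq_zero_iff_of_pos (by linarith)] at this
    exact this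
  by_cases hA : ∫⁻ y, f y ^ q = 0
  · refine le_trans (le_of_eq ?_) zero_le
    rw [← lintegral_zero (α := EuclideanSpace ℝ (Fin d)) (μ := volume)]
    apply lintegral_congr_ae
    filter_upwards [aux q hq f hf hA] with x hx
    simp [hx]
  by_cases hB : ∫⁻ y, g y ^ r = 0
  · refine le_trans (le_of_eq ?_) zero_le
    rw [← lintegral_zero (α := EuclideanSpace ℝ (Fin d)) (μ := volume)]
    congr 1; ext x
    have : ∫⁻ y, (ENNReal.ofReal (‖x - y‖ ^ (-mu)) * g y) = ∫⁻ y : EuclideanSpace ℝ (Fin d), 0 := by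
      apply lintegral_congr_ae
      filter_upwards [aux r hr g hg hB] with y hy
      simp [hy]
    simp [this]
  have norm1 : ∀ (s : ℝ), 1 < s → ∀ k : EuclideanSpace ℝ (Fin d) → ENNReal, 
      ∫⁻ y, k y ^ s ≠ 0 → ∫⁻ y, k y ^ s ≠ ⊤ → ((∫⁻ y, k y ^ s) ^ (1 / s) ≠ 0) ∧ 
        ((∫⁻ y, k y ^ s) ^ (1 / s) ≠ ⊤) ∧ 
        ∫⁻ y, (((∫⁻ y, k y ^ s) ^ (1 / s))⁻¹ * k y) ^ s ≤ 1 := by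
    intro s hs k h0 ht
    have hs0 : 0 < s := by linarith
    set A := ∫⁻ y, k y ^ s
    have a1 : A ^ (1 / s) ≠ 0 := by
      simp [ENNReal.rpow_eq_zero_iff, h0, ht]
    have a2 : A ^ (1 / s) ≠ ⊤ := by
      apply ENNReal.rpow_ne_top_of_nonneg (by positivity) ht
    refine ⟨a1, a2, ?_⟩
    simp_rw [ENNReal.mul_rpow_of_nonneg _ _ hs0.le]
    rw [lintegral_const_mul' _ _ (ENNReal.rpow_ne_top_of_nonneg hs0.le (ENNReal.inv_ne_top.2 a1)),
      ENNReal.inv_rpow, ← ENNReal.rpow_mul, one_div, inv_mul_cancel₀ hs0.ne', ENNReal.rpow_one]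
    exact (ENNReal.inv_mul_cancel h0 ht).le
  obtain ⟨a1, a2, a3⟩ := norm1 q hq f hA hf1
  obtain ⟨b1, b2, b3⟩ := norm1 r hr g hB hg1
  set A := (∫⁻ y, f y ^ q) ^ (1 / q)
  set B := (∫⁻ y, g y ^ r) ^ (1 / r)
  have := h (fun y => A⁻¹ * f y) (fun y => B⁻¹ * g y) (hf.const_mul _) (hg.const_mul _)
    (fun x => ENNReal.mul_ne_top (ENNReal.inv_ne_top.2 a1) (hft x))
    (fun x => ENNReal.mul_ne_top (ENNReal.inv_ne_top.2 b1) (hgt x)) a3 b3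
  have e : ∀ x, ∫⁻ y, A⁻¹ * f x * (ENNReal.ofReal (‖x - y‖ ^ (-mu)) * (B⁻¹ * g y)) =
      (A⁻¹ * B⁻¹) * (f x * ∫⁻ y, (ENNReal.ofReal (‖x - y‖ ^ (-mu)) * g y)) := by
    intro x
    rw [← lintegral_const_mul' _ _ (hft x), ← lintegral_const_mul' _ _
      (ENNReal.mul_ne_top (ENNReal.inv_ne_top.2 a1) (ENNReal.inv_ne_top.2 b1))]
    congr 1; ext y; ring
  simp_rw [e] at this
  rw [lintegral_const_mul' _ _
      (ENNReal.mul_ne_top (ENNReal.inv_ne_top.2 a1) (ENNReal.inv_ne_top.2 b1))] at this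
  calc ∫⁻ x, f x * ∫⁻ y, (ENNReal.ofReal (‖x - y‖ ^ (-mu)) * g y)
      = (A * A⁻¹) * (B * B⁻¹) * ∫⁻ x, f x * ∫⁻ y, (ENNReal.ofReal (‖x - y‖ ^ (-mu)) * g y) := by
        rw [ENNReal.mul_inv_cancel a1 a2, ENNReal.mul_inv_cancel b1 b2]; simp
    _ = (A * B) * (A⁻¹ * B⁻¹ * ∫⁻ x, f x * ∫⁻ y, (ENNReal.ofReal (‖x - y‖ ^ (-mu)) * g y)) := by ring
    _ ≤ (A * B) * ENNReal.ofReal C := by gcongr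
    _ = _ := by ring

/-- Combined Hardy–Littlewood–Sobolev and Sobolev estimate: for `d ≥ 3`,
`0 < λ < d-2`, `p* = d/(d-λ)`, there is `C = C(d,λ)` (independent of `p`) such that for
every real `p ≥ 2` and nonnegative smooth compactly supported `w`,
`∫ w^p (∫ |x-y|^{-(λ+2)} w(y) dy) dx ≤ C ‖∇(w^{p/2})‖²_{L²} ‖w‖_{L^{p*}}`. -/
theorem hls_sobolev_estimate
    (d : ℕ) (hd : 3 ≤ d) (lam : ℝ) (hlam0 : 0 < lam) (hlamd : lam < (d : ℝ) - 2) :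
    ∃ C : ℝ, 0 < C ∧
      ∀ (p : ℝ), 2 ≤ p →
      ∀ w : EuclideanSpace ℝ (Fin d) → ℝ,
        ContDiff ℝ (⊤ : ℕ∞) w → HasCompactSupport w → (∀ x, 0 ≤ w x) →
        (∫ x, w x ^ p * ∫ y, ‖x - y‖ ^ (-(lam + 2)) * w y)
          ≤ C * (∫ x, ‖fderiv ℝ (fun z => w z ^ (p / 2)) x‖ ^ 2)
              * (∫ x, w x ^ ((d : ℝ) / ((d : ℝ) - lam))) ^ (((d : ℝ) - lam) / (d : ℝ)) := by
  have hd3 : (3:ℝ) ≤ d := by exact_mod_cast hd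
  have hd2 : (0:ℝ) < d - 2 := by linarith
  have hdl : (0:ℝ) < d - lam := by linarith
  obtain ⟨C, hC, h⟩ := hls_full d hd ((d:ℝ) / (d - 2)) ((d:ℝ) / (d - lam)) (lam + 2)
    (by rw [lt_div_iff₀ hd2]; linarith) (by rw [lt_div_iff₀ hdl]; linarith) (by linarith)
    (by linarith) (by field_simp <;> ring)
  set q := (d:ℝ) / (d - 2) with hq
  set r := (d:ℝ) / (d - lam) with hr
  have hq0 : 0 < q := by positivity
  have hr0 : 0 < r := by positivity
  let S : NNReal := eLpNormLESNormFDerivOfEqInnerConst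
    (volume : Measure (EuclideanSpace ℝ (Fin d))) ((2 : NNReal) : ℝ)
  refine ⟨C * S ^ 2 + 1, by positivity, fun p hp w hw hwc hw0 => ?_⟩
  have hp0 : 0 < p := by linarith
  set u : EuclideanSpace ℝ (Fin d) → ℝ := fun z => w z ^ (p / 2) with hu
  have hu1 : ContDiff ℝ 1 u := by
    have := ContDiff.rpow_const_of_le (m := 1) (p := p / 2) (f := w)
      (hw.of_le (by norm_cast)) (by norm_num; linarith)
    simpa using this
  have huc : HasCompactSupport u := by
    apply hwc.comp_left (g := fun t : ℝ => t ^ (p / 2))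
    exact Real.zero_rpow (by positivity)
  have hwcont : Continuous w := hw.continuous
  -- integrals
  have hDint : Integrable (fun x => ‖fderiv ℝ u x‖ ^ 2) := by
    apply Continuous.integrable_of_hasCompactSupport
    · exact ((hu1.continuous_fderiv (by simp)).norm.pow 2)
    · exact (huc.fderiv ℝ).comp_left (g := fun t => ‖t‖ ^ 2) (by simp)
  have hpow : ∀ s : ℝ, 0 < s → Integrable (fun x => w x ^ s) := by
    intro s hs
    apply Continuous.integrable_of_hasCompactSupport
    · exact hwcont.rpow_const (fun x => Or.inr hs.le)
    · exact hwc.comp_left (g := fun t : ℝ => t ^ s) (Real.zero_rpow hs.ne')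
  have hpowl : ∀ s : ℝ, 0 < s → ∫⁻ x, ‖w x‖ₑ ^ s = ENNReal.ofReal (∫ x, w x ^ s) := by
    intro s hs
    rw [ofReal_integral_eq_lintegral_ofReal (hpow s hs)
      (Filter.Eventually.of_forall fun x => Real.rpow_nonneg (hw0 x) _)]
    congr 1; ext x
    rw [Real.enorm_of_nonneg (hw0 x), ENNReal.ofReal_rpow_of_nonneg (hw0 x) hs.le]
  have hDl : ∫⁻ x, ‖fderiv ℝ u x‖ₑ ^ (2:ℝ) = ENNReal.ofReal (∫ x, ‖fderiv ℝ u x‖ ^ 2) := by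
    rw [ofReal_integral_eq_lintegral_ofReal hDint
      (Filter.Eventually.of_forall fun x => by positivity)]
    congr 1; ext x
    rw [← ofReal_norm, ENNReal.ofReal_rpow_of_nonneg (norm_nonneg _) (by norm_num)]
    simp
  -- f
  have hfe : ∀ x, ‖w x ^ p‖ₑ = ‖w x‖ₑ ^ p := by
    intro x
    rw [Real.enorm_of_nonneg (hw0 x), Real.enorm_of_nonneg (Real.rpow_nonneg (hw0 x) _),
      ENNReal.ofReal_rpow_of_nonneg (hw0 x) hp0.le]
  have hue : ∀ x, ‖u x‖ₑ = ‖w x‖ₑ ^ (p / 2) := by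
    intro x
    rw [Real.enorm_of_nonneg (hw0 x), Real.enorm_of_nonneg (Real.rpow_nonneg (hw0 x) _),
      ENNReal.ofReal_rpow_of_nonneg (hw0 x) (by positivity)]
  have hsob : (∫⁻ x, (‖w x‖ₑ ^ p) ^ q) ^ (1 / q) ≤
      (S : ENNReal) ^ 2 * ENNReal.ofReal (∫ x, ‖fderiv ℝ u x‖ ^ 2) := by
    have hfin : Module.finrank ℝ (EuclideanSpace ℝ (Fin d)) = d := by simp
    have := eLpNorm_le_eLpNorm_fderiv_of_eq_inner (volume : Measure (EuclideanSpace ℝ (Fin d)))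
      hu1 huc (p := 2) (p' := (2 * q).toNNReal) (by norm_num) (by rw [hfin]; omega)
      (by rw [hfin, Real.coe_toNNReal _ (by positivity), hq]; push_cast; field_simp)
    rw [eLpNorm_eq_lintegral_rpow_enorm_toReal (by simp; positivity) (by simp),
      eLpNorm_eq_lintegral_rpow_enorm_toReal (by simp) (by simp)] at this
    simp only [ENNReal.coe_toReal, Real.coe_toNNReal _ (show 0 ≤ 2 * q by positivity),
      NNReal.coe_ofNat] at this
    rw [hDl] at this
    have e1 : ∫⁻ x, ‖u x‖ₑ ^ (2 * q) = ∫⁻ x, (‖w x‖ₑ ^ p) ^ q := by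
      congr 1; ext x
      rw [hue, ← ENNReal.rpow_mul, ← ENNReal.rpow_mul]
      congr 1; ring
    rw [e1] at this
    have h2 := ENNReal.rpow_le_rpow this (show (0:ℝ) ≤ 2 by norm_num)
    rw [ENNReal.mul_rpow_of_nonneg _ _ (by norm_num), ← ENNReal.rpow_mul, ← ENNReal.rpow_mul] at h2
    rw [show 1 / (2 * q) * 2 = 1 / q by field_simp, show (1:ℝ) / 2 * 2 = 1 by norm_num,
      ENNReal.rpow_one, ENNReal.rpow_two] at h2
    exact h2
  have hI0 : 0 ≤ ∫ x, ‖fderiv ℝ u x‖ ^ 2 := integral_nonneg fun x => by positivity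
  have hJ0 : 0 ≤ ∫ x, w x ^ r := integral_nonneg fun x => Real.rpow_nonneg (hw0 x) _
  have hmain := h (fun x => ‖w x‖ₑ ^ p) (fun x => ‖w x‖ₑ)
    (hwcont.measurable.enorm.pow_const p) hwcont.measurable.enorm
    (fun x => ENNReal.rpow_ne_top_of_nonneg hp0.le enorm_ne_top) (fun x => enorm_ne_top)
    (by simp_rw [← ENNReal.rpow_mul]; rw [hpowl _ (by positivity)]; exact ENNReal.ofReal_ne_top)
    (by rw [hpowl _ hr0]; exact ENNReal.ofReal_ne_top)
  have hfinal : ENNReal.ofReal (∫ x, w x ^ p * ∫ y, ‖x - y‖ ^ (-(lam + 2)) * w y) ≤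
      ENNReal.ofReal ((C * S ^ 2) * (∫ x, ‖fderiv ℝ u x‖ ^ 2) * (∫ x, w x ^ r) ^ (1 / r)) := by
    calc _ ≤ ‖∫ x, w x ^ p * ∫ y, ‖x - y‖ ^ (-(lam + 2)) * w y‖ₑ := by
          rw [← ofReal_norm]; exact ENNReal.ofReal_le_ofReal (le_abs_self _)
      _ ≤ ∫⁻ x, ‖w x ^ p * ∫ y, ‖x - y‖ ^ (-(lam + 2)) * w y‖ₑ :=
          enorm_integral_le_lintegral_enorm _
      _ ≤ ∫⁻ x, ‖w x‖ₑ ^ p * ∫⁻ y, (ENNReal.ofReal (‖x - y‖ ^ (-(lam + 2))) * ‖w y‖ₑ) := by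
          refine lintegral_mono fun x => ?_
          rw [enorm_mul, hfe]
          gcongr
          refine (enorm_integral_le_lintegral_enorm _).trans (le_of_eq ?_)
          congr 1; ext y
          rw [enorm_mul, Real.enorm_of_nonneg (Real.rpow_nonneg (norm_nonneg _) _)]
      _ ≤ _ := hmain
      _ ≤ ENNReal.ofReal C * ((S : ENNReal) ^ 2 * ENNReal.ofReal (∫ x, ‖fderiv ℝ u x‖ ^ 2)) *
          (ENNReal.ofReal (∫ x, w x ^ r)) ^ (1 / r) := by
          rw [hpowl r hr0]; gcongr
      _ = _ := by
          rw [ENNReal.ofReal_rpow_of_nonneg hJ0 (by positivity), ENNReal.ofReal_mul (by positivity),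
            ENNReal.ofReal_mul (by positivity), ENNReal.ofReal_mul hC, ENNReal.ofReal_pow (by positivity),
            ENNReal.ofReal_coe_nnreal]; ring
  have hle := (ENNReal.ofReal_le_ofReal_iff (by positivity)).1 hfinal
  rw [show ((d:ℝ) - lam) / d = 1 / r by rw [hr, one_div_div]]
  refine hle.trans ?_
  gcongr
  linarith
end

section
/- Let d ≥ 3, 0 < λ < d − 2, σ > 0, κ ∈ {1, −1}, T > 0, η > 0, and let χ be a smooth, compactly supported probability density on ℝ^d, V^η = χ^η * Φ with χ^η(x) = η^{-d}χ(x/η) and Φ(x) = |x|^{-λ}. Set p* = d/(d−λ). Then there exists a constant C* > 0, depending only on d, λ and σ (in particular independent of η, T, κ), such that: for every classical Schwartz-class solution w of ∂_t w = σΔw − κ div(w ∇V^η * w) on [0,T], if ‖w(0)‖_{L^{p*}(ℝ^d)} ≤ C*, then ‖w(t)‖_{L^{p*}(ℝ^d)} ≤ ‖w(0)‖_{L^{p*}(ℝ^d)} for all t ∈ [0,T]. -/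
open MeasureTheory Set

noncomputable section

/-- Laplacian of a scalar function on `ℝ^d`. -/
def lapl {d : ℕ} (f : EuclideanSpace ℝ (Fin d) → ℝ) (x : EuclideanSpace ℝ (Fin d)) : ℝ :=
  ∑ i : Fin d, fderiv ℝ (fun y => fderiv ℝ f y (EuclideanSpace.single i 1)) x
    (EuclideanSpace.single i 1)

/-- Divergence of a vector field on `ℝ^d`. -/
def diverg {d : ℕ} (F : EuclideanSpace ℝ (Fin d) → EuclideanSpace ℝ (Fin d))
    (x : EuclideanSpace ℝ (Fin d)) : ℝ :=
  ∑ i : Fin d, fderiv ℝ (fun y => F y i) x (EuclideanSpace.single i 1)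

/-- The mollified Riesz potential `V^η = χ^η * Φ` with `χ^η(x) = η^{-d} χ(x/η)` and
`Φ(x) = |x|^{-λ}`. -/
def Veta {d : ℕ} (lam : ℝ) (χ : EuclideanSpace ℝ (Fin d) → ℝ) (η : ℝ)
    (z : EuclideanSpace ℝ (Fin d)) : ℝ :=
  ∫ y, (η ^ (-(d : ℝ)) * χ (η⁻¹ • (z - y))) * ‖y‖ ^ (-lam)

/-- A classical Schwartz-class solution of `∂_t w = σΔw − κ div(w (K * w))` on `[0,T]`,
where `(K * w)(x) = ∫ K(x−y) w(y) dy` for a vector-valued interaction kernel `K`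
(in the application, `K = ∇V^η` or `K = ∇Φ`): `(t,x) ↦ w(t,x)` is smooth,
`w(t,·)` is a Schwartz function for every `t ∈ [0,T]`, `w ≥ 0`, `∫ w(t,x) dx = 1`,
and the equation holds pointwise. -/
def IsAggregationSolution {d : ℕ} (σ κ T : ℝ)
    (K : EuclideanSpace ℝ (Fin d) → EuclideanSpace ℝ (Fin d))
    (w : ℝ → EuclideanSpace ℝ (Fin d) → ℝ) : Prop :=
  ContDiffOn ℝ (⊤ : ℕ∞) (fun p : ℝ × EuclideanSpace ℝ (Fin d) => w p.1 p.2) (Icc 0 T ×ˢ univ) ∧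
  (∀ t ∈ Icc (0:ℝ) T, ∃ S : SchwartzMap (EuclideanSpace ℝ (Fin d)) ℝ, ∀ x, w t x = S x) ∧
  (∀ t ∈ Icc (0:ℝ) T, ∀ x, 0 ≤ w t x) ∧
  (∀ t ∈ Icc (0:ℝ) T, (∫ x, w t x) = 1) ∧
  (∀ t ∈ Icc (0:ℝ) T, ∀ x, HasDerivWithinAt (fun s => w s x)
    (σ * lapl (w t) x - κ * diverg (fun z => w t z • ∫ y, w t y • K (z - y)) x)
    (Icc 0 T) t)


theorem lintegral_scale_aux {d : ℕ} (f : EuclideanSpace ℝ (Fin d) → ENNReal) (hf : Measurable f)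
    {ρ : ℝ} (hρ : 0 < ρ) :
    ∫⁻ z, f z = ENNReal.ofReal (ρ ^ (d : ℝ)) * ∫⁻ z, f (ρ • z) := by
  have h1 := Measure.map_addHaar_smul (volume : Measure (EuclideanSpace ℝ (Fin d))) hρ.ne'
  have h2 : ∫⁻ z, f (ρ • z) = ∫⁻ z, f z ∂(Measure.map (fun z => ρ • z) volume) := by
    rw [lintegral_map hf (measurable_const_smul ρ)]
  rw [h2, h1, lintegral_smul_measure, smul_eq_mul, ← mul_assoc, ← ENNReal.ofReal_mul (by positivity)]
  simp only [finrank_euclideanSpace, Fintype.card_fin]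
  rw [abs_of_pos (by positivity), Real.rpow_natCast, mul_inv_cancel₀ (by positivity)]
  simp

theorem near_finite_aux {d : ℕ} (hd : 1 ≤ d) {b : ℝ} (hb : b < d) :
    ∫⁻ z : EuclideanSpace ℝ (Fin d), (Metric.ball 0 1).indicator
      (fun z => ENNReal.ofReal (‖z‖ ^ (-b))) z < ⊤ := by
  rw [lintegral_indicator Metric.isOpen_ball.measurableSet]
  have h : IntegrableOn (fun z : EuclideanSpace ℝ (Fin d) => ‖z‖ ^ (-b)) (Metric.ball 0 1) := by
    refine integrableOn_ball_of_norm_le_rpow (C := 1) (α := b) (by simpa using hd) (by simpa using hb) ?_ ?_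
    · refine Filter.Eventually.of_forall fun x => ?_
      rw [Real.norm_of_nonneg (by positivity), one_mul]
    · exact (measurable_norm.pow_const (-b)).aestronglyMeasurable
  have := h.lintegral_lt_top
  exact this

theorem far_finite_aux {d : ℕ} {b : ℝ} (hb : d < b) :
    ∫⁻ z : EuclideanSpace ℝ (Fin d), (Metric.ball 0 1)ᶜ.indicator
      (fun z => ENNReal.ofReal (‖z‖ ^ (-b))) z < ⊤ := by
  have hb0 : 0 < b := lt_of_le_of_lt (by positivity) hb
  have h := (integrable_one_add_norm (E := EuclideanSpace ℝ (Fin d)) (μ := volume) (r := b)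
    (by simpa using hb)).const_mul (2 ^ b)
  refine lt_of_le_of_lt (lintegral_mono fun z => ?_) h.lintegral_lt_top
  by_cases hz : z ∈ (Metric.ball (0 : EuclideanSpace ℝ (Fin d)) 1)ᶜ
  · rw [indicator_of_mem hz]
    apply ENNReal.ofReal_le_ofReal
    have hz1 : 1 ≤ ‖z‖ := by simpa using hz
    rw [Real.rpow_neg (by positivity), Real.rpow_neg (by positivity), ← div_eq_mul_inv,
      ← Real.inv_rpow (by positivity), ← Real.div_rpow (by positivity) (by positivity)]
    apply Real.rpow_le_rpow (by positivity) _ hb0.le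
    rw [inv_eq_one_div, div_le_div_iff₀ (by positivity) (by positivity)]
    linarith
  · rw [indicator_of_notMem hz]; simp

theorem ball_scale_ind {d : ℕ} {b ρ : ℝ} (hρ : 0 < ρ) (z : EuclideanSpace ℝ (Fin d)) :
   (Metric.ball 0 ρ).indicator (fun z => ENNReal.ofReal (‖z‖ ^ (-b))) (ρ • z) =
   ENNReal.ofReal (ρ ^ (-b)) * (Metric.ball 0 1).indicator (fun z => ENNReal.ofReal (‖z‖ ^ (-b))) z := by
  have : ρ • z ∈ Metric.ball (0 : EuclideanSpace ℝ (Fin d)) ρ ↔ z ∈ Metric.ball (0 : EuclideanSpace ℝ (Fin d)) 1 := by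
    simp [norm_smul, abs_of_pos hρ, mul_lt_iff_lt_one_right hρ]
  by_cases hz : z ∈ Metric.ball (0 : EuclideanSpace ℝ (Fin d)) 1
  · rw [indicator_of_mem hz, indicator_of_mem (this.2 hz), ← ENNReal.ofReal_mul (by positivity), norm_smul,
      Real.norm_of_nonneg hρ.le, Real.mul_rpow hρ.le (norm_nonneg _)]
  · rw [indicator_of_notMem hz, indicator_of_notMem (fun h => hz (this.1 h)), mul_zero]

theorem ballc_scale_ind {d : ℕ} {b ρ : ℝ} (hρ : 0 < ρ) (z : EuclideanSpace ℝ (Fin d)) :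
   (Metric.ball 0 ρ)ᶜ.indicator (fun z => ENNReal.ofReal (‖z‖ ^ (-b))) (ρ • z) =
   ENNReal.ofReal (ρ ^ (-b)) * (Metric.ball 0 1)ᶜ.indicator (fun z => ENNReal.ofReal (‖z‖ ^ (-b))) z := by
  have : ρ • z ∈ (Metric.ball (0 : EuclideanSpace ℝ (Fin d)) ρ)ᶜ ↔ z ∈ (Metric.ball (0 : EuclideanSpace ℝ (Fin d)) 1)ᶜ := by
    simp [norm_smul, abs_of_pos hρ, le_mul_iff_one_le_right hρ]
  by_cases hz : z ∈ (Metric.ball (0 : EuclideanSpace ℝ (Fin d)) 1)ᶜ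
  · rw [indicator_of_mem hz, indicator_of_mem (this.2 hz), ← ENNReal.ofReal_mul (by positivity), norm_smul,
      Real.norm_of_nonneg hρ.le, Real.mul_rpow hρ.le (norm_nonneg _)]
  · rw [indicator_of_notMem hz, indicator_of_notMem (fun h => hz (this.1 h)), mul_zero]

theorem meas_kernel {d : ℕ} (b : ℝ) :
    Measurable (fun z : EuclideanSpace ℝ (Fin d) => ENNReal.ofReal (‖z‖ ^ (-b))) :=
  (measurable_norm.pow_const (-b)).ennreal_ofReal

theorem hls_inner {d : ℕ} (hd : 1 ≤ d) {a s s' : ℝ} (ha0 : 0 < a) (had : a < d)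
    (hs : s.HolderConjugate s') (has : d < a * s') :
    ∃ C : ℝ, 0 ≤ C ∧ ∀ g : EuclideanSpace ℝ (Fin d) → ℝ, Measurable g → (∀ y, 0 ≤ g y) →
      ∫⁻ y, ENNReal.ofReal (g y ^ s) ≤ 1 → ∀ β : ℝ, 0 < β → ∀ x,
      ∫⁻ y, (if g y ≤ β then ENNReal.ofReal (g y) else 0) * ENNReal.ofReal (‖x - y‖ ^ (-a))
        ≤ ENNReal.ofReal (C * β ^ (1 - s + s * a / d)) := by
  set N := ∫⁻ z : EuclideanSpace ℝ (Fin d), (Metric.ball 0 1).indicator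
      (fun z => ENNReal.ofReal (‖z‖ ^ (-a))) z with hN
  set N' := ∫⁻ z : EuclideanSpace ℝ (Fin d), (Metric.ball 0 1)ᶜ.indicator
      (fun z => ENNReal.ofReal (‖z‖ ^ (-(a * s')))) z with hN'
  have hNt : N < ⊤ := near_finite_aux hd had
  have hN't : N' < ⊤ := far_finite_aux has
  have hs0 : 0 < s := hs.pos
  have hs'0 : 0 < s' := hs.symm.pos
  have hd0 : (0:ℝ) < d := by positivity
  refine ⟨N.toReal + N'.toReal ^ (1/s'), by positivity, ?_⟩
  intro g hg hg0 hgs β hβ x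
  set ρ := β ^ (-s / d) with hρ
  have hρ0 : 0 < ρ := by positivity
  set near := (Metric.ball (0 : EuclideanSpace ℝ (Fin d)) ρ).indicator (fun z => ENNReal.ofReal (‖z‖ ^ (-a))) with hnear
  set far := (Metric.ball (0 : EuclideanSpace ℝ (Fin d)) ρ)ᶜ.indicator (fun z => ENNReal.ofReal (‖z‖ ^ (-a))) with hfar
  have mnear : Measurable near := (meas_kernel a).indicator Metric.isOpen_ball.measurableSet
  have mfar : Measurable far := (meas_kernel a).indicator Metric.isOpen_ball.measurableSet.compl
  have hpt : ∀ y, (if g y ≤ β then ENNReal.ofReal (g y) else 0) * ENNReal.ofReal (‖x - y‖ ^ (-a)) ≤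
      ENNReal.ofReal β * near (x - y) + ENNReal.ofReal (g y) * far (x - y) := by
    intro y
    split_ifs with h
    · by_cases hz : x - y ∈ Metric.ball (0 : EuclideanSpace ℝ (Fin d)) ρ
      · rw [hnear, indicator_of_mem hz]
        exact le_add_right (by gcongr)
      · rw [hfar, indicator_of_mem (by exact hz)]
        exact le_add_left le_rfl
    · simp
  have h1 : ∫⁻ y, near (x - y) = ENNReal.ofReal (ρ ^ (d - a)) * N := by
    rw [lintegral_sub_left_eq_self near x, lintegral_scale_aux near mnear hρ0]
    simp_rw [hnear, ball_scale_ind hρ0]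
    rw [lintegral_const_mul _ ((meas_kernel a).indicator Metric.isOpen_ball.measurableSet), ← mul_assoc,
      ← ENNReal.ofReal_mul (by positivity), ← Real.rpow_add hρ0, sub_eq_add_neg]
  have h2 : ∫⁻ y, far (x - y) ^ s' = ENNReal.ofReal (ρ ^ (d - a * s')) * N' := by
    rw [lintegral_sub_left_eq_self (fun z => far z ^ s') x]
    have : ∀ z, far z ^ s' = (Metric.ball (0 : EuclideanSpace ℝ (Fin d)) ρ)ᶜ.indicator (fun z => ENNReal.ofReal (‖z‖ ^ (-(a*s')))) z := by
      intro z
      by_cases hz : z ∈ (Metric.ball (0 : EuclideanSpace ℝ (Fin d)) ρ)ᶜ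
      · rw [hfar, indicator_of_mem hz, indicator_of_mem hz, ENNReal.ofReal_rpow_of_nonneg (by positivity) hs'0.le,
          ← Real.rpow_mul (by positivity), neg_mul]
      · rw [hfar, indicator_of_notMem hz, indicator_of_notMem hz, ENNReal.zero_rpow_of_pos hs'0]
    simp_rw [this]
    rw [lintegral_scale_aux _ ((meas_kernel _).indicator Metric.isOpen_ball.measurableSet.compl) hρ0]
    simp_rw [ballc_scale_ind hρ0]
    rw [lintegral_const_mul _ ((meas_kernel _).indicator Metric.isOpen_ball.measurableSet.compl), ← mul_assoc,
      ← ENNReal.ofReal_mul (by positivity), ← Real.rpow_add hρ0, sub_eq_add_neg]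
  have h3 : ∫⁻ y, ENNReal.ofReal (g y) * far (x - y) ≤ (ENNReal.ofReal (ρ ^ (d - a * s')) * N') ^ (1/s') := by
    have := ENNReal.lintegral_mul_le_Lp_mul_Lq volume hs (f := fun y => ENNReal.ofReal (g y)) (g := fun y => far (x - y))
      hg.ennreal_ofReal.aemeasurable (mfar.comp (measurable_const.sub measurable_id)).aemeasurable
    refine this.trans ?_
    rw [h2]
    have e : ∫⁻ y, ENNReal.ofReal (g y) ^ s ≤ 1 := by
      refine le_trans (le_of_eq ?_) hgs
      exact lintegral_congr fun y => ENNReal.ofReal_rpow_of_nonneg (hg0 y) hs0.le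
    calc _ ≤ (1:ENNReal) ^ (1/s) * (ENNReal.ofReal (ρ ^ (d - a * s')) * N') ^ (1/s') := by gcongr
      _ = _ := by simp
  calc _ ≤ ∫⁻ y, (ENNReal.ofReal β * near (x - y) + ENNReal.ofReal (g y) * far (x - y)) := lintegral_mono hpt
    _ = ENNReal.ofReal β * (∫⁻ y, near (x - y)) + ∫⁻ y, ENNReal.ofReal (g y) * far (x - y) := by
      rw [lintegral_add_left (by exact (mnear.comp (measurable_const.sub measurable_id)).const_mul _), lintegral_const_mul _ (by exact mnear.comp (measurable_const.sub measurable_id))]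
    _ ≤ ENNReal.ofReal β * (ENNReal.ofReal (ρ ^ (d - a)) * N) + (ENNReal.ofReal (ρ ^ (d - a * s')) * N') ^ (1/s') := by
      rw [h1]; gcongr
    _ = _ := by
      rw [← ENNReal.ofReal_toReal hNt.ne, ← ENNReal.ofReal_toReal hN't.ne, ← ENNReal.ofReal_mul (by positivity),
        ← ENNReal.ofReal_mul (by positivity), ← ENNReal.ofReal_mul (by positivity),
        ENNReal.ofReal_rpow_of_nonneg (by positivity) (by positivity), ← ENNReal.ofReal_add (by positivity) (by positivity)]
      congr 1
      rw [ENNReal.toReal_ofReal (by positivity), ENNReal.toReal_ofReal (by positivity)]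
      rw [Real.mul_rpow (by positivity) (by positivity), hρ, ← Real.rpow_mul hβ.le, ← Real.rpow_mul hβ.le, ← Real.rpow_mul hβ.le]
      have e1 : β * (β ^ (-s / d * (d - a)) * N.toReal) = β ^ (1 - s + s * a / d) * N.toReal := by
        rw [← mul_assoc]; congr 1
        nth_rewrite 1 [← Real.rpow_one β]
        rw [← Real.rpow_add hβ]; congr 1; field_simp; ring
      have e2 : -s / d * (d - a * s') * (1/s') = 1 - s + s * a / d := by
        have := hs.inv_add_inv_eq_one
        have h4 : s + s' = s * s' := by field_simp at this; linarith
        field_simp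
        linear_combination (-(d:ℝ)) * h4
      rw [e1, e2]; ring

theorem hls_normalized {d : ℕ} (hd : 1 ≤ d) {a r r' s s' : ℝ} (ha0 : 0 < a) (had : a < d)
    (hr : r.HolderConjugate r') (har : d < a * r')
    (hs : s.HolderConjugate s') (has : d < a * s') (hrel : 1 / r + 1 / s + a / d = 2) :
    ∃ C : ℝ, 0 ≤ C ∧ ∀ f g : EuclideanSpace ℝ (Fin d) → ℝ, Measurable f → (∀ y, 0 ≤ f y) →
      Measurable g → (∀ y, 0 ≤ g y) →
      ∫⁻ y, ENNReal.ofReal (f y ^ r) ≤ 1 → ∫⁻ y, ENNReal.ofReal (g y ^ s) ≤ 1 →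
      ∫⁻ x, ∫⁻ y, ENNReal.ofReal (f x) * ENNReal.ofReal (g y) * ENNReal.ofReal (‖x - y‖ ^ (-a))
        ≤ ENNReal.ofReal C := by
  obtain ⟨C1, hC1, h1⟩ := hls_inner hd ha0 had hs has
  obtain ⟨C2, hC2, h2⟩ := hls_inner hd ha0 had hr har
  have hs0 : 0 < s := hs.pos
  have hr0 : 0 < r := hr.pos
  have hd0 : (0:ℝ) < d := by positivity
  refine ⟨C1 + C2, by positivity, ?_⟩
  have key : ∀ (p q C : ℝ), 0 < p → 0 < q → 0 ≤ C → 1 / p + 1 / q + a / d = 2 →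
    (∀ g : EuclideanSpace ℝ (Fin d) → ℝ, Measurable g → (∀ y, 0 ≤ g y) →
      ∫⁻ y, ENNReal.ofReal (g y ^ q) ≤ 1 → ∀ β : ℝ, 0 < β → ∀ x,
      ∫⁻ y, (if g y ≤ β then ENNReal.ofReal (g y) else 0) * ENNReal.ofReal (‖x - y‖ ^ (-a))
        ≤ ENNReal.ofReal (C * β ^ (1 - q + q * a / d))) →
    ∀ f g : EuclideanSpace ℝ (Fin d) → ℝ, Measurable f → (∀ y, 0 ≤ f y) →
      Measurable g → (∀ y, 0 ≤ g y) →
      ∫⁻ y, ENNReal.ofReal (f y ^ p) ≤ 1 → ∫⁻ y, ENNReal.ofReal (g y ^ q) ≤ 1 →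
      ∫⁻ x, ∫⁻ y, ENNReal.ofReal (f x) * ((if g y ≤ f x ^ (p / q) then ENNReal.ofReal (g y) else 0) *
        ENNReal.ofReal (‖x - y‖ ^ (-a))) ≤ ENNReal.ofReal C := by
    intro p q C hp hq hC hrel h f g hf hf0 hg hg0 hfp hgq
    calc _ ≤ ∫⁻ x, ENNReal.ofReal C * ENNReal.ofReal (f x ^ p) := by
          refine lintegral_mono fun x => ?_
          simp only
          rw [lintegral_const_mul' _ _ ENNReal.ofReal_ne_top]
          rcases (hf0 x).eq_or_lt with h0 | h0
          · rw [← h0]; simp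
          · refine (mul_le_mul_right (h g hg hg0 hgq (f x ^ (p/q)) (by positivity) x) _).trans (le_of_eq ?_)
            rw [← ENNReal.ofReal_mul h0.le, ← ENNReal.ofReal_mul hC]
            congr 1
            rw [← Real.rpow_mul h0.le]
            have : f x ^ p = f x ^ (1:ℝ) * f x ^ (p / q * (1 - q + q * a / d)) := by
              rw [← Real.rpow_add h0]; congr 1
              have e : p / q * (1 - q + q * a / d) = p * (1/q + a/d) - p := by field_simp; ring
              rw [e, show 1/q + a/d = 2 - 1/p by linarith]; field_simp; ring
            rw [this, Real.rpow_one]; ring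
      _ = ENNReal.ofReal C * ∫⁻ x, ENNReal.ofReal (f x ^ p) := lintegral_const_mul' _ _ ENNReal.ofReal_ne_top
      _ ≤ ENNReal.ofReal C * 1 := by gcongr
      _ = _ := mul_one _
  intro f g hf hf0 hg hg0 hfr hgs
  have k1 := key r s C1 hr0 hs0 hC1 hrel h1 f g hf hf0 hg hg0 hfr hgs
  have k2 := key s r C2 hs0 hr0 hC2 (by linarith) h2 g f hg hg0 hf hf0 hgs hfr
  have mk : Measurable (fun z : EuclideanSpace ℝ (Fin d) × EuclideanSpace ℝ (Fin d) => ENNReal.ofReal (‖z.1 - z.2‖ ^ (-a))) :=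
    (meas_kernel a).comp (measurable_fst.sub measurable_snd)
  have m1 : Measurable (fun z : EuclideanSpace ℝ (Fin d) × EuclideanSpace ℝ (Fin d) => ENNReal.ofReal (f z.1) * ((if g z.2 ≤ f z.1 ^ (r / s) then ENNReal.ofReal (g z.2) else 0) *
        ENNReal.ofReal (‖z.1 - z.2‖ ^ (-a)))) := by
    refine (hf.comp measurable_fst).ennreal_ofReal.mul (Measurable.mul (Measurable.ite ?_ (hg.comp measurable_snd).ennreal_ofReal measurable_const) mk)
    exact measurableSet_le (hg.comp measurable_snd) ((hf.comp measurable_fst).pow_const _)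
  have m2 : Measurable (fun z : EuclideanSpace ℝ (Fin d) × EuclideanSpace ℝ (Fin d) => ENNReal.ofReal (g z.1) * ((if f z.2 ≤ g z.1 ^ (s / r) then ENNReal.ofReal (f z.2) else 0) *
        ENNReal.ofReal (‖z.1 - z.2‖ ^ (-a)))) := by
    refine (hg.comp measurable_fst).ennreal_ofReal.mul (Measurable.mul (Measurable.ite ?_ (hf.comp measurable_snd).ennreal_ofReal measurable_const) mk)
    exact measurableSet_le (hf.comp measurable_snd) ((hg.comp measurable_fst).pow_const _)
  rw [lintegral_lintegral_swap m2.aemeasurable] at k2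
  rw [ENNReal.ofReal_add hC1 hC2]
  refine le_trans ?_ (add_le_add k1 k2)
  rw [← lintegral_add_left m1.lintegral_prod_right']
  refine lintegral_mono fun x => ?_
  simp only
  rw [← lintegral_add_left (by exact m1.comp measurable_prodMk_left)]
  refine lintegral_mono fun y => ?_
  simp only
  by_cases hc : g y ≤ f x ^ (r / s)
  · rw [if_pos hc, mul_assoc]; exact le_add_right le_rfl
  · have hc2 : f x ≤ g y ^ (s / r) := by
      have := Real.rpow_le_rpow (by have := hf0 x; positivity) (not_le.1 hc).le (z := s / r) (by positivity)
      rwa [← Real.rpow_mul (hf0 x), show r / s * (s / r) = 1 by field_simp, Real.rpow_one] at this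
    rw [if_pos hc2, norm_sub_rev x y]
    refine le_add_left (le_of_eq ?_)
    ring

theorem hls {d : ℕ} (hd : 1 ≤ d) {a r r' s s' : ℝ} (ha0 : 0 < a) (had : a < d)
    (hr : r.HolderConjugate r') (har : d < a * r')
    (hs : s.HolderConjugate s') (has : d < a * s') (hrel : 1 / r + 1 / s + a / d = 2) :
    ∃ C : ℝ, 0 ≤ C ∧ ∀ f g : EuclideanSpace ℝ (Fin d) → ℝ, Measurable f → (∀ y, 0 ≤ f y) →
      Measurable g → (∀ y, 0 ≤ g y) → ∀ A B : ℝ, 0 < A → 0 < B →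
      ∫⁻ y, ENNReal.ofReal (f y ^ r) ≤ ENNReal.ofReal (A ^ r) →
      ∫⁻ y, ENNReal.ofReal (g y ^ s) ≤ ENNReal.ofReal (B ^ s) →
      ∫⁻ x, ∫⁻ y, ENNReal.ofReal (f x) * ENNReal.ofReal (g y) * ENNReal.ofReal (‖x - y‖ ^ (-a))
        ≤ ENNReal.ofReal (C * A * B) := by
  obtain ⟨C, hC, h⟩ := hls_normalized hd ha0 had hr har hs has hrel
  refine ⟨C, hC, ?_⟩
  intro f g hf hf0 hg hg0 A B hA hB hfA hgB
  have norm1 : ∀ (q : ℝ) (u : EuclideanSpace ℝ (Fin d) → ℝ) (A : ℝ), 0 < A → (∀ y, 0 ≤ u y) →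
      ∫⁻ y, ENNReal.ofReal (u y ^ q) ≤ ENNReal.ofReal (A ^ q) →
      ∫⁻ y, ENNReal.ofReal ((u y / A) ^ q) ≤ 1 := by
    intro q u A hA hu h
    have : ∀ y, ENNReal.ofReal ((u y / A) ^ q) = ENNReal.ofReal ((A ^ q)⁻¹) * ENNReal.ofReal (u y ^ q) := by
      intro y
      rw [← ENNReal.ofReal_mul (by positivity), Real.div_rpow (hu y) hA.le]
      congr 1; field_simp
    simp_rw [this]
    rw [lintegral_const_mul' _ _ ENNReal.ofReal_ne_top]
    calc _ ≤ ENNReal.ofReal ((A ^ q)⁻¹) * ENNReal.ofReal (A ^ q) := by gcongr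
      _ = 1 := by
        rw [← ENNReal.ofReal_mul (by positivity), inv_mul_cancel₀ (by positivity)]; simp
  have := h (fun x => f x / A) (fun x => g x / B) (hf.div_const _) (fun y => div_nonneg (hf0 y) hA.le)
    (hg.div_const _) (fun y => div_nonneg (hg0 y) hB.le) (norm1 r f A hA hf0 hfA) (norm1 s g B hB hg0 hgB)
  have e : ∀ x y, ENNReal.ofReal (f x) * ENNReal.ofReal (g y) * ENNReal.ofReal (‖x - y‖ ^ (-a)) =
     ENNReal.ofReal (A * B) * (ENNReal.ofReal (f x / A) * ENNReal.ofReal (g y / B) * ENNReal.ofReal (‖x - y‖ ^ (-a))) := by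
    intro x y
    have := hf0 x; have := hg0 y
    rw [← ENNReal.ofReal_mul (by positivity), ← ENNReal.ofReal_mul (by positivity), ← ENNReal.ofReal_mul (by positivity),
      ← ENNReal.ofReal_mul (by positivity), ← ENNReal.ofReal_mul (by positivity)]
    congr 1; field_simp
  simp_rw [e]
  simp_rw [lintegral_const_mul' _ _ ENNReal.ofReal_ne_top]
  calc _ ≤ ENNReal.ofReal (A * B) * ENNReal.ofReal C := by gcongr
    _ = _ := by rw [← ENNReal.ofReal_mul (by positivity)]; congr 1; ring

/-- coordinate derivative -/
def pd {d : ℕ} (i : Fin d) (f : EuclideanSpace ℝ (Fin d) → ℝ) (x : EuclideanSpace ℝ (Fin d)) : ℝ :=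
  fderiv ℝ f x (EuclideanSpace.single i 1)

/-- Riesz potential of a test function -/
def riesz {d : ℕ} (lam : ℝ) (ψ : EuclideanSpace ℝ (Fin d) → ℝ) (z : EuclideanSpace ℝ (Fin d)) : ℝ :=
  ∫ y, ψ (z - y) * ‖y‖ ^ (-lam)

theorem pd_smooth {d : ℕ} {f : EuclideanSpace ℝ (Fin d) → ℝ} (i : Fin d) (hf : ContDiff ℝ (⊤ : ℕ∞) f) :
    ContDiff ℝ (⊤ : ℕ∞) (pd i f) := by
  unfold pd
  exact (hf.fderiv_right (m := (⊤ : ℕ∞)) (by simp)).clm_apply contDiff_const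

theorem pd_supp {d : ℕ} {f : EuclideanSpace ℝ (Fin d) → ℝ} (i : Fin d) (hf : HasCompactSupport f) :
    HasCompactSupport (pd i f) := by
  unfold pd
  exact hf.fderiv_apply ℝ _

theorem locint_norm {d : ℕ} (hd : 1 ≤ d) {b : ℝ} (hb : b < d) :
    LocallyIntegrable (fun y : EuclideanSpace ℝ (Fin d) => ‖y‖ ^ (-b)) := by
  refine locallyIntegrable_of_norm_le_rpow (C := 1) (α := b) (by simpa using hd) (by simpa using hb) ?_ ?_
  · refine Filter.Eventually.of_forall fun x => ?_
    rw [Real.norm_of_nonneg (by positivity), one_mul]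
  · exact (measurable_norm.pow_const (-b)).aestronglyMeasurable

theorem riesz_integrable {d : ℕ} (hd : 1 ≤ d) {b : ℝ} (hb : b < d) {ψ : EuclideanSpace ℝ (Fin d) → ℝ}
    (hψ : Continuous ψ) (hs : HasCompactSupport ψ) (z : EuclideanSpace ℝ (Fin d)) :
    Integrable (fun y => ψ (z - y) * ‖y‖ ^ (-b)) := by
  have h := (locint_norm hd hb).integrable_smul_left_of_hasCompactSupport (g := fun y => ψ (z - y))
    (hψ.comp (continuous_const.sub continuous_id))
    (hs.comp_homeomorph (Homeomorph.subLeft z))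
  exact h

theorem riesz_eq_conv {d : ℕ} (lam : ℝ) (ψ : EuclideanSpace ℝ (Fin d) → ℝ) :
    riesz lam ψ = convolution (fun y : EuclideanSpace ℝ (Fin d) => ‖y‖ ^ (-lam)) ψ (ContinuousLinearMap.mul ℝ ℝ) volume := by
  ext z
  unfold riesz convolution
  refine integral_congr_ae (Filter.Eventually.of_forall fun y => ?_)
  simp [mul_comm]

theorem riesz_contDiff {d : ℕ} (hd : 1 ≤ d) {lam : ℝ} (hb : lam < d) {ψ : EuclideanSpace ℝ (Fin d) → ℝ}
    (hψ : ContDiff ℝ (⊤ : ℕ∞) ψ) (hs : HasCompactSupport ψ) : ContDiff ℝ (⊤ : ℕ∞) (riesz lam ψ) := by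
  rw [riesz_eq_conv]
  exact hs.contDiff_convolution_right _ (locint_norm hd hb) hψ

theorem riesz_pd {d : ℕ} (hd : 1 ≤ d) {lam : ℝ} (hb : lam < d) {ψ : EuclideanSpace ℝ (Fin d) → ℝ}
    (hψ : ContDiff ℝ (⊤ : ℕ∞) ψ) (hs : HasCompactSupport ψ) (i : Fin d) :
    pd i (riesz lam ψ) = riesz lam (pd i ψ) := by
  ext z
  have h1 := hs.hasFDerivAt_convolution_right (ContinuousLinearMap.mul ℝ ℝ) (locint_norm hd hb) (hψ.of_le (by simp)) z
  rw [riesz_eq_conv, riesz_eq_conv]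
  unfold pd
  rw [h1.fderiv, convolution_precompR_apply _ (locint_norm hd hb) (hs.fderiv ℝ) (hψ.continuous_fderiv (by simp))]

theorem riesz_bdd {d : ℕ} (hd : 1 ≤ d) {lam : ℝ} (h0 : 0 < lam) (hb : lam < d) {ψ : EuclideanSpace ℝ (Fin d) → ℝ}
    (hψ : Continuous ψ) (hs : HasCompactSupport ψ) : ∃ M, 0 ≤ M ∧ ∀ z, |riesz lam ψ z| ≤ M := by
  obtain ⟨K, hK⟩ := hs.exists_bound_of_continuous hψ
  have hK0 : 0 ≤ K := (norm_nonneg _).trans (hK 0)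
  have i1 : Integrable ((Metric.ball (0:EuclideanSpace ℝ (Fin d)) 1).indicator (fun y => K * ‖y‖ ^ (-lam))) := by
    rw [integrable_indicator_iff Metric.isOpen_ball.measurableSet]
    exact (((locint_norm hd hb).integrableOn_isCompact (isCompact_closedBall 0 1)).mono_set Metric.ball_subset_closedBall).const_mul K
  have i2 : Integrable ψ := hψ.integrable_of_hasCompactSupport hs
  refine ⟨(∫ y, (Metric.ball (0:EuclideanSpace ℝ (Fin d)) 1).indicator (fun y => K * ‖y‖ ^ (-lam)) y) + ∫ y, ‖ψ y‖, ?_, ?_⟩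
  · refine add_nonneg (integral_nonneg fun y => ?_) (integral_nonneg fun y => norm_nonneg _)
    exact indicator_nonneg (fun y _ => by positivity) y
  intro z
  unfold riesz
  rw [← Real.norm_eq_abs]
  refine (norm_integral_le_integral_norm _).trans ?_
  rw [← integral_sub_left_eq_self (fun y => ‖ψ y‖) volume z, ← integral_add i1 (i2.norm.comp_sub_left z)]
  refine integral_mono (riesz_integrable hd hb hψ hs z).norm (i1.add (i2.norm.comp_sub_left z)) fun y => ?_
  simp only [norm_mul, Pi.add_apply]
  rw [Real.norm_of_nonneg (show 0 ≤ ‖y‖ ^ (-lam) by positivity)]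
  by_cases hy : y ∈ Metric.ball (0:EuclideanSpace ℝ (Fin d)) 1
  · rw [indicator_of_mem hy]
    have := mul_le_mul_of_nonneg_right (hK (z - y)) (show 0 ≤ ‖y‖ ^ (-lam) by positivity)
    have := norm_nonneg (ψ (z - y))
    linarith
  · rw [indicator_of_notMem hy, zero_add]
    have h1 : 1 ≤ ‖y‖ := by simpa using hy
    have := Real.rpow_le_one_of_one_le_of_nonpos h1 (z := -lam) (by linarith)
    exact mul_le_of_le_one_right (norm_nonneg _) this

theorem lapl_eq {d : ℕ} (f : EuclideanSpace ℝ (Fin d) → ℝ) (x : EuclideanSpace ℝ (Fin d)) :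
    lapl f x = ∑ i, pd i (pd i f) x := rfl

theorem pd_eq {d : ℕ} {f : EuclideanSpace ℝ (Fin d) → ℝ} {x : EuclideanSpace ℝ (Fin d)} {i : Fin d}
    {L : EuclideanSpace ℝ (Fin d) →L[ℝ] ℝ} (h : HasFDerivAt f L x) : pd i f x = L (EuclideanSpace.single i 1) := by
  unfold pd; rw [h.fderiv]

/-- regularised kernel -/
def phiReg {d : ℕ} (b ε : ℝ) (y : EuclideanSpace ℝ (Fin d)) : ℝ := (‖y‖ ^ 2 + ε) ^ (-b)

theorem phiReg_hasFDerivAt {d : ℕ} (b : ℝ) {ε : ℝ} (hε : 0 < ε) (y : EuclideanSpace ℝ (Fin d)) :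
    HasFDerivAt (phiReg b ε) ((-b * phiReg (b + 1) ε y) • ((2:ℝ) • innerSL ℝ y)) y := by
  have h1 : HasFDerivAt (fun y : EuclideanSpace ℝ (Fin d) => ‖y‖ ^ 2 + ε) ((2:ℝ) • innerSL ℝ y) y := by
    have := (hasStrictFDerivAt_norm_sq y).hasFDerivAt.add_const ε
    rwa [two_nsmul, ← two_smul ℝ] at this
  have h2 := h1.rpow_const (p := -b) (Or.inl (by positivity))
  unfold phiReg
  rw [show -(b + 1) = -b - 1 by ring]
  exact h2

theorem phiReg_smooth {d : ℕ} (b : ℝ) {ε : ℝ} (hε : 0 < ε) :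
    ContDiff ℝ (⊤ : ℕ∞) (phiReg b ε : EuclideanSpace ℝ (Fin d) → ℝ) := by
  unfold phiReg
  refine ContDiff.rpow_const_of_ne ((contDiff_norm_sq ℝ).add contDiff_const) fun x => by positivity

theorem phiReg_pd {d : ℕ} (b : ℝ) {ε : ℝ} (hε : 0 < ε) (i : Fin d) :
    pd i (phiReg b ε) = fun y : EuclideanSpace ℝ (Fin d) => -(2 * b) * phiReg (b + 1) ε y * y i := by
  ext y
  rw [pd_eq (phiReg_hasFDerivAt b hε y)]
  simp [EuclideanSpace.inner_single_right]
  ring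

theorem phiReg_pdpd {d : ℕ} (b : ℝ) {ε : ℝ} (hε : 0 < ε) (i : Fin d) (y : EuclideanSpace ℝ (Fin d)) :
    pd i (pd i (phiReg b ε)) y = -(2 * b) * phiReg (b + 1) ε y + 4 * b * (b + 1) * phiReg (b + 2) ε y * (y i) ^ 2 := by
  rw [phiReg_pd b hε]
  have h1 := (phiReg_hasFDerivAt (b + 1) hε y).const_mul (-(2 * b))
  have h2 : HasFDerivAt (fun y : EuclideanSpace ℝ (Fin d) => y i) (EuclideanSpace.proj i : EuclideanSpace ℝ (Fin d) →L[ℝ] ℝ) y :=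
    (EuclideanSpace.proj i : EuclideanSpace ℝ (Fin d) →L[ℝ] ℝ).hasFDerivAt
  rw [pd_eq (h1.fun_mul h2)]
  simp [EuclideanSpace.inner_single_right, show b + 1 + 1 = b + 2 by ring]
  ring

theorem phiReg_lapl_bound {d : ℕ} {b : ℝ} (hb : 0 < b) {ε : ℝ} (hε : 0 < ε) (y : EuclideanSpace ℝ (Fin d)) (hy : y ≠ 0) :
    |lapl (phiReg b ε) y| ≤ 2 * b * (d + 2 * (b + 1)) * ‖y‖ ^ (-(2 * b + 2)) := by
  rw [lapl_eq]
  simp_rw [phiReg_pdpd b hε]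
  rw [Finset.sum_add_distrib, ← Finset.mul_sum (f := fun i => (y i) ^ 2), ← EuclideanSpace.real_norm_sq_eq]
  simp only [Finset.sum_const, Finset.card_univ, Fintype.card_fin, nsmul_eq_mul]
  have hny : 0 < ‖y‖ := norm_pos_iff.2 hy
  set q := ‖y‖ ^ 2 + ε with hq
  have hq0 : 0 < q := by positivity
  have e2 : phiReg (b + 2) ε y * ‖y‖ ^ 2 ≤ phiReg (b + 1) ε y := by
    unfold phiReg
    rw [← hq]
    have : q ^ (-(b + 1)) = q ^ (-(b + 2)) * q := by
      nth_rewrite 3 [← Real.rpow_one q]; rw [← Real.rpow_add hq0]; congr 1; ring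
    rw [this]
    have : ‖y‖ ^ 2 ≤ q := by linarith
    gcongr
  have e1 : phiReg (b + 1) ε y ≤ ‖y‖ ^ (-(2 * b + 2)) := by
    unfold phiReg
    rw [show -(2 * b + 2) = 2 * (-(b+1)) by ring, Real.rpow_mul hny.le]
    apply Real.rpow_le_rpow_of_nonpos (by positivity)
    · simp; exact hε.le
    · linarith
  have p1 : 0 ≤ phiReg (b + 1) ε y := by unfold phiReg; positivity
  have p2 : 0 ≤ phiReg (b + 2) ε y := by unfold phiReg; positivity
  have p3 : 0 ≤ phiReg (b + 2) ε y * ‖y‖ ^ 2 := by positivity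
  set A := phiReg (b + 1) ε y
  set B := phiReg (b + 2) ε y * ‖y‖ ^ 2 with hB
  have t : (d:ℝ) * (-(2 * b) * A) + 4 * b * (b + 1) * phiReg (b + 2) ε y * ‖y‖ ^ 2 = 2 * b * (2 * (b+1) * B - d * A) := by
    rw [hB]; ring
  rw [t, abs_mul, abs_of_pos (by positivity : 0 < 2 * b), mul_assoc (2*b) ((d:ℝ) + 2*(b+1))]
  apply mul_le_mul_of_nonneg_left _ (by positivity)
  have h2b : 0 ≤ 2 * (b + 1) * B := by positivity
  have h2b' : 2 * (b + 1) * B ≤ 2 * (b + 1) * A := by gcongr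
  have hdA : 0 ≤ (d:ℝ) * A := by positivity
  calc |2 * (b+1) * B - d * A| ≤ (d + 2 * (b+1)) * A := by
        rw [abs_le]; constructor <;> nlinarith
    _ ≤ _ := by gcongr

theorem lapl_smooth {d : ℕ} {f : EuclideanSpace ℝ (Fin d) → ℝ} (hf : ContDiff ℝ (⊤ : ℕ∞) f) :
    ContDiff ℝ (⊤ : ℕ∞) (lapl f) := by
  have : lapl f = fun x => ∑ i, pd i (pd i f) x := rfl
  rw [this]
  exact ContDiff.sum fun i _ => pd_smooth i (pd_smooth i hf)

theorem lapl_supp {d : ℕ} {f : EuclideanSpace ℝ (Fin d) → ℝ} (hf : HasCompactSupport f) :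
    HasCompactSupport (lapl f) := by
  refine HasCompactSupport.of_support_subset_isCompact hf fun x hx => ?_
  by_contra hn
  apply hx
  rw [lapl_eq]
  refine Finset.sum_eq_zero fun i _ => ?_
  have h1 : tsupport (pd i (pd i f)) ⊆ tsupport f :=
    (tsupport_fderiv_apply_subset ℝ _).trans (tsupport_fderiv_apply_subset ℝ _)
  exact image_eq_zero_of_notMem_tsupport fun h => hn (h1 h)

theorem pd_ibp {d : ℕ} {f g : EuclideanSpace ℝ (Fin d) → ℝ} (i : Fin d) (hf : ContDiff ℝ (⊤ : ℕ∞) f)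
    (hg : ContDiff ℝ (⊤ : ℕ∞) g) (hs : HasCompactSupport f) :
    ∫ x, pd i f x * g x = - ∫ x, f x * pd i g x := by
  have := integral_mul_fderiv_eq_neg_fderiv_mul_of_integrable (μ := volume) (f := f) (g := g) (v := EuclideanSpace.single i 1)
    (by exact (((pd_smooth i hf).continuous.mul hg.continuous).integrable_of_hasCompactSupport ((pd_supp i hs).mul_right)))
    (by exact ((hf.continuous.mul (pd_smooth i hg).continuous).integrable_of_hasCompactSupport (hs.mul_right)))
    (by exact ((hf.continuous.mul hg.continuous).integrable_of_hasCompactSupport (hs.mul_right)))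
    (fun x _ => (hf.differentiable (by simp)) x) (fun x _ => (hg.differentiable (by simp)) x)
  unfold pd
  rw [this, neg_neg]

theorem lapl_green {d : ℕ} {f g : EuclideanSpace ℝ (Fin d) → ℝ} (hf : ContDiff ℝ (⊤ : ℕ∞) f)
    (hg : ContDiff ℝ (⊤ : ℕ∞) g) (hs : HasCompactSupport f) :
    ∫ x, lapl f x * g x = ∫ x, f x * lapl g x := by
  simp_rw [lapl_eq, Finset.sum_mul, Finset.mul_sum]
  rw [integral_finsetSum, integral_finsetSum]
  · refine Finset.sum_congr rfl fun i _ => ?_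
    rw [pd_ibp i (pd_smooth i hf) hg (pd_supp i hs), pd_ibp i hf (pd_smooth i hg) hs, neg_neg]
  · intro i _
    exact (hf.continuous.mul (pd_smooth i (pd_smooth i hg)).continuous).integrable_of_hasCompactSupport (hs.mul_right)
  · intro i _
    exact ((pd_smooth i (pd_smooth i hf)).continuous.mul hg.continuous).integrable_of_hasCompactSupport ((pd_supp i (pd_supp i hs)).mul_right)

theorem pd_reflect {d : ℕ} {f : EuclideanSpace ℝ (Fin d) → ℝ} (i : Fin d) (hf : ContDiff ℝ (⊤ : ℕ∞) f)
    (z : EuclideanSpace ℝ (Fin d)) : pd i (fun y => f (z - y)) = fun y => - pd i f (z - y) := by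
  ext y
  have h1 : HasFDerivAt (fun y : EuclideanSpace ℝ (Fin d) => z - y) (-ContinuousLinearMap.id ℝ _) y := by
    simpa using (hasFDerivAt_id y).const_sub z
  have h2 := ((hf.differentiable (by simp) (z - y)).hasFDerivAt).comp y h1
  have := pd_eq (i := i) h2
  simp only [Function.comp_def] at this
  rw [this]; simp [pd]

theorem lapl_reflect {d : ℕ} {f : EuclideanSpace ℝ (Fin d) → ℝ} (hf : ContDiff ℝ (⊤ : ℕ∞) f)
    (z y : EuclideanSpace ℝ (Fin d)) : lapl (fun y => f (z - y)) y = lapl f (z - y) := by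
  rw [lapl_eq, lapl_eq]
  refine Finset.sum_congr rfl fun i _ => ?_
  rw [pd_reflect i hf]
  have h3 := pd_reflect i (pd_smooth i hf) z
  have : pd i (fun y => - pd i f (z - y)) y = - pd i (fun y => pd i f (z - y)) y := by
    unfold pd; rw [fderiv_fun_neg]; simp
  rw [this, h3]; simp

theorem riesz_lapl_bound {d : ℕ} (hd : 1 ≤ d) {lam : ℝ} (h0 : 0 < lam) (hlam : lam + 2 < d)
    {ρ : EuclideanSpace ℝ (Fin d) → ℝ} (hρ : ContDiff ℝ (⊤ : ℕ∞) ρ) (hs : HasCompactSupport ρ)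
    (hρ0 : ∀ x, 0 ≤ ρ x) (z : EuclideanSpace ℝ (Fin d)) :
    |riesz lam (lapl ρ) z| ≤ lam * (d + lam + 2) * ∫ y, ρ (z - y) * ‖y‖ ^ (-(lam + 2)) := by
  have : Nonempty (Fin d) := ⟨⟨0, by omega⟩⟩
  have hne : ∀ᵐ y : EuclideanSpace ℝ (Fin d), y ≠ 0 := by
    have := (measure_eq_zero_iff_ae_notMem).1 (measure_singleton (μ := (volume : Measure (EuclideanSpace ℝ (Fin d)))) 0)
    filter_upwards [this] with y hy using by simpa using hy
  have hsm := lapl_smooth hρ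
  have hsp := lapl_supp hs
  have hlim : Filter.Tendsto (fun n : ℕ => ∫ y, lapl ρ (z - y) * phiReg (lam / 2) (1 / ((n:ℝ) + 1)) y) Filter.atTop
      (nhds (riesz lam (lapl ρ) z)) := by
    unfold riesz
    refine tendsto_integral_of_dominated_convergence (fun y => ‖lapl ρ (z - y) * ‖y‖ ^ (-lam)‖) ?_ ?_ ?_ ?_
    · intro n
      exact ((hsm.continuous.comp (continuous_const.sub continuous_id)).mul (phiReg_smooth _ (by positivity)).continuous).aestronglyMeasurable
    · exact (riesz_integrable hd (by linarith) hsm.continuous hsp z).norm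
    · intro n
      filter_upwards [hne] with y hy
      rw [norm_mul, norm_mul]
      have hny : 0 < ‖y‖ := norm_pos_iff.2 hy
      refine mul_le_mul_of_nonneg_left ?_ (norm_nonneg _)
      rw [Real.norm_of_nonneg (by unfold phiReg; positivity), Real.norm_of_nonneg (by positivity)]
      unfold phiReg
      rw [show -lam = 2 * (-(lam/2)) by ring, Real.rpow_mul hny.le]
      apply Real.rpow_le_rpow_of_nonpos (by positivity)
      · simp; positivity
      · linarith
    · filter_upwards [hne] with y hy
      have hny : 0 < ‖y‖ := norm_pos_iff.2 hy
      refine Filter.Tendsto.const_mul _ ?_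
      unfold phiReg
      have e : ‖y‖ ^ (-lam) = (‖y‖ ^ 2 + 0) ^ (-(lam/2)) := by
        rw [add_zero, show -lam = 2 * (-(lam/2)) by ring, Real.rpow_mul hny.le]
        congr 1
        norm_num
      rw [e]
      refine Filter.Tendsto.rpow_const ?_ (Or.inl (by positivity))
      exact Filter.Tendsto.const_add _ tendsto_one_div_add_atTop_nhds_zero_nat
  refine le_of_tendsto hlim.abs (Filter.Eventually.of_forall fun n => ?_)
  have hε : (0:ℝ) < 1 / ((n:ℝ) + 1) := by positivity
  have hρz : ContDiff ℝ (⊤ : ℕ∞) (fun y => ρ (z - y)) := hρ.comp (contDiff_const.sub contDiff_id)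
  have hsz : HasCompactSupport (fun y => ρ (z - y)) := hs.comp_homeomorph (Homeomorph.subLeft z)
  have g := lapl_green hρz (phiReg_smooth (lam/2) hε) hsz
  simp_rw [lapl_reflect hρ] at g
  rw [g, ← Real.norm_eq_abs, ← integral_const_mul]
  refine norm_integral_le_of_norm_le ((riesz_integrable hd hlam hρ.continuous hs z).const_mul _) ?_
  filter_upwards [hne] with y hy
  rw [norm_mul, Real.norm_of_nonneg (hρ0 _), Real.norm_eq_abs]
  have := mul_le_mul_of_nonneg_left (phiReg_lapl_bound (b := lam/2) (by positivity) hε y hy) (hρ0 (z - y))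
  refine this.trans (le_of_eq ?_)
  rw [show -(2 * (lam / 2) + 2) = -(lam + 2) by ring]; ring

/-- convolution of a density with a Riesz potential -/
def cv {d : ℕ} (lam : ℝ) (u ψ : EuclideanSpace ℝ (Fin d) → ℝ) (z : EuclideanSpace ℝ (Fin d)) : ℝ :=
  ∫ y, u y * riesz lam ψ (z - y)

theorem clm_norm_le_sum {d : ℕ} (L : EuclideanSpace ℝ (Fin d) →L[ℝ] ℝ) :
    ‖L‖ ≤ ∑ i, |L (EuclideanSpace.single i 1)| := by
  refine L.opNorm_le_bound (Finset.sum_nonneg fun i _ => abs_nonneg _) fun x => ?_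
  have hx : x = ∑ i, x i • EuclideanSpace.single i (1:ℝ) := by
    ext j
    simp [Finset.sum_apply, Pi.single_apply]
  conv_lhs => rw [hx]
  rw [map_sum, Finset.sum_mul]
  refine (norm_sum_le _ _).trans (Finset.sum_le_sum fun i _ => ?_)
  rw [map_smul, norm_smul, mul_comm, Real.norm_eq_abs]
  gcongr
  exact PiLp.norm_apply_le x i

theorem riesz_fderiv_bdd {d : ℕ} (hd : 1 ≤ d) {lam : ℝ} (h0 : 0 < lam) (hb : lam < d) {ψ : EuclideanSpace ℝ (Fin d) → ℝ}
    (hψ : ContDiff ℝ (⊤ : ℕ∞) ψ) (hs : HasCompactSupport ψ) : ∃ M, 0 ≤ M ∧ ∀ z, ‖fderiv ℝ (riesz lam ψ) z‖ ≤ M := by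
  choose M hM0 hM using fun i => riesz_bdd hd h0 hb (pd_smooth i hψ).continuous (pd_supp i hs)
  refine ⟨∑ i, M i, Finset.sum_nonneg fun i _ => hM0 i, fun z => (clm_norm_le_sum _).trans (Finset.sum_le_sum fun i _ => ?_)⟩
  have := hM i z
  rw [← riesz_pd hd hb hψ hs] at this
  exact this

theorem cv_integrable {d : ℕ} (hd : 1 ≤ d) {lam : ℝ} (h0 : 0 < lam) (hb : lam < d) {u ψ : EuclideanSpace ℝ (Fin d) → ℝ}
    (hu : Integrable u) (hψ : ContDiff ℝ (⊤ : ℕ∞) ψ) (hs : HasCompactSupport ψ) (z : EuclideanSpace ℝ (Fin d)) :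
    Integrable (fun y => u y * riesz lam ψ (z - y)) := by
  obtain ⟨M, hM0, hM⟩ := riesz_bdd hd h0 hb hψ.continuous hs
  exact hu.mul_bdd (c := M) ((riesz_contDiff hd hb hψ hs).continuous.comp (continuous_const.sub continuous_id)).aestronglyMeasurable
    (Filter.Eventually.of_forall fun y => hM _)

theorem cv_hasFDerivAt {d : ℕ} (hd : 1 ≤ d) {lam : ℝ} (h0 : 0 < lam) (hb : lam < d) {u ψ : EuclideanSpace ℝ (Fin d) → ℝ}
    (hu : Integrable u) (hψ : ContDiff ℝ (⊤ : ℕ∞) ψ) (hs : HasCompactSupport ψ) (z : EuclideanSpace ℝ (Fin d)) :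
    Integrable (fun y => u y • fderiv ℝ (riesz lam ψ) (z - y)) ∧
    HasFDerivAt (cv lam u ψ) (∫ y, u y • fderiv ℝ (riesz lam ψ) (z - y)) z := by
  obtain ⟨M, hM0, hM⟩ := riesz_fderiv_bdd hd h0 hb hψ hs
  have hR := riesz_contDiff hd hb hψ hs
  have hm : AEStronglyMeasurable (fun y => u y • fderiv ℝ (riesz lam ψ) (z - y)) volume :=
    hu.aestronglyMeasurable.smul (((hR.continuous_fderiv (by simp)).comp (continuous_const.sub continuous_id)).aestronglyMeasurable)
  have hbd : ∀ z y, ‖u y • fderiv ℝ (riesz lam ψ) (z - y)‖ ≤ M * ‖u y‖ := by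
    intro z y
    rw [norm_smul, mul_comm]
    gcongr; exact hM _
  refine ⟨(hu.norm.const_mul M).mono' hm (Filter.Eventually.of_forall fun y => hbd z y), ?_⟩
  refine hasFDerivAt_integral_of_dominated_of_fderiv_le (s := univ) (F := fun z y => u y * riesz lam ψ (z - y))
    (F' := fun z y => u y • fderiv ℝ (riesz lam ψ) (z - y)) (bound := fun y => M * ‖u y‖) Filter.univ_mem ?_ ?_ ?_ ?_ ?_ ?_
  · exact Filter.Eventually.of_forall fun z => (cv_integrable hd h0 hb hu hψ hs z).aestronglyMeasurable
  · exact cv_integrable hd h0 hb hu hψ hs z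
  · exact hm
  · exact Filter.Eventually.of_forall fun y z _ => hbd z y
  · exact hu.norm.const_mul M
  · refine Filter.Eventually.of_forall fun y z _ => ?_
    have h1 : HasFDerivAt (fun z => riesz lam ψ (z - y)) (fderiv ℝ (riesz lam ψ) (z - y)) z := by
      simpa [Function.comp_def] using ((hR.differentiable (by simp) (z - y)).hasFDerivAt).comp z ((hasFDerivAt_id z).sub_const y)
    exact h1.const_mul (u y)

theorem cv_differentiable {d : ℕ} (hd : 1 ≤ d) {lam : ℝ} (h0 : 0 < lam) (hb : lam < d) {u ψ : EuclideanSpace ℝ (Fin d) → ℝ}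
    (hu : Integrable u) (hψ : ContDiff ℝ (⊤ : ℕ∞) ψ) (hs : HasCompactSupport ψ) : Differentiable ℝ (cv lam u ψ) :=
  fun z => (cv_hasFDerivAt hd h0 hb hu hψ hs z).2.differentiableAt

theorem cv_pd {d : ℕ} (hd : 1 ≤ d) {lam : ℝ} (h0 : 0 < lam) (hb : lam < d) {u ψ : EuclideanSpace ℝ (Fin d) → ℝ}
    (hu : Integrable u) (hψ : ContDiff ℝ (⊤ : ℕ∞) ψ) (hs : HasCompactSupport ψ) (i : Fin d) :
    pd i (cv lam u ψ) = cv lam u (pd i ψ) := by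
  ext z
  obtain ⟨h1, h2⟩ := cv_hasFDerivAt hd h0 hb hu hψ hs z
  unfold pd at *
  rw [h2.fderiv, ContinuousLinearMap.integral_apply h1]
  unfold cv
  refine integral_congr_ae (Filter.Eventually.of_forall fun y => ?_)
  have := congrFun (riesz_pd hd hb hψ hs i) (z - y)
  unfold pd at this
  simp [← this]

theorem cv_bdd {d : ℕ} {lam : ℝ} {u ψ : EuclideanSpace ℝ (Fin d) → ℝ}
    (hu : Integrable u) (hu0 : ∀ x, 0 ≤ u x) (hu1 : ∫ x, u x = 1) {M : ℝ} (hM : ∀ z, |riesz lam ψ z| ≤ M) (z : EuclideanSpace ℝ (Fin d)) :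
    |cv lam u ψ z| ≤ M := by
  unfold cv
  have : M = ∫ y, u y * M := by rw [integral_mul_const, hu1, one_mul]
  rw [this, ← Real.norm_eq_abs]
  refine norm_integral_le_of_norm_le (hu.mul_const M) (Filter.Eventually.of_forall fun y => ?_)
  rw [norm_mul, Real.norm_of_nonneg (hu0 y)]
  exact mul_le_mul_of_nonneg_left (hM _) (hu0 y)

theorem cv_lapl {d : ℕ} (hd : 1 ≤ d) {lam : ℝ} (h0 : 0 < lam) (hb : lam < d) {u ψ : EuclideanSpace ℝ (Fin d) → ℝ}
    (hu : Integrable u) (hψ : ContDiff ℝ (⊤ : ℕ∞) ψ) (hs : HasCompactSupport ψ) (z : EuclideanSpace ℝ (Fin d)) :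
    ∑ i, pd i (cv lam u (pd i ψ)) z = cv lam u (lapl ψ) z := by
  have h1 : ∀ i, pd i (cv lam u (pd i ψ)) z = cv lam u (pd i (pd i ψ)) z := fun i => by
    rw [cv_pd hd h0 hb hu (pd_smooth i hψ) (pd_supp i hs)]
  simp_rw [h1]
  unfold cv
  rw [← integral_finsetSum _ fun i _ => cv_integrable hd h0 hb hu (pd_smooth i (pd_smooth i hψ)) (pd_supp i (pd_supp i hs)) z]
  refine integral_congr_ae (Filter.Eventually.of_forall fun y => ?_)
  simp only
  rw [← Finset.mul_sum]
  congr 1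
  unfold riesz
  rw [← integral_finsetSum _ fun i _ => riesz_integrable hd hb (pd_smooth i (pd_smooth i hψ)).continuous (pd_supp i (pd_supp i hs)) _]
  refine integral_congr_ae (Filter.Eventually.of_forall fun x => ?_)
  simp only
  rw [lapl_eq, Finset.sum_mul]

theorem drift_coord {d : ℕ} (hd : 1 ≤ d) {lam : ℝ} (h0 : 0 < lam) (hb : lam < d) {u ψ : EuclideanSpace ℝ (Fin d) → ℝ}
    (hu : Integrable u) (hψ : ContDiff ℝ (⊤ : ℕ∞) ψ) (hs : HasCompactSupport ψ) (z : EuclideanSpace ℝ (Fin d)) (i : Fin d) :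
    (∫ y, u y • gradient (riesz lam ψ) (z - y)) i = cv lam u (pd i ψ) z := by
  have hR := riesz_contDiff hd hb hψ hs
  have hgc : Continuous (gradient (riesz lam ψ)) := by
    unfold gradient
    exact (LinearIsometryEquiv.continuous _).comp (hR.continuous_fderiv (by simp))
  obtain ⟨M, hM0, hM⟩ := riesz_fderiv_bdd hd h0 hb hψ hs
  have hi : Integrable (fun y => u y • gradient (riesz lam ψ) (z - y)) := by
    refine (hu.norm.const_mul M).mono' (hu.aestronglyMeasurable.smul (hgc.comp (continuous_const.sub continuous_id)).aestronglyMeasurable) (Filter.Eventually.of_forall fun y => ?_)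
    rw [norm_smul, mul_comm]
    gcongr
    unfold gradient
    simpa using hM (z - y)
  have := (EuclideanSpace.proj i : EuclideanSpace ℝ (Fin d) →L[ℝ] ℝ).integral_comp_comm hi
  have h2 : ∀ x : EuclideanSpace ℝ (Fin d), (EuclideanSpace.proj i : EuclideanSpace ℝ (Fin d) →L[ℝ] ℝ) x = x i := fun _ => rfl
  rw [h2] at this
  rw [← this]
  unfold cv
  refine integral_congr_ae (Filter.Eventually.of_forall fun y => ?_)
  simp only [h2]
  rw [← riesz_pd hd hb hψ hs]
  have h3 : gradient (riesz lam ψ) (z - y) i = pd i (riesz lam ψ) (z - y) := by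
    have h4 := EuclideanSpace.inner_single_right (𝕜 := ℝ) i 1 (gradient (riesz lam ψ) (z - y))
    have h5 : inner ℝ (gradient (riesz lam ψ) (z - y)) (EuclideanSpace.single i 1) = pd i (riesz lam ψ) (z - y) := by
      unfold gradient pd
      simp
    rw [h5] at h4
    simpa using h4.symm
  simp [h3]

theorem clm_norm_sq_le {d : ℕ} (L : EuclideanSpace ℝ (Fin d) →L[ℝ] ℝ) :
    ‖L‖ ^ 2 ≤ ∑ i, (L (EuclideanSpace.single i 1)) ^ 2 := by
  have h0 : 0 ≤ ∑ i, (L (EuclideanSpace.single i 1)) ^ 2 := Finset.sum_nonneg fun i _ => sq_nonneg _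
  have : ‖L‖ ≤ Real.sqrt (∑ i, (L (EuclideanSpace.single i 1)) ^ 2) := by
    refine L.opNorm_le_bound (Real.sqrt_nonneg _) fun x => ?_
    have hx : x = ∑ i, x i • EuclideanSpace.single i (1:ℝ) := by
      ext j
      simp [Finset.sum_apply, Pi.single_apply]
    have e : L x = ∑ i, x i * L (EuclideanSpace.single i 1) := by
      conv_lhs => rw [hx]
      simp [map_sum]
    rw [Real.norm_eq_abs, ← Real.sqrt_sq_eq_abs, EuclideanSpace.norm_eq, ← Real.sqrt_mul h0]
    apply Real.sqrt_le_sqrt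
    rw [e, mul_comm]
    simp only [Real.norm_eq_abs, sq_abs]
    exact Finset.sum_mul_sq_le_sq_mul_sq _ _ _
  calc ‖L‖ ^ 2 ≤ (Real.sqrt (∑ i, (L (EuclideanSpace.single i 1)) ^ 2)) ^ 2 := by gcongr
    _ = _ := Real.sq_sqrt h0

theorem pd_cont {d : ℕ} {v : EuclideanSpace ℝ (Fin d) → ℝ} (hv : ContDiff ℝ 1 v) (i : Fin d) : Continuous (pd i v) := by
  unfold pd
  exact (hv.continuous_fderiv (by simp)).clm_apply continuous_const

theorem gradsq_integrable {d : ℕ} {v : EuclideanSpace ℝ (Fin d) → ℝ} (hv : ContDiff ℝ 1 v) (hs : HasCompactSupport v) :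
    Integrable (fun x => ∑ i, (pd i v x) ^ 2) := by
  refine integrable_finsetSum _ fun i _ => ?_
  refine ((pd_cont hv i).pow 2).integrable_of_hasCompactSupport ?_
  simp_rw [sq]
  exact (pd_supp i hs).mul_right

theorem sobolev {d : ℕ} (hd : 3 ≤ d) : ∃ S : ℝ, 0 ≤ S ∧ ∀ v : EuclideanSpace ℝ (Fin d) → ℝ, ContDiff ℝ 1 v → HasCompactSupport v →
    ∫⁻ x, ENNReal.ofReal ((v x ^ 2) ^ ((d:ℝ) / (d - 2))) ≤ ENNReal.ofReal ((S * ∫ x, ∑ i, (pd i v x) ^ 2) ^ ((d:ℝ) / (d - 2))) := by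
  have hd3 : (3:ℝ) ≤ d := by exact_mod_cast hd
  set r : ℝ := (d:ℝ) / (d - 2) with hr
  have hr0 : 0 < r := div_pos (by linarith) (by linarith)
  set K := eLpNormLESNormFDerivOfEqInnerConst (volume : Measure (EuclideanSpace ℝ (Fin d))) (2:NNReal) with hK
  refine ⟨(K:ℝ)^2, by positivity, fun v hv hs => ?_⟩
  have hsob := eLpNorm_le_eLpNorm_fderiv_of_eq_inner (volume : Measure (EuclideanSpace ℝ (Fin d))) hv hs (p := 2) (p' := (2 * r).toNNReal) (by norm_num)
    (by simp; omega) (by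
      rw [Real.coe_toNNReal _ (by positivity), hr]
      simp
      have : (d:ℝ) - 2 ≠ 0 := by linarith
      field_simp)
  rw [← hK] at hsob
  have hG := gradsq_integrable hv hs
  set G := ∫ x, ∑ i, (pd i v x) ^ 2 with hGdef
  have hG0 : 0 ≤ G := integral_nonneg fun x => Finset.sum_nonneg fun i _ => sq_nonneg _
  have e2 : eLpNorm (fderiv ℝ v) ((2:NNReal):ENNReal) volume ≤ ENNReal.ofReal G ^ ((1:ℝ)/2) := by
    rw [eLpNorm_eq_lintegral_rpow_enorm_toReal (by simp) (by simp)]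
    simp only [ENNReal.coe_toReal, NNReal.coe_ofNat]
    gcongr
    rw [hGdef, ofReal_integral_eq_lintegral_ofReal hG (Filter.Eventually.of_forall fun x => Finset.sum_nonneg fun i _ => sq_nonneg _)]
    refine lintegral_mono fun x => ?_
    rw [← ofReal_norm, ENNReal.ofReal_rpow_of_nonneg (norm_nonneg _) (by norm_num)]
    apply ENNReal.ofReal_le_ofReal
    rw [Real.rpow_two]
    exact clm_norm_sq_le _
  have e1 : ∫⁻ x, ENNReal.ofReal ((v x ^ 2) ^ r) = eLpNorm v ((2*r).toNNReal : ENNReal) volume ^ (2 * r) := by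
    rw [eLpNorm_eq_lintegral_rpow_enorm_toReal (by simpa using hr0) (by simp)]
    rw [ENNReal.coe_toReal, Real.coe_toNNReal _ (by positivity), ← ENNReal.rpow_mul, one_div, inv_mul_cancel₀ (by positivity), ENNReal.rpow_one]
    refine lintegral_congr fun x => ?_
    rw [← ofReal_norm, ENNReal.ofReal_rpow_of_nonneg (norm_nonneg _) (by positivity), Real.rpow_mul (norm_nonneg _)]
    congr 2
    simp
  rw [e1]
  calc _ ≤ ((K:ENNReal) * ENNReal.ofReal G ^ ((1:ℝ)/2)) ^ (2 * r) := by
        gcongr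
        exact hsob.trans (by gcongr)
    _ = _ := by
      rw [ENNReal.rpow_mul, ENNReal.mul_rpow_of_nonneg _ _ (by norm_num), ← ENNReal.rpow_mul]
      norm_num
      rw [show (K:ENNReal) = ENNReal.ofReal (K:ℝ) by simp]
      rw [← ENNReal.ofReal_pow (by positivity), ← ENNReal.ofReal_mul (by positivity), ENNReal.ofReal_rpow_of_nonneg (by positivity) hr0.le]

theorem tonelli1 {d : ℕ} {U R k : EuclideanSpace ℝ (Fin d) → ENNReal} (hU : Measurable U) (hR : Measurable R) (hk : Measurable k) (c : ENNReal) (x : EuclideanSpace ℝ (Fin d)) :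
    ∫⁻ y, U y * (c * ∫⁻ q, R q * k (x - y - q)) = c * ∫⁻ q, R q * ∫⁻ y, U (y - q) * k (x - y) := by
  calc _ = ∫⁻ y, ∫⁻ q, c * (R q * (U y * k (x - y - q))) := by
        refine lintegral_congr fun y => ?_
        rw [← mul_assoc, ← lintegral_const_mul _ (by fun_prop)]
        refine lintegral_congr fun q => ?_
        ring
    _ = ∫⁻ q, ∫⁻ y, c * (R q * (U y * k (x - y - q))) :=
        lintegral_lintegral_swap (by fun_prop)
    _ = _ := by
        rw [← lintegral_const_mul _ (by fun_prop)]
        refine lintegral_congr fun q => ?_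
        rw [lintegral_const_mul _ (by fun_prop), lintegral_const_mul _ (by fun_prop)]
        congr 2
        rw [← lintegral_sub_right_eq_self _ q]
        refine lintegral_congr fun y => ?_
        congr 2
        abel

theorem tonelli2 {d : ℕ} {F U R k : EuclideanSpace ℝ (Fin d) → ENNReal} (hF : Measurable F) (hU : Measurable U) (hR : Measurable R) (hk : Measurable k) (c : ENNReal) :
    ∫⁻ x, F x * (c * ∫⁻ q, R q * ∫⁻ y, U (y - q) * k (x - y)) = c * ∫⁻ q, R q * ∫⁻ x, ∫⁻ y, F x * U (y - q) * k (x - y) := by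
  calc _ = ∫⁻ x, ∫⁻ q, c * (R q * ∫⁻ y, F x * U (y - q) * k (x - y)) := by
        refine lintegral_congr fun x => ?_
        rw [← mul_assoc, ← lintegral_const_mul _ (by fun_prop)]
        refine lintegral_congr fun q => ?_
        simp_rw [mul_assoc]
        rw [lintegral_const_mul _ (by fun_prop)]
        ring
    _ = ∫⁻ q, ∫⁻ x, c * (R q * ∫⁻ y, F x * U (y - q) * k (x - y)) := by
        refine lintegral_lintegral_swap (Measurable.aemeasurable ?_)
        fun_prop
    _ = _ := by
        rw [← lintegral_const_mul _ (by fun_prop)]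
        refine lintegral_congr fun q => ?_
        rw [lintegral_const_mul _ (by fun_prop), lintegral_const_mul _ (by fun_prop)]

theorem hls_apply {d : ℕ} (hd : 3 ≤ d) {lam : ℝ} (h0 : 0 < lam) (hlam : lam < (d:ℝ) - 2) :
    ∃ C : ℝ, 0 ≤ C ∧ ∀ ρ : EuclideanSpace ℝ (Fin d) → ℝ, ContDiff ℝ (⊤ : ℕ∞) ρ → HasCompactSupport ρ → (∀ x, 0 ≤ ρ x) → ∫ x, ρ x = 1 →
      ∀ u : EuclideanSpace ℝ (Fin d) → ℝ, Continuous u → Integrable u → (∀ x, 0 ≤ u x) → ∀ X, 0 < X →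
      ∫⁻ x, ENNReal.ofReal (u x ^ ((d:ℝ) / (d - lam))) ≤ ENNReal.ofReal (X ^ ((d:ℝ) / (d - lam))) →
      ∀ v : EuclideanSpace ℝ (Fin d) → ℝ, ContDiff ℝ 1 v → HasCompactSupport v →
      ∫ x, v x ^ 2 * |cv lam u (lapl ρ) x| ≤ C * X * ∫ x, ∑ i, (pd i v x) ^ 2 := by
  have hd3 : (3:ℝ) ≤ d := by exact_mod_cast hd
  have hd1 : 1 ≤ d := by omega
  obtain ⟨S, hS0, hS⟩ := sobolev hd
  obtain ⟨C, hC0, hC⟩ := hls (d := d) (by omega) (a := lam + 2) (r := (d:ℝ)/(d-2)) (r' := (d:ℝ)/2) (s := (d:ℝ)/(d-lam)) (s' := (d:ℝ)/lam)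
    (by linarith) (by linarith)
    (Real.holderConjugate_iff.2 ⟨by rw [one_lt_div] <;> linarith, by
      have : (d:ℝ) - 2 ≠ 0 := by linarith
      field_simp; ring⟩)
    (by nlinarith)
    (Real.holderConjugate_iff.2 ⟨by rw [one_lt_div] <;> linarith, by
      have : (d:ℝ) - lam ≠ 0 := by linarith
      field_simp; ring⟩)
    (by
      have : (lam + 2) * (d / lam) = d + 2 * d / lam := by field_simp
      rw [this]
      have : 0 < 2 * d / lam := by positivity
      linarith)
    (by
      have : (d:ℝ) - lam ≠ 0 := by linarith
      have : (d:ℝ) - 2 ≠ 0 := by linarith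
      field_simp; ring)
  refine ⟨lam * (d + lam + 2) * C * S, by positivity, ?_⟩
  intro ρ hρ hρs hρ0 hρ1 u huc hui hu0 X hX huX v hv hvs
  set c := lam * (d + lam + 2) with hc
  have hc0 : 0 ≤ c := by positivity
  set G := ∫ x, ∑ i, (pd i v x) ^ 2 with hGdef
  have hG0 : 0 ≤ G := integral_nonneg fun x => Finset.sum_nonneg fun i _ => sq_nonneg _
  set k : EuclideanSpace ℝ (Fin d) → ENNReal := fun z => ENNReal.ofReal (‖z‖ ^ (-(lam+2))) with hk
  have hkm : Measurable k := meas_kernel _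
  have hum : Measurable (fun x => ENNReal.ofReal (u x)) := huc.measurable.ennreal_ofReal
  have hρm : Measurable (fun x => ENNReal.ofReal (ρ x)) := hρ.continuous.measurable.ennreal_ofReal
  have hvm : Measurable (fun x => ENNReal.ofReal (v x ^ 2)) := (hv.continuous.measurable.pow_const 2).ennreal_ofReal
  have p1 : ∀ x, ENNReal.ofReal |cv lam u (lapl ρ) x| ≤ ENNReal.ofReal c * ∫⁻ q, ENNReal.ofReal (ρ q) * ∫⁻ y, ENNReal.ofReal (u (y - q)) * k (x - y) := by
    intro x
    have a1 : ENNReal.ofReal |cv lam u (lapl ρ) x| ≤ ∫⁻ y, ENNReal.ofReal (u y) * ENNReal.ofReal |riesz lam (lapl ρ) (x - y)| := by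
      unfold cv
      rw [← Real.norm_eq_abs, ofReal_norm]
      refine (enorm_integral_le_lintegral_enorm _).trans (le_of_eq (lintegral_congr fun y => ?_))
      rw [← ofReal_norm, norm_mul, Real.norm_of_nonneg (hu0 y), Real.norm_eq_abs, ENNReal.ofReal_mul (hu0 y)]
    have a2 : ∀ z, ENNReal.ofReal |riesz lam (lapl ρ) z| ≤ ENNReal.ofReal c * ∫⁻ q, ENNReal.ofReal (ρ q) * k (z - q) := by
      intro z
      refine (ENNReal.ofReal_le_ofReal (riesz_lapl_bound hd1 h0 (by linarith) hρ hρs hρ0 z)).trans ?_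
      rw [ENNReal.ofReal_mul hc0, ofReal_integral_eq_lintegral_ofReal (riesz_integrable hd1 (by linarith) hρ.continuous hρs z) (Filter.Eventually.of_forall fun y => mul_nonneg (hρ0 _) (by positivity))]
      rw [← lintegral_sub_left_eq_self _ z]
      gcongr with y
      rw [ENNReal.ofReal_mul (hρ0 _)]
      simp [hk]
    calc _ ≤ _ := a1
      _ ≤ ∫⁻ y, ENNReal.ofReal (u y) * (ENNReal.ofReal c * ∫⁻ q, ENNReal.ofReal (ρ q) * k (x - y - q)) := by
        gcongr with y; exact a2 _
      _ = _ := tonelli1 (U := fun y => ENNReal.ofReal (u y)) (R := fun y => ENNReal.ofReal (ρ y)) hum hρm hkm _ x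
  have p2 : ∀ A, 0 < A → S * G ≤ A → ∫⁻ x, ENNReal.ofReal (v x ^ 2) * ENNReal.ofReal |cv lam u (lapl ρ) x| ≤ ENNReal.ofReal (c * (C * A * X)) := by
    intro A hA hSA
    calc _ ≤ ∫⁻ x, ENNReal.ofReal (v x ^ 2) * (ENNReal.ofReal c * ∫⁻ q, ENNReal.ofReal (ρ q) * ∫⁻ y, ENNReal.ofReal (u (y - q)) * k (x - y)) := by
          gcongr with x; exact p1 x
      _ = ENNReal.ofReal c * ∫⁻ q, (ENNReal.ofReal (ρ q) * ∫⁻ x, ∫⁻ y, ENNReal.ofReal (v x ^ 2) * ENNReal.ofReal (u (y - q)) * k (x - y)) :=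
          tonelli2 (F := fun x => ENNReal.ofReal (v x ^ 2)) (U := fun y => ENNReal.ofReal (u y)) (R := fun y => ENNReal.ofReal (ρ y)) hvm hum hρm hkm _
      _ ≤ ENNReal.ofReal c * ∫⁻ q, (ENNReal.ofReal (ρ q) * ENNReal.ofReal (C * A * X)) := by
          gcongr with q
          refine hC (fun x => v x ^ 2) (fun y => u (y - q)) (hv.continuous.measurable.pow_const 2) (fun y => sq_nonneg _)
            (by fun_prop) (fun y => hu0 _) A X hA hX ?_ ?_
          · refine (hS v hv hvs).trans (ENNReal.ofReal_le_ofReal ?_)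
            apply Real.rpow_le_rpow (by positivity) hSA (div_nonneg (by linarith) (by linarith))
          · rw [lintegral_sub_right_eq_self (fun y => ENNReal.ofReal (u y ^ ((d:ℝ)/(d-lam)))) q]
            exact huX
      _ = _ := by
          rw [lintegral_mul_const _ hρm, ← ofReal_integral_eq_lintegral_ofReal (hρ.continuous.integrable_of_hasCompactSupport hρs) (Filter.Eventually.of_forall hρ0), hρ1]
          rw [ENNReal.ofReal_mul hc0]; simp
  have p3 : ∀ A, 0 < A → S * G ≤ A → ∫ x, v x ^ 2 * |cv lam u (lapl ρ) x| ≤ c * (C * A * X) := by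
    intro A hA hSA
    have hcont := (cv_differentiable hd1 h0 (by linarith) hui (lapl_smooth hρ) (lapl_supp hρs)).continuous
    rw [integral_eq_lintegral_of_nonneg_ae (f := fun x => v x ^ 2 * |cv lam u (lapl ρ) x|) (Filter.Eventually.of_forall fun x => by positivity) (by exact ((hv.continuous.pow 2).mul hcont.abs).aestronglyMeasurable)]
    refine ENNReal.toReal_le_of_le_ofReal (by positivity) ?_
    refine le_trans (le_of_eq (lintegral_congr fun x => ?_)) (p2 A hA hSA)
    rw [ENNReal.ofReal_mul (sq_nonneg _)]
  refine le_of_forall_pos_le_add fun e he => ?_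
  have hden : 0 < c * C * X + 1 := by positivity
  have := p3 (S * G + e / (c * C * X + 1)) (by positivity) (by
    have : 0 < e / (c * C * X + 1) := by positivity
    linarith)
  refine this.trans ?_
  have h5 : c * C * X * (e / (c * C * X + 1)) ≤ e := by
    rw [mul_div_assoc', div_le_iff₀ hden]; nlinarith
  nlinarith

theorem integral_pd_zero {d : ℕ} {Q : EuclideanSpace ℝ (Fin d) → ℝ} (i : Fin d) (hQ : Differentiable ℝ Q)
    (hs : HasCompactSupport Q) (hc : Continuous (pd i Q)) : ∫ x, pd i Q x = 0 := by
  have := integral_mul_fderiv_eq_neg_fderiv_mul_of_integrable (μ := volume) (f := fun _ : EuclideanSpace ℝ (Fin d) => (1:ℝ)) (g := Q) (v := EuclideanSpace.single i 1)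
    (by simp) 
    (by simp only [one_mul]; exact hc.integrable_of_hasCompactSupport (pd_supp i hs))
    (by simpa using hQ.continuous.integrable_of_hasCompactSupport hs)
    (fun x _ => by fun_prop) (fun x _ => hQ x)
  simpa [pd] using this

theorem hasFDerivAt_pd {d : ℕ} {f : EuclideanSpace ℝ (Fin d) → ℝ} {x : EuclideanSpace ℝ (Fin d)} (h : DifferentiableAt ℝ f x) :
    ∃ L : EuclideanSpace ℝ (Fin d) →L[ℝ] ℝ, HasFDerivAt f L x ∧ ∀ i, L (EuclideanSpace.single i 1) = pd i f x :=
  ⟨fderiv ℝ f x, h.hasFDerivAt, fun _ => rfl⟩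

theorem energy_identity {d : ℕ} {φ u : EuclideanSpace ℝ (Fin d) → ℝ} (hφ : ContDiff ℝ (⊤ : ℕ∞) φ) (hφs : HasCompactSupport φ)
    (hu : ContDiff ℝ (⊤ : ℕ∞) u) (hu0 : ∀ x, 0 ≤ u x) {β β1 β2 : ℝ → ℝ}
    (h1 : ∀ y, 0 ≤ y → HasDerivAt β (β1 y) y) (h2 : ∀ y, 0 ≤ y → HasDerivAt β1 (β2 y) y) (hc : ContinuousOn β2 (Ici 0))
    {b : Fin d → EuclideanSpace ℝ (Fin d) → ℝ} (hb : ∀ i, Differentiable ℝ (b i)) (hbc : ∀ i, Continuous (pd i (b i))) (σ κ : ℝ) :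
    Integrable (fun x => (- σ * (φ x * β2 (u x) * ∑ i, (pd i u x) ^ 2) + σ * (lapl φ x * β (u x)) + κ * (β (u x) * ∑ i, pd i φ x * b i x)
      + κ * (φ x * (β (u x) - β1 (u x) * u x) * ∑ i, pd i (b i) x))) ∧
    ∫ x, φ x * β1 (u x) * (σ * lapl u x - κ * ∑ i, pd i (fun z => u z * b i z) x) =
    ∫ x, (- σ * (φ x * β2 (u x) * ∑ i, (pd i u x) ^ 2) + σ * (lapl φ x * β (u x)) + κ * (β (u x) * ∑ i, pd i φ x * b i x)
      + κ * (φ x * (β (u x) - β1 (u x) * u x) * ∑ i, pd i (b i) x)) := by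
  have dφ := hφ.differentiable (by simp)
  have du := hu.differentiable (by simp)
  have dφ' := fun i => (pd_smooth i hφ).differentiable (by simp)
  have du' := fun i => (pd_smooth i hu).differentiable (by simp)
  have cβ : Continuous (fun x => β (u x)) := continuous_iff_continuousAt.2 fun x => (h1 _ (hu0 x)).continuousAt.comp hu.continuous.continuousAt
  have cβ1 : Continuous (fun x => β1 (u x)) := continuous_iff_continuousAt.2 fun x => (h2 _ (hu0 x)).continuousAt.comp hu.continuous.continuousAt
  have cβ2 : Continuous (fun x => β2 (u x)) := hc.comp_continuous hu.continuous hu0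
  have cφ := hφ.continuous
  have cu := hu.continuous
  have cφ1 := fun i => (pd_smooth i hφ).continuous
  have cu1 := fun i => (pd_smooth i hu).continuous
  have cφ2 := fun i => (pd_smooth i (pd_smooth i hφ)).continuous
  have cu2 := fun i => (pd_smooth i (pd_smooth i hu)).continuous
  have cb := fun i => (hb i).continuous
  have cL := (lapl_smooth hφ).continuous
  have dβ : Differentiable ℝ (fun x => β (u x)) := fun x => (h1 _ (hu0 x)).differentiableAt.comp x (du x)
  have dβ1 : Differentiable ℝ (fun x => β1 (u x)) := fun x => (h2 _ (hu0 x)).differentiableAt.comp x (du x)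
  have pβ : ∀ i x, pd i (fun x => β (u x)) x = β1 (u x) * pd i u x := by
    intro i x
    have := (h1 _ (hu0 x)).comp_hasFDerivAt x (du x).hasFDerivAt
    rw [Function.comp_def] at this
    rw [pd_eq this]; simp [pd]
  have pβ1 : ∀ i x, pd i (fun x => β1 (u x)) x = β2 (u x) * pd i u x := by
    intro i x
    have := (h2 _ (hu0 x)).comp_hasFDerivAt x (du x).hasFDerivAt
    rw [Function.comp_def] at this
    rw [pd_eq this]; simp [pd]
  have pmul : ∀ (f g : EuclideanSpace ℝ (Fin d) → ℝ) i x, Differentiable ℝ f → Differentiable ℝ g → pd i (fun x => f x * g x) x = f x * pd i g x + g x * pd i f x := by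
    intro f g i x hf hg
    rw [pd_eq ((hf x).hasFDerivAt.fun_mul (hg x).hasFDerivAt)]; simp [pd]
  set Q : Fin d → EuclideanSpace ℝ (Fin d) → ℝ := fun i x => φ x * (σ * (β1 (u x) * pd i u x) - κ * (β (u x) * b i x)) - σ * (pd i φ x * β (u x)) with hQ
  have dQ : ∀ i, Differentiable ℝ (Q i) := by
    intro i
    exact (dφ.mul (((dβ1.mul (du' i)).const_mul σ).sub ((dβ.mul (hb i)).const_mul κ))).sub (((dφ' i).mul dβ).const_mul σ)
  have pQ : ∀ i x, pd i (Q i) x = φ x * (σ * (β1 (u x) * pd i (pd i u) x + pd i u x * (β2 (u x) * pd i u x)) - κ * (β (u x) * pd i (b i) x + b i x * (β1 (u x) * pd i u x)))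
      + (σ * (β1 (u x) * pd i u x) - κ * (β (u x) * b i x)) * pd i φ x - σ * (pd i φ x * (β1 (u x) * pd i u x) + β (u x) * pd i (pd i φ) x) := by
    intro i x
    have a1 := (((dβ1 x).hasFDerivAt.fun_mul (du' i x).hasFDerivAt).const_mul σ).fun_sub (((dβ x).hasFDerivAt.fun_mul (hb i x).hasFDerivAt).const_mul κ)
    have a2 := ((dφ x).hasFDerivAt.fun_mul a1).fun_sub (((dφ' i x).hasFDerivAt.fun_mul (dβ x).hasFDerivAt).const_mul σ)
    have e1 := pβ i x
    have e2 := pβ1 i x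
    simp only [hQ]
    rw [pd_eq a2]
    simp only [pd] at e1 e2 ⊢
    simp [e1, e2]
    ring
  have sQ : ∀ i, HasCompactSupport (Q i) := by
    intro i
    exact (hφs.mul_right).sub (((pd_supp i hφs).mul_right).mul_left)
  have cQ : ∀ i, Continuous (pd i (Q i)) := by
    intro i
    have e : pd i (Q i) = fun x => _ := funext (pQ i)
    rw [e]
    refine Continuous.sub (Continuous.add (cφ.mul ((continuous_const.mul ?_).sub (continuous_const.mul ?_))) (Continuous.mul ?_ (cφ1 i))) (continuous_const.mul ?_)
    · exact (cβ1.mul (cu2 i)).add ((cu1 i).mul (cβ2.mul (cu1 i)))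
    · exact (cβ.mul (hbc i)).add ((cb i).mul (cβ1.mul (cu1 i)))
    · exact (continuous_const.mul (cβ1.mul (cu1 i))).sub (continuous_const.mul (cβ.mul (cb i)))
    · exact ((cφ1 i).mul (cβ1.mul (cu1 i))).add (cβ.mul (cφ2 i))
  have key : ∀ x, φ x * β1 (u x) * (σ * lapl u x - κ * ∑ i, pd i (fun z => u z * b i z) x) =
     (- σ * (φ x * β2 (u x) * ∑ i, (pd i u x) ^ 2) + σ * (lapl φ x * β (u x)) + κ * (β (u x) * ∑ i, pd i φ x * b i x)
      + κ * (φ x * (β (u x) - β1 (u x) * u x) * ∑ i, pd i (b i) x)) + ∑ i, pd i (Q i) x := by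
    intro x
    simp_rw [pQ, lapl_eq, fun i => pmul u (b i) i x du (hb i)]
    simp only [Finset.mul_sum, Finset.sum_mul, ← Finset.sum_add_distrib, ← Finset.sum_sub_distrib]
    refine Finset.sum_congr rfl fun i _ => ?_
    ring
  have hI : Integrable (fun x => (- σ * (φ x * β2 (u x) * ∑ i, (pd i u x) ^ 2) + σ * (lapl φ x * β (u x)) + κ * (β (u x) * ∑ i, pd i φ x * b i x)
      + κ * (φ x * (β (u x) - β1 (u x) * u x) * ∑ i, pd i (b i) x))) := by
    refine Continuous.integrable_of_hasCompactSupport ?_ ?_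
    · refine Continuous.add (Continuous.add (Continuous.add (continuous_const.mul ?_) (continuous_const.mul ?_)) (continuous_const.mul ?_)) (continuous_const.mul ?_)
      · exact (cφ.mul cβ2).mul (continuous_finsetSum _ fun i _ => (cu1 i).pow 2)
      · exact cL.mul cβ
      · exact cβ.mul (continuous_finsetSum _ fun i _ => (cφ1 i).mul (cb i))
      · exact (cφ.mul (cβ.sub (cβ1.mul cu))).mul (continuous_finsetSum _ fun i _ => hbc i)
    · refine HasCompactSupport.add (HasCompactSupport.add (HasCompactSupport.add ?_ ?_) ?_) ?_
      · exact ((hφs.mul_right).mul_right).mul_left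
      · exact ((lapl_supp hφs).mul_right).mul_left
      · refine HasCompactSupport.mul_left (HasCompactSupport.mul_left ?_)
        refine HasCompactSupport.of_support_subset_isCompact hφs fun x hx => ?_
        by_contra hn
        apply hx
        refine Finset.sum_eq_zero fun i _ => ?_
        have h1 : tsupport (pd i φ) ⊆ tsupport φ := tsupport_fderiv_apply_subset ℝ _
        rw [image_eq_zero_of_notMem_tsupport fun h => hn (h1 h), zero_mul]
      · exact ((hφs.mul_right).mul_right).mul_left
  refine ⟨hI, ?_⟩
  simp_rw [key]
  rw [integral_add]
  · rw [integral_finsetSum _ fun i _ => (cQ i).integrable_of_hasCompactSupport (pd_supp i (sQ i))]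
    simp [integral_pd_zero _ (dQ _) (sQ _) (cQ _)]
  · exact hI
  · exact integrable_finsetSum _ fun i _ => (cQ i).integrable_of_hasCompactSupport (pd_supp i (sQ i))

theorem time_deriv {d : ℕ} {T : ℝ} (hT : 0 < T) {w : ℝ → EuclideanSpace ℝ (Fin d) → ℝ}
    (hsm : ContDiffOn ℝ (⊤ : ℕ∞) (fun p : ℝ × EuclideanSpace ℝ (Fin d) => w p.1 p.2) (Icc 0 T ×ˢ univ))
    (hw0 : ∀ t ∈ Icc (0:ℝ) T, ∀ x, 0 ≤ w t x) {R : ℝ → EuclideanSpace ℝ (Fin d) → ℝ}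
    (hR : ∀ t ∈ Icc (0:ℝ) T, ∀ x, HasDerivWithinAt (fun s => w s x) (R t x) (Icc 0 T) t)
    {φ : EuclideanSpace ℝ (Fin d) → ℝ} (hφ : Continuous φ) (hφs : HasCompactSupport φ) {β β1 : ℝ → ℝ}
    (h1 : ∀ y, 0 ≤ y → HasDerivAt β (β1 y) y) (hc : ContinuousOn β1 (Ici 0)) :
    ContinuousOn (fun t => ∫ x, φ x * β (w t x)) (Icc 0 T) ∧
    ∀ t ∈ Ioo (0:ℝ) T, HasDerivAt (fun t => ∫ x, φ x * β (w t x)) (∫ x, φ x * β1 (w t x) * R t x) t := by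
  have hβc : ContinuousOn β (Ici 0) := fun y hy => (h1 y hy).continuousAt.continuousWithinAt
  have hwc := hsm.continuousOn
  have hmaps : MapsTo (fun p : ℝ × EuclideanSpace ℝ (Fin d) => w p.1 p.2) (Icc 0 T ×ˢ univ) (Ici 0) := fun p hp => hw0 _ hp.1 _
  have hud : UniqueDiffOn ℝ (Icc 0 T ×ˢ (univ : Set (EuclideanSpace ℝ (Fin d)))) := (uniqueDiffOn_Icc hT).prod uniqueDiffOn_univ
  have hRe : ∀ t ∈ Icc (0:ℝ) T, ∀ x, R t x = fderivWithin ℝ (fun p : ℝ × EuclideanSpace ℝ (Fin d) => w p.1 p.2) (Icc 0 T ×ˢ univ) (t, x) (1, 0) := by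
    intro t ht x
    have a1 := (hsm.differentiableOn (by simp) (t, x) ⟨ht, mem_univ _⟩).hasFDerivWithinAt
    have a2 : HasDerivWithinAt (fun s : ℝ => (s, x)) ((1:ℝ), (0 : EuclideanSpace ℝ (Fin d))) (Icc 0 T) t :=
      (hasDerivWithinAt_id t _).prodMk (hasDerivWithinAt_const t _ x)
    have hm : MapsTo (fun s : ℝ => (s, x)) (Icc 0 T) (Icc 0 T ×ˢ univ) := fun s hs => ⟨hs, mem_univ _⟩
    have a3 := a1.comp_hasDerivWithinAt t a2 hm
    have a4 := (hR t ht x).derivWithin (uniqueDiffOn_Icc hT t ht)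
    rw [← a4]
    exact a3.derivWithin (uniqueDiffOn_Icc hT t ht)
  have hRc : ContinuousOn (fun p : ℝ × EuclideanSpace ℝ (Fin d) => R p.1 p.2) (Icc 0 T ×ˢ univ) := by
    have := (hsm.continuousOn_fderivWithin hud (by simp)).clm_apply (continuousOn_const (c := ((1:ℝ), (0 : EuclideanSpace ℝ (Fin d)))))
    refine this.congr fun p hp => hRe _ hp.1 _
  have hN : ContinuousOn (fun p : ℝ × EuclideanSpace ℝ (Fin d) => β1 (w p.1 p.2) * R p.1 p.2) (Icc 0 T ×ˢ univ) :=
    (hc.comp hwc hmaps).mul hRc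
  have hB : ContinuousOn (fun p : ℝ × EuclideanSpace ℝ (Fin d) => φ p.2 * β (w p.1 p.2)) (Icc 0 T ×ˢ univ) :=
    (hφ.comp continuous_snd).continuousOn.mul (hβc.comp hwc hmaps)
  have slice : ∀ t ∈ Icc (0:ℝ) T, ∀ f : ℝ × EuclideanSpace ℝ (Fin d) → ℝ, ContinuousOn f (Icc 0 T ×ˢ univ) → Continuous (fun x => f (t, x)) := by
    intro t ht f hf
    exact hf.comp_continuous (by fun_prop) fun x => ⟨ht, mem_univ _⟩
  refine ⟨?_, ?_⟩
  · refine continuousOn_integral_of_compact_support hφs (f := fun t x => φ x * β (w t x)) hB ?_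
    intro t x _ hx
    rw [image_eq_zero_of_notMem_tsupport hx, zero_mul]
  · intro t ht
    obtain ⟨M, hM⟩ := (isCompact_Icc.prod hφs).exists_bound_of_continuousOn (hN.mono (prod_mono_right (subset_univ _)))
    have hnb : Icc 0 T ∈ nhds t := Icc_mem_nhds ht.1 ht.2
    have htI := Ioo_subset_Icc_self ht
    refine (hasDerivAt_integral_of_dominated_loc_of_deriv_le (s := Ioo 0 T) (bound := fun x => |φ x| * M)
      (F := fun t x => φ x * β (w t x)) (F' := fun t x => φ x * β1 (w t x) * R t x) (Ioo_mem_nhds ht.1 ht.2) ?_ ?_ ?_ ?_ ?_ ?_).2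
    · filter_upwards [hnb] with s hs
      exact (slice s hs _ hB).aestronglyMeasurable
    · exact (slice t htI _ hB).integrable_of_hasCompactSupport (hφs.mul_right)
    · simp_rw [mul_assoc]
      exact (hφ.mul (slice t htI _ hN)).aestronglyMeasurable
    · refine Filter.Eventually.of_forall fun x s hs => ?_
      rw [mul_assoc, norm_mul, Real.norm_eq_abs]
      by_cases hx : x ∈ tsupport φ
      · exact mul_le_mul_of_nonneg_left (hM (s, x) ⟨Ioo_subset_Icc_self hs, hx⟩) (abs_nonneg _)
      · simp [image_eq_zero_of_notMem_tsupport hx]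
    · exact ((hφ.integrable_of_hasCompactSupport hφs).abs).mul_const M
    · refine Filter.Eventually.of_forall fun x s hs => ?_
      have a1 := (hR s (Ioo_subset_Icc_self hs) x).hasDerivAt (Icc_mem_nhds hs.1 hs.2)
      have a2 := (h1 _ (hw0 s (Ioo_subset_Icc_self hs) x)).comp s a1
      simpa [mul_assoc] using a2.const_mul (φ x)

theorem beta_family {q : ℝ} (hq : 0 < q) : ∃ β β1 β2 m m1 : ℝ → ℝ → ℝ, ∃ K : ℝ → ℝ,
    (∀ ε, 0 < ε → ε ≤ 1 → 0 ≤ K ε ∧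
      (∀ y, 0 ≤ y → HasDerivAt (β ε) (β1 ε y) y ∧ HasDerivAt (β1 ε) (β2 ε y) y ∧ HasDerivAt (m ε) (m1 ε y) y ∧
        0 ≤ β ε y ∧ β ε y ≤ K ε * y ∧ β ε y ≤ y * (y + 1) ^ q ∧ 0 ≤ β2 ε y ∧ β1 ε y * y - β ε y = (m ε y) ^ 2 ∧
        (m ε y) ^ 2 ≤ q * β ε y ∧ (m1 ε y) ^ 2 ≤ (2 + q) / 4 * β2 ε y) ∧
      ContinuousOn (β2 ε) (Ici 0) ∧ ContinuousOn (m1 ε) (Ici 0)) ∧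
    ∀ y, 0 ≤ y → Filter.Tendsto (fun n : ℕ => β (1 / ((n:ℝ) + 1)) y) Filter.atTop (nhds (y ^ (1 + q))) := by
  set h : ℝ → ℝ → ℝ := fun ε y => (y + ε) / (1 + ε * (y + ε)) with hh
  set th : ℝ → ℝ → ℝ := fun ε y => (h ε y) ^ q with hth
  set g : ℝ → ℝ → ℝ := fun ε y => 1 / ((y + ε) * (1 + ε * (y + ε))) with hg
  set B : ℝ → ℝ → ℝ := fun ε y => 2 + y * g ε y * (q - 1 - 2 * ε * (y + ε)) with hB
  set k : ℝ → ℝ → ℝ := fun ε y => Real.sqrt (q * th ε y * g ε y) with hk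
  refine ⟨fun ε y => y * th ε y, fun ε y => th ε y * (1 + q * y * g ε y), fun ε y => q * th ε y * g ε y * B ε y,
    fun ε y => y * k ε y, fun ε y => k ε y * B ε y / 2, fun ε => (ε⁻¹) ^ q, ?_, ?_⟩
  · intro ε hε hε1
    have hWp : ∀ y, 0 ≤ y → 0 < y + ε := fun y hy => by linarith
    have hVp : ∀ y, 0 ≤ y → 0 < 1 + ε * (y + ε) := fun y hy => by have := hWp y hy; positivity
    have hhp : ∀ y, 0 ≤ y → 0 < h ε y := fun y hy => div_pos (hWp y hy) (hVp y hy)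
    have hthp : ∀ y, 0 ≤ y → 0 < th ε y := fun y hy => Real.rpow_pos_of_pos (hhp y hy) _
    have hgp : ∀ y, 0 ≤ y → 0 < g ε y := fun y hy => one_div_pos.2 (mul_pos (hWp y hy) (hVp y hy))
    have hsp : ∀ y, 0 ≤ y → 0 < q * th ε y * g ε y := fun y hy => by
      have := hthp y hy
      have := hgp y hy
      positivity
    have hk2 : ∀ y, 0 ≤ y → k ε y ^ 2 = q * th ε y * g ε y := fun y hy => Real.sq_sqrt (hsp y hy).le
    have hkp : ∀ y, 0 ≤ y → 0 < k ε y := fun y hy => Real.sqrt_pos.2 (hsp y hy)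
    have dh : ∀ y, 0 ≤ y → HasDerivAt (h ε) (h ε y * g ε y) y := by
      intro y hy
      have hW := (hWp y hy).ne'
      have hV := (hVp y hy).ne'
      have d1 : HasDerivAt (fun y => y + ε) 1 y := (hasDerivAt_id y).add_const ε
      have d2 : HasDerivAt (fun y => 1 + ε * (y + ε)) (ε * 1) y := (d1.const_mul ε).const_add 1
      refine (d1.fun_div d2 hV).congr_deriv ?_
      simp only [hh, hg]
      field_simp
      ring
    have dg : ∀ y, 0 ≤ y → HasDerivAt (g ε) (-(1 + 2 * ε * (y + ε)) * g ε y ^ 2) y := by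
      intro y hy
      have hW := (hWp y hy).ne'
      have hV := (hVp y hy).ne'
      have d1 : HasDerivAt (fun y => y + ε) 1 y := (hasDerivAt_id y).add_const ε
      have d2 : HasDerivAt (fun y => 1 + ε * (y + ε)) (ε * 1) y := (d1.const_mul ε).const_add 1
      refine ((hasDerivAt_const y (1:ℝ)).fun_div (d1.fun_mul d2) (mul_ne_zero hW hV)).congr_deriv ?_
      simp only [hg]
      field_simp
      ring
    have dth : ∀ y, 0 ≤ y → HasDerivAt (th ε) (q * th ε y * g ε y) y := by
      intro y hy
      refine ((dh y hy).rpow_const (Or.inl (hhp y hy).ne')).congr_deriv ?_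
      have : h ε y * h ε y ^ (q - 1) = h ε y ^ q := by
        rw [mul_comm, ← Real.rpow_add_one (hhp y hy).ne']; congr 1; ring
      simp only [hth]
      rw [← this]; ring
    have dk : ∀ y, 0 ≤ y → HasDerivAt (k ε) (k ε y * g ε y * (q - 1 - 2 * ε * (y + ε)) / 2) y := by
      intro y hy
      refine ((((dth y hy).const_mul q).fun_mul (dg y hy)).sqrt (hsp y hy).ne').congr_deriv ?_
      have e := hk2 y hy
      have hkne := (hkp y hy).ne'
      change _ / (2 * k ε y) = _
      rw [div_eq_iff (by positivity)]
      have : k ε y * g ε y * (q - 1 - 2 * ε * (y + ε)) / 2 * (2 * k ε y) = k ε y ^ 2 * g ε y * (q - 1 - 2 * ε * (y + ε)) := by ring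
      rw [this, e]; ring
    have hyg : ∀ y, 0 ≤ y → y * g ε y * (1 + ε * (y + ε)) ≤ 1 := by
      intro y hy
      have hW := (hWp y hy)
      have hV := (hVp y hy)
      have : y * g ε y * (1 + ε * (y + ε)) = y / (y + ε) := by
        simp only [hg]; field_simp
      rw [this, div_le_one hW]; linarith
    have hyg0 : ∀ y, 0 ≤ y → 0 ≤ y * g ε y := fun y hy => mul_nonneg hy (hgp y hy).le
    have hyg1 : ∀ y, 0 ≤ y → y * g ε y ≤ 1 := by
      intro y hy
      have h1 := hyg y hy
      have h2 := hyg0 y hy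
      have h3 : 0 ≤ ε * (y + ε) := mul_nonneg hε.le (hWp y hy).le
      nlinarith
    have hB0 : ∀ y, 0 ≤ y → 0 ≤ B ε y := by
      intro y hy
      have h1 := hyg y hy
      have h2 := hyg0 y hy
      have h3 := hyg1 y hy
      have : B ε y = 2 + q * (y * g ε y) - 2 * (y * g ε y * (1 + ε * (y + ε))) + y * g ε y := by
        simp only [hB]; ring
      rw [this]; nlinarith
    have hB1 : ∀ y, 0 ≤ y → B ε y ≤ 2 + q := by
      intro y hy
      have h2 := hyg0 y hy
      have h3 := hyg1 y hy
      have h4 : 0 ≤ ε * (y + ε) := mul_nonneg hε.le (hWp y hy).le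
      have : B ε y = 2 + q * (y * g ε y) - y * g ε y - 2 * (y * g ε y * (ε * (y + ε))) := by
        simp only [hB]; ring
      rw [this]
      have : 0 ≤ y * g ε y * (ε * (y + ε)) := mul_nonneg h2 h4
      nlinarith
    have cth : ContinuousOn (th ε) (Ici 0) := fun y hy => (dth y hy).continuousAt.continuousWithinAt
    have cg : ContinuousOn (g ε) (Ici 0) := fun y hy => (dg y hy).continuousAt.continuousWithinAt
    have ck : ContinuousOn (k ε) (Ici 0) := fun y hy => (dk y hy).continuousAt.continuousWithinAt
    have cB : ContinuousOn (B ε) (Ici 0) := by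
      simp only [hB]
      exact continuousOn_const.add ((continuousOn_id.mul cg).mul (by fun_prop))
    refine ⟨by positivity, fun y hy => ⟨?_, ?_, ?_, ?_, ?_, ?_, ?_, ?_, ?_, ?_⟩, ?_, ?_⟩
    · refine ((hasDerivAt_id y).fun_mul (dth y hy)).congr_deriv ?_
      simp only [id]; ring
    · refine ((dth y hy).fun_mul ((((hasDerivAt_id y).const_mul q).fun_mul (dg y hy)).const_add 1)).congr_deriv ?_
      simp only [id, hB]; ring
    · refine ((hasDerivAt_id y).fun_mul (dk y hy)).congr_deriv ?_
      simp only [id, hB]; ring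
    · exact mul_nonneg hy (hthp y hy).le
    · refine (mul_le_mul_of_nonneg_left ?_ hy).trans (mul_comm _ _).le
      refine Real.rpow_le_rpow (hhp y hy).le ?_ hq.le
      simp only [hh]
      rw [div_le_iff₀ (hVp y hy)]
      have : ε⁻¹ * (1 + ε * (y + ε)) = ε⁻¹ + (y + ε) := by field_simp
      rw [this]
      have : 0 < ε⁻¹ := by positivity
      linarith
    · refine mul_le_mul_of_nonneg_left ?_ hy
      refine Real.rpow_le_rpow (hhp y hy).le ?_ hq.le
      simp only [hh]
      have h4 : 0 ≤ ε * (y + ε) := mul_nonneg hε.le (hWp y hy).le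
      rw [div_le_iff₀ (hVp y hy)]
      nlinarith
    · exact mul_nonneg (hsp y hy).le (hB0 y hy)
    · simp only [mul_pow, hk2 y hy]; ring
    · simp only [mul_pow, hk2 y hy]
      have := mul_le_mul_of_nonneg_left (hyg1 y hy) (by have := hthp y hy; positivity : 0 ≤ q * y * th ε y)
      linarith
    · have e : (k ε y * B ε y / 2) ^ 2 = k ε y ^ 2 * B ε y * (B ε y / 4) := by ring
      simp only [e, hk2 y hy]
      have := mul_le_mul_of_nonneg_left (hB1 y hy) (mul_nonneg (hsp y hy).le (hB0 y hy))
      linarith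
    · exact ((continuousOn_const.mul cth).mul cg).mul cB
    · exact (ck.mul cB).div_const 2
  · intro y hy
    have e : y ^ (1 + q) = y * ((y + 0) / (1 + 0 * (y + 0))) ^ q := by
      rw [add_zero, zero_mul, add_zero, div_one]
      rcases hy.eq_or_lt with rfl | hy'
      · rw [Real.zero_rpow (by positivity), zero_mul]
      · rw [Real.rpow_add hy', Real.rpow_one]
    rw [e]
    have t := tendsto_one_div_add_atTop_nhds_zero_nat (𝕜 := ℝ)
    refine Filter.Tendsto.const_mul _ (Filter.Tendsto.rpow_const ?_ (Or.inr hq.le))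
    exact (t.const_add y).div ((t.mul (t.const_add y)).const_add 1) (by simp)

theorem pd_scale {d : ℕ} {f : EuclideanSpace ℝ (Fin d) → ℝ} (hf : ContDiff ℝ (⊤ : ℕ∞) f) (c : ℝ) (i : Fin d) :
    pd i (fun x => f (c • x)) = fun x => c * pd i f (c • x) := by
  ext x
  have h1 : HasFDerivAt (fun x : EuclideanSpace ℝ (Fin d) => c • x) (c • ContinuousLinearMap.id ℝ (EuclideanSpace ℝ (Fin d))) x :=
    (hasFDerivAt_id x).const_smul c
  have h2 := (hf.differentiable (by simp) (c • x)).hasFDerivAt.comp x h1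
  rw [Function.comp_def] at h2
  rw [pd_eq h2]
  simp [pd]

theorem cutoff (d : ℕ) {e R : ℝ} (he : 0 < e) (hR : 0 < R) : ∃ ψ : EuclideanSpace ℝ (Fin d) → ℝ, ContDiff ℝ (⊤ : ℕ∞) ψ ∧ HasCompactSupport ψ ∧
    (∀ x, 0 ≤ ψ x ∧ ψ x ≤ 1) ∧ (∀ x, ‖x‖ ≤ R → ψ x = 1) ∧ (∀ i x, |pd i ψ x| ≤ e) ∧ (∀ i x, |pd i (pd i ψ) x| ≤ e) := by
  let f : ContDiffBump (0 : EuclideanSpace ℝ (Fin d)) := ⟨1, 2, by norm_num, by norm_num⟩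
  have hf : ContDiff ℝ (⊤ : ℕ∞) (f : EuclideanSpace ℝ (Fin d) → ℝ) := f.contDiff
  have hfs : HasCompactSupport (f : EuclideanSpace ℝ (Fin d) → ℝ) := f.hasCompactSupport
  choose M1 hM1 using fun i => (pd_supp i hfs).exists_bound_of_continuous (pd_smooth i hf).continuous
  choose M2 hM2 using fun i => (pd_supp i (pd_supp i hfs)).exists_bound_of_continuous (pd_smooth i (pd_smooth i hf)).continuous
  have p1 : ∀ i, 0 ≤ M1 i := fun i => (norm_nonneg _).trans (hM1 i 0)
  have p2 : ∀ i, 0 ≤ M2 i := fun i => (norm_nonneg _).trans (hM2 i 0)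
  set M := ∑ i, (M1 i + M2 i) with hM
  have hM0 : 0 ≤ M := Finset.sum_nonneg fun i _ => add_nonneg (p1 i) (p2 i)
  have hle : ∀ i, M1 i + M2 i ≤ M := fun i => Finset.single_le_sum (f := fun i => M1 i + M2 i) (fun i _ => add_nonneg (p1 i) (p2 i)) (Finset.mem_univ i)
  set c := min (min 1 R⁻¹) (e / (M + 1)) with hc
  have hc0 : 0 < c := lt_min (lt_min one_pos (by positivity)) (by positivity)
  have hc1 : c ≤ 1 := (min_le_left _ _).trans (min_le_left _ _)
  have hcR : c ≤ R⁻¹ := (min_le_left _ _).trans (min_le_right _ _)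
  have hce : c * M ≤ e := by
    have : c ≤ e / (M + 1) := min_le_right _ _
    rw [le_div_iff₀ (by positivity)] at this
    nlinarith
  have hpd := pd_scale hf c
  refine ⟨fun x => f (c • x), hf.comp (contDiff_const_smul c), ?_, fun x => ⟨f.nonneg, f.le_one⟩, ?_, ?_, ?_⟩
  · exact hfs.comp_homeomorph (Homeomorph.smulOfNeZero c hc0.ne')
  · intro x hx
    refine f.one_of_mem_closedBall ?_
    rw [mem_closedBall_zero_iff, norm_smul, Real.norm_of_nonneg hc0.le]
    change _ ≤ (1:ℝ)
    calc c * ‖x‖ ≤ R⁻¹ * R := by gcongr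
      _ = 1 := inv_mul_cancel₀ hR.ne'
  · intro i x
    rw [hpd, abs_mul, abs_of_pos hc0]
    have := hM1 i (c • x)
    rw [Real.norm_eq_abs] at this
    refine le_trans ?_ hce
    gcongr
    linarith [hle i, p2 i]
  · intro i x
    rw [hpd]
    have e2 : pd i (fun x => c * pd i (⇑f) (c • x)) x = c * pd i (fun x => pd i (⇑f) (c • x)) x := by
      have hdd : DifferentiableAt ℝ (fun x => pd i (⇑f) (c • x)) x :=
        ((pd_smooth i hf).comp (contDiff_const_smul c)).differentiable (by simp) x
      rw [pd_eq (hdd.hasFDerivAt.const_mul c)]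
      simp [pd]
    rw [e2, pd_scale (pd_smooth i hf) c i, abs_mul, abs_mul, abs_of_pos hc0]
    have := hM2 i (c • x)
    rw [Real.norm_eq_abs] at this
    refine le_trans ?_ hce
    gcongr
    calc c * |pd i (pd i ⇑f) (c • x)| ≤ 1 * |pd i (pd i ⇑f) (c • x)| := by gcongr
      _ ≤ M := by linarith [hle i, p1 i]

theorem cutoff_sq {d : ℕ} {e : ℝ} (he : 0 < e) (he1 : e ≤ 1) {ψ : EuclideanSpace ℝ (Fin d) → ℝ} (hψ : ContDiff ℝ (⊤ : ℕ∞) ψ)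
    (h01 : ∀ x, 0 ≤ ψ x ∧ ψ x ≤ 1) (h1 : ∀ i x, |pd i ψ x| ≤ e) (h2 : ∀ i x, |pd i (pd i ψ) x| ≤ e) :
    (∀ i x, |pd i (fun x => ψ x ^ 2) x| ≤ 2 * e) ∧ ∀ x, |lapl (fun x => ψ x ^ 2) x| ≤ 4 * d * e := by
  have dψ := hψ.differentiable (by simp)
  have e1 : ∀ i, pd i (fun x => ψ x ^ 2) = fun x => 2 * (ψ x * pd i ψ x) := by
    intro i; ext x
    have := (dψ x).hasFDerivAt.fun_mul (dψ x).hasFDerivAt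
    simp_rw [sq]
    rw [pd_eq this]; simp [pd]; ring
  have e2 : ∀ i x, pd i (pd i (fun x => ψ x ^ 2)) x = 2 * (ψ x * pd i (pd i ψ) x + pd i ψ x * pd i ψ x) := by
    intro i x
    rw [e1]
    rw [pd_eq (((dψ x).hasFDerivAt.fun_mul ((pd_smooth i hψ).differentiable (by simp) x).hasFDerivAt).const_mul 2)]
    simp [pd]
    ring
  refine ⟨fun i x => ?_, fun x => ?_⟩
  · rw [e1, abs_mul, abs_mul, abs_of_nonneg (h01 x).1]
    have := mul_le_mul (h01 x).2 (h1 i x) (abs_nonneg _) zero_le_one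
    norm_num at this ⊢; linarith
  · rw [lapl_eq]
    refine (Finset.abs_sum_le_sum_abs _ _).trans ?_
    have : ∀ i ∈ Finset.univ, |pd i (pd i (fun x => ψ x ^ 2)) x| ≤ 4 * e := by
      intro i _
      rw [e2, abs_mul]
      have a1 := mul_le_mul (h01 x).2 (h2 i x) (abs_nonneg _) zero_le_one
      have a2 := mul_le_mul (h1 i x) (h1 i x) (abs_nonneg _) he.le
      have a3 := abs_add_le (ψ x * pd i (pd i ψ) x) (pd i ψ x * pd i ψ x)
      rw [abs_mul, abs_mul, abs_of_nonneg (h01 x).1] at a3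
      norm_num
      nlinarith
    refine (Finset.sum_le_card_nsmul _ _ _ this).trans (le_of_eq ?_)
    simp; ring

/-- properties of the regularised power -/
def BetaOK (q K : ℝ) (β β1 β2 m m1 : ℝ → ℝ) : Prop := 0 ≤ K ∧
      (∀ y, 0 ≤ y → HasDerivAt β (β1 y) y ∧ HasDerivAt β1 (β2 y) y ∧ HasDerivAt m (m1 y) y ∧
        0 ≤ β y ∧ β y ≤ K * y ∧ β y ≤ y * (y + 1) ^ q ∧ 0 ≤ β2 y ∧ β1 y * y - β y = (m y) ^ 2 ∧
        (m y) ^ 2 ≤ q * β y ∧ (m1 y) ^ 2 ≤ (2 + q) / 4 * β2 y) ∧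
      ContinuousOn β2 (Ici 0) ∧ ContinuousOn m1 (Ici 0)

theorem energy_ineq {d : ℕ} {q K : ℝ} (hq : 0 < q) {β β1 β2 m m1 : ℝ → ℝ} (hβ : BetaOK q K β β1 β2 m m1)
    {e : ℝ} (he : 0 < e) (he1 : e ≤ 1) {ψ u : EuclideanSpace ℝ (Fin d) → ℝ} (hψ : ContDiff ℝ (⊤ : ℕ∞) ψ) (hψs : HasCompactSupport ψ)
    (h01 : ∀ x, 0 ≤ ψ x ∧ ψ x ≤ 1) (hp1 : ∀ i x, |pd i ψ x| ≤ e) (hp2 : ∀ i x, |pd i (pd i ψ) x| ≤ e)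
    (hu : ContDiff ℝ (⊤ : ℕ∞) u) (hu0 : ∀ x, 0 ≤ u x) (hui : Integrable u) (hu1 : ∫ x, u x = 1)
    {b : Fin d → EuclideanSpace ℝ (Fin d) → ℝ} (hb : ∀ i, Differentiable ℝ (b i)) (hbc : ∀ i, Continuous (pd i (b i)))
    {Bd L : ℝ} (hB : ∀ i x, |b i x| ≤ Bd) (hL : ∀ x, |∑ i, pd i (b i) x| ≤ L)
    {σ κ : ℝ} (hσ : 0 < σ) (hκ : |κ| = 1) :
    (∫ x, ψ x ^ 2 * β1 (u x) * (σ * lapl u x - κ * ∑ i, pd i (fun z => u z * b i z) x)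
      ≤ (σ * 4 * d + 2 * d * Bd) * K * e + q * L * ∫ x, ψ x ^ 2 * β (u x)) ∧
    ∀ Cx, 0 ≤ Cx → Cx * ((2 + q) / 2) ≤ σ →
      (∀ v : EuclideanSpace ℝ (Fin d) → ℝ, ContDiff ℝ 1 v → HasCompactSupport v →
      ∫ x, v x ^ 2 * |∑ i, pd i (b i) x| ≤ Cx * ∫ x, ∑ i, (pd i v x) ^ 2) →
    (∫ x, ψ x ^ 2 * β1 (u x) * (σ * lapl u x - κ * ∑ i, pd i (fun z => u z * b i z) x)
      ≤ (σ * 4 * d + 2 * d * Bd) * K * e + Cx * (2 * d * q) * K * e) := by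
  obtain ⟨hK, hβ, hc2, hcm⟩ := hβ
  obtain ⟨hφ1, hφ2⟩ := cutoff_sq he he1 hψ h01 hp1 hp2
  have hφ : ContDiff ℝ (⊤ : ℕ∞) (fun x => ψ x ^ 2) := hψ.pow 2
  have hφs : HasCompactSupport (fun x => ψ x ^ 2) := by simp_rw [sq]; exact hψs.mul_right
  obtain ⟨hI, hid⟩ := energy_identity hφ hφs hu hu0 (fun y hy => (hβ y hy).1) (fun y hy => (hβ y hy).2.1) hc2 hb hbc σ κ
  rw [hid]
  have du := hu.differentiable (by simp)
  have dψ := hψ.differentiable (by simp)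
  have cu := hu.continuous
  have cu1 := fun i => (pd_smooth i hu).continuous
  have cβ : Continuous (fun x => β (u x)) := continuous_iff_continuousAt.2 fun x => ContinuousAt.comp (g := β) (hβ _ (hu0 x)).1.continuousAt cu.continuousAt
  have cm : Continuous (fun x => m (u x)) := continuous_iff_continuousAt.2 fun x => ContinuousAt.comp (g := m) (hβ _ (hu0 x)).2.2.1.continuousAt cu.continuousAt
  have cβ2 : Continuous (fun x => β2 (u x)) := hc2.comp_continuous cu hu0
  have cm1 : Continuous (fun x => m1 (u x)) := hcm.comp_continuous cu hu0
  have cdv : Continuous (fun x => ∑ i, pd i (b i) x) := continuous_finsetSum _ fun i _ => hbc i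
  have cS : Continuous (fun x => ∑ i, pd i u x ^ 2) := continuous_finsetSum _ fun i _ => (cu1 i).pow 2
  have iβ : Integrable (fun x => β (u x)) := (hui.const_mul K).mono' cβ.aestronglyMeasurable (Filter.Eventually.of_forall fun x => by
    rw [Real.norm_of_nonneg (hβ _ (hu0 x)).2.2.2.1]; exact (hβ _ (hu0 x)).2.2.2.2.1)
  have iφβ : Integrable (fun x => ψ x ^ 2 * β (u x)) := (hφ.continuous.mul cβ).integrable_of_hasCompactSupport (hφs.mul_right)
  have iD : Integrable (fun x => ψ x ^ 2 * β2 (u x) * ∑ i, pd i u x ^ 2) :=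
    ((hφ.continuous.mul cβ2).mul cS).integrable_of_hasCompactSupport ((hφs.mul_right).mul_right)
  have iM : Integrable (fun x => ψ x ^ 2 * m (u x) ^ 2 * |∑ i, pd i (b i) x|) :=
    ((hφ.continuous.mul (cm.pow 2)).mul cdv.abs).integrable_of_hasCompactSupport ((hφs.mul_right).mul_right)
  have ibβ : ∫ x, β (u x) ≤ K := by
    calc _ ≤ ∫ x, K * u x := integral_mono iβ (hui.const_mul K) fun x => (hβ _ (hu0 x)).2.2.2.2.1
      _ = K := by rw [integral_const_mul, hu1, mul_one]
  set D := ∫ x, ψ x ^ 2 * β2 (u x) * ∑ i, pd i u x ^ 2 with hD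
  have hD0 : 0 ≤ D := integral_nonneg fun x => mul_nonneg (mul_nonneg (sq_nonneg _) (hβ _ (hu0 x)).2.2.2.2.2.2.1) (Finset.sum_nonneg fun i _ => sq_nonneg _)
  set Err := (σ * 4 * d + 2 * d * Bd) * K * e with hErr
  have main : ∫ x, (- σ * (ψ x ^ 2 * β2 (u x) * ∑ i, (pd i u x) ^ 2) + σ * (lapl (fun x => ψ x ^ 2) x * β (u x)) + κ * (β (u x) * ∑ i, pd i (fun x => ψ x ^ 2) x * b i x)
      + κ * (ψ x ^ 2 * (β (u x) - β1 (u x) * u x) * ∑ i, pd i (b i) x)) ≤ - σ * D + Err + ∫ x, ψ x ^ 2 * m (u x) ^ 2 * |∑ i, pd i (b i) x| := by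
    have e1 : - σ * D + Err + ∫ x, ψ x ^ 2 * m (u x) ^ 2 * |∑ i, pd i (b i) x| =
        ∫ x, (- σ * (ψ x ^ 2 * β2 (u x) * ∑ i, (pd i u x) ^ 2) + Err * u x + ψ x ^ 2 * m (u x) ^ 2 * |∑ i, pd i (b i) x|) := by
      have i12 : Integrable (fun x => - σ * (ψ x ^ 2 * β2 (u x) * ∑ i, (pd i u x) ^ 2) + Err * u x) := (iD.const_mul _).add (hui.const_mul _)
      rw [integral_add i12 iM, integral_add (iD.const_mul _) (hui.const_mul _), integral_const_mul, integral_const_mul, hu1, mul_one]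
    rw [e1]
    refine integral_mono hI (((iD.const_mul _).add (hui.const_mul _)).add iM) fun x => ?_
    simp only
    obtain ⟨-, -, -, b0, bK, -, b20, bP, -, -⟩ := hβ _ (hu0 x)
    have t1 : σ * (lapl (fun x => ψ x ^ 2) x * β (u x)) ≤ σ * ((4 * d * e) * (K * u x)) := by
      refine mul_le_mul_of_nonneg_left ?_ hσ.le
      exact mul_le_mul ((le_abs_self _).trans (hφ2 x)) bK b0 (by positivity)
    have t2 : κ * (β (u x) * ∑ i, pd i (fun x => ψ x ^ 2) x * b i x) ≤ (K * u x) * (d * (2 * e * Bd)) := by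
      refine (le_abs_self _).trans ?_
      rw [abs_mul, hκ, one_mul, abs_mul, abs_of_nonneg b0]
      refine mul_le_mul bK ?_ (abs_nonneg _) (mul_nonneg hK (hu0 x))
      refine (Finset.abs_sum_le_sum_abs _ _).trans ?_
      refine (Finset.sum_le_card_nsmul _ _ (2 * e * Bd) fun i _ => ?_).trans (le_of_eq (by simp))
      rw [abs_mul]
      exact mul_le_mul (hφ1 i x) (hB i x) (abs_nonneg _) (by positivity)
    have t3 : κ * (ψ x ^ 2 * (β (u x) - β1 (u x) * u x) * ∑ i, pd i (b i) x) ≤ ψ x ^ 2 * m (u x) ^ 2 * |∑ i, pd i (b i) x| := by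
      rw [show β (u x) - β1 (u x) * u x = - (m (u x) ^ 2) by linarith]
      refine (le_abs_self _).trans (le_of_eq ?_)
      rw [abs_mul, hκ, one_mul, abs_mul, abs_mul, abs_neg, abs_of_nonneg (sq_nonneg _), abs_of_nonneg (sq_nonneg _)]
    have t4 : σ * ((4 * d * e) * (K * u x)) + (K * u x) * (d * (2 * e * Bd)) = Err * u x := by rw [hErr]; ring
    linarith
  refine ⟨main.trans ?_, ?_⟩
  · have : ∫ x, ψ x ^ 2 * m (u x) ^ 2 * |∑ i, pd i (b i) x| ≤ q * L * ∫ x, ψ x ^ 2 * β (u x) := by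
      rw [← integral_const_mul]
      refine integral_mono iM (iφβ.const_mul _) fun x => ?_
      obtain ⟨-, -, -, b0, bK, -, b20, bP, bm, -⟩ := hβ _ (hu0 x)
      simp only
      have := mul_le_mul bm (hL x) (abs_nonneg _) (mul_nonneg hq.le b0)
      have := mul_le_mul_of_nonneg_left this (sq_nonneg (ψ x))
      linarith
    have : 0 ≤ σ * D := by positivity
    linarith
  · intro Cx hCx hCσ hH
    refine main.trans ?_
    have dm : ∀ x, DifferentiableAt ℝ (fun x => m (u x)) x := fun x => DifferentiableAt.comp (g := m) x (hβ _ (hu0 x)).2.2.1.differentiableAt (du x)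
    set v : EuclideanSpace ℝ (Fin d) → ℝ := fun x => ψ x * m (u x) with hv
    have hdm : ∀ x, HasFDerivAt (fun x => m (u x)) (m1 (u x) • fderiv ℝ u x) x := fun x =>
      HasDerivAt.comp_hasFDerivAt (h₂ := m) x (hβ _ (hu0 x)).2.2.1 (du x).hasFDerivAt
    have cmm : ContDiff ℝ 1 (fun x => m (u x)) := by
      rw [contDiff_one_iff_fderiv]
      refine ⟨fun x => dm x, ?_⟩
      have : fderiv ℝ (fun x => m (u x)) = fun x => m1 (u x) • fderiv ℝ u x := funext fun x => (hdm x).fderiv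
      rw [this]
      exact cm1.smul (hu.continuous_fderiv (by simp))
    have cv1 : ContDiff ℝ 1 v := (hψ.of_le (by simp)).mul cmm
    have vs : HasCompactSupport v := hψs.mul_right
    have h1 := hH v cv1 vs
    have e2 : ∫ x, ψ x ^ 2 * m (u x) ^ 2 * |∑ i, pd i (b i) x| = ∫ x, v x ^ 2 * |∑ i, pd i (b i) x| := by
      refine integral_congr_ae (Filter.Eventually.of_forall fun x => ?_)
      simp only [hv]; ring
    have hG : ∫ x, ∑ i, (pd i v x) ^ 2 ≤ 2 * d * q * K * e + (2 + q) / 2 * D := by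
      calc ∫ x, ∑ i, (pd i v x) ^ 2 ≤ ∫ x, ((2 * d * q * e) * β (u x) + (2 + q) / 2 * (ψ x ^ 2 * β2 (u x) * ∑ i, pd i u x ^ 2)) := by
            refine integral_mono (gradsq_integrable cv1 vs) ((iβ.const_mul _).add (iD.const_mul _)) fun x => ?_
            obtain ⟨-, -, -, b0, bK, -, b20, bP, bm, bm1⟩ := hβ _ (hu0 x)
            simp only
            have : ∀ i ∈ Finset.univ, (pd i v x) ^ 2 ≤ 2 * q * e * β (u x) + (2 + q) / 2 * (ψ x ^ 2 * β2 (u x)) * pd i u x ^ 2 := by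
              intro i _
              have e3 : pd i v x = ψ x * (m1 (u x) * pd i u x) + m (u x) * pd i ψ x := by
                rw [hv, pd_eq ((dψ x).hasFDerivAt.fun_mul (hdm x))]; simp [pd]
              have e4 : (pd i v x) ^ 2 ≤ 2 * (ψ x * (m1 (u x) * pd i u x)) ^ 2 + 2 * (m (u x) * pd i ψ x) ^ 2 := by
                rw [e3]; nlinarith [sq_nonneg (ψ x * (m1 (u x) * pd i u x) - m (u x) * pd i ψ x)]
              have e5 : pd i ψ x ^ 2 ≤ e := by
                have := hp1 i x
                rw [← sq_abs]
                nlinarith [abs_nonneg (pd i ψ x)]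
              have e6 : m (u x) ^ 2 * pd i ψ x ^ 2 ≤ (q * β (u x)) * e := mul_le_mul bm e5 (sq_nonneg _) (by positivity)
              have e7 : ψ x ^ 2 * pd i u x ^ 2 * m1 (u x) ^ 2 ≤ ψ x ^ 2 * pd i u x ^ 2 * ((2 + q) / 4 * β2 (u x)) :=
                mul_le_mul_of_nonneg_left bm1 (by positivity)
              nlinarith
            refine (Finset.sum_le_sum this).trans (le_of_eq ?_)
            rw [Finset.sum_add_distrib, ← Finset.mul_sum Finset.univ (fun i => pd i u x ^ 2)]
            simp only [Finset.sum_const, Finset.card_univ, Fintype.card_fin, nsmul_eq_mul]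
            ring
        _ = (2 * d * q * e) * (∫ x, β (u x)) + (2 + q) / 2 * D := by
            rw [integral_add (iβ.const_mul _) (iD.const_mul _), integral_const_mul, integral_const_mul]
        _ ≤ _ := by
            have := mul_le_mul_of_nonneg_left ibβ (by positivity : 0 ≤ 2 * d * q * e)
            linarith
    rw [e2]
    have h2 := mul_le_mul_of_nonneg_left hG hCx
    have h3 := mul_le_mul_of_nonneg_right hCσ hD0
    nlinarith

theorem gronwall_seq {E E' : ℕ → ℝ → ℝ} {F : ℝ → ℝ} {s t A c : ℝ} (hst : s ≤ t) (hA : 0 ≤ A) (hc : 0 ≤ c)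
    (hE : ∀ n, ContinuousOn (E n) (Icc s t)) (hd : ∀ n, ∀ τ ∈ Ioo s t, HasDerivAt (E n) (E' n τ) τ)
    (hb : ∀ n, ∀ τ ∈ Ioo s t, E' n τ ≤ A * (1 / ((n:ℝ) + 1)) + c * E n τ)
    (hs : Filter.Tendsto (fun n => E n s) Filter.atTop (nhds (F s))) (ht : Filter.Tendsto (fun n => E n t) Filter.atTop (nhds (F t))) :
    F t ≤ Real.exp (c * (t - s)) * F s := by
  have key : ∀ n, E n t * Real.exp (-(c * (t - s))) ≤ E n s + A * (1 / ((n:ℝ) + 1)) * (t - s) := by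
    intro n
    set a := A * (1 / ((n:ℝ) + 1)) with ha
    have ha0 : 0 ≤ a := by positivity
    have hG : AntitoneOn (fun τ => E n τ * Real.exp (-(c * (τ - s))) - a * (τ - s)) (Icc s t) := by
      have hder : ∀ τ ∈ Ioo s t, HasDerivAt (fun τ => E n τ * Real.exp (-(c * (τ - s))) - a * (τ - s))
          (E' n τ * Real.exp (-(c * (τ - s))) + E n τ * (Real.exp (-(c * (τ - s))) * (-(c * 1))) - a * 1) τ := by
        intro τ hτ
        have h1 : HasDerivAt (fun τ : ℝ => τ - s) 1 τ := (hasDerivAt_id τ).sub_const s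
        exact ((hd n τ hτ).fun_mul ((h1.const_mul c).fun_neg.exp)).fun_sub (h1.const_mul a)
      refine antitoneOn_of_deriv_nonpos (convex_Icc s t) ?_ ?_ ?_
      · exact ((hE n).mul (by fun_prop)).sub (by fun_prop)
      · rw [interior_Icc]; exact fun τ hτ => (hder τ hτ).differentiableAt.differentiableWithinAt
      · rw [interior_Icc]; intro τ hτ
        rw [(hder τ hτ).deriv]
        have e1 : Real.exp (-(c * (τ - s))) ≤ 1 := Real.exp_le_one_iff.2 (by
          have := mul_nonneg hc (sub_nonneg.2 hτ.1.le); linarith)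
        have e0 := Real.exp_pos (-(c * (τ - s)))
        have := mul_le_mul_of_nonneg_right (hb n τ hτ) e0.le
        nlinarith
    have := hG (left_mem_Icc.2 hst) (right_mem_Icc.2 hst) hst
    simp at this
    linarith
  have hz : Filter.Tendsto (fun n : ℕ => A * (1 / ((n:ℝ) + 1)) * (t - s)) Filter.atTop (nhds (A * 0 * (t - s))) :=
    ((tendsto_one_div_add_atTop_nhds_zero_nat).const_mul A).mul_const _
  have := le_of_tendsto_of_tendsto' (ht.mul_const (Real.exp (-(c * (t - s))))) (hs.add hz) key
  rw [Real.exp_neg, ← div_eq_mul_inv, div_le_iff₀ (Real.exp_pos _)] at this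
  linarith

theorem limit_step {d : ℕ} {q : ℝ} (hq : 0 < q) {σ κ T : ℝ} (hσ : 0 < σ) (hκ : |κ| = 1) (hT : 0 < T)
    {w : ℝ → EuclideanSpace ℝ (Fin d) → ℝ}
    (hsm : ContDiffOn ℝ (⊤ : ℕ∞) (fun p : ℝ × EuclideanSpace ℝ (Fin d) => w p.1 p.2) (Icc 0 T ×ˢ univ))
    (hu : ∀ t ∈ Icc (0:ℝ) T, ContDiff ℝ (⊤ : ℕ∞) (w t)) (hui : ∀ t ∈ Icc (0:ℝ) T, Integrable (w t))
    (hub : ∀ t ∈ Icc (0:ℝ) T, ∃ M, ∀ x, w t x ≤ M)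
    (hw0 : ∀ t ∈ Icc (0:ℝ) T, ∀ x, 0 ≤ w t x) (hw1 : ∀ t ∈ Icc (0:ℝ) T, ∫ x, w t x = 1)
    {b : ℝ → Fin d → EuclideanSpace ℝ (Fin d) → ℝ}
    (hR : ∀ t ∈ Icc (0:ℝ) T, ∀ x, HasDerivWithinAt (fun s => w s x)
      (σ * lapl (w t) x - κ * ∑ i, pd i (fun z => w t z * b t i z) x) (Icc 0 T) t)
    (hb : ∀ t ∈ Icc (0:ℝ) T, ∀ i, Differentiable ℝ (b t i)) (hbc : ∀ t ∈ Icc (0:ℝ) T, ∀ i, Continuous (pd i (b t i)))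
    {Bd L : ℝ} (hBd : 0 ≤ Bd) (hL0 : 0 ≤ L) (hB : ∀ t ∈ Icc (0:ℝ) T, ∀ i x, |b t i x| ≤ Bd)
    (hL : ∀ t ∈ Icc (0:ℝ) T, ∀ x, |∑ i, pd i (b t i) x| ≤ L) :
    (∀ t ∈ Icc (0:ℝ) T, Integrable (fun x => w t x ^ (1 + q))) ∧
    ∀ s t, 0 ≤ s → s ≤ t → t ≤ T →
      ∫ x, w t x ^ (1 + q) ≤ Real.exp (q * L * (t - s)) * ∫ x, w s x ^ (1 + q) ∧
      ∀ Cx, 0 ≤ Cx → Cx * ((2 + q) / 2) ≤ σ →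
      (∀ τ ∈ Icc s t, ∀ v : EuclideanSpace ℝ (Fin d) → ℝ, ContDiff ℝ 1 v → HasCompactSupport v →
        ∫ x, v x ^ 2 * |∑ i, pd i (b τ i) x| ≤ Cx * ∫ x, ∑ i, (pd i v x) ^ 2) →
      ∫ x, w t x ^ (1 + q) ≤ ∫ x, w s x ^ (1 + q) := by
  obtain ⟨β, β1, β2, m, m1, K, hβ, hlim⟩ := beta_family hq
  have hn0 : ∀ n : ℕ, (0:ℝ) < 1 / ((n:ℝ) + 1) := fun n => by positivity
  have hn1 : ∀ n : ℕ, (1:ℝ) / ((n:ℝ) + 1) ≤ 1 := fun n => by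
    rw [div_le_one (by positivity)]; have : (0:ℝ) ≤ n := n.cast_nonneg
    linarith
  have hok : ∀ n : ℕ, BetaOK q (K (1 / ((n:ℝ) + 1))) (β (1 / ((n:ℝ) + 1))) (β1 (1 / ((n:ℝ) + 1))) (β2 (1 / ((n:ℝ) + 1))) (m (1 / ((n:ℝ) + 1))) (m1 (1 / ((n:ℝ) + 1))) :=
    fun n => hβ _ (hn0 n) (hn1 n)
  have hex : ∀ n : ℕ, ∃ e : ℝ, 0 < e ∧ e ≤ 1 ∧ K (1 / ((n:ℝ) + 1)) * e ≤ 1 / ((n:ℝ) + 1) := by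
    intro n
    have hK := (hok n).1
    refine ⟨1 / ((n:ℝ) + 1) / (K (1 / ((n:ℝ) + 1)) + 1), by have := hn0 n; positivity, ?_, ?_⟩
    · rw [div_le_one (by positivity)]; linarith [hn1 n]
    · rw [mul_div_assoc', div_le_iff₀ (by positivity)]
      nlinarith [hn0 n]
  choose e he0 he1 heK using hex
  choose ψ hψ hψs h01 hψ1 hp1 hp2 using fun n : ℕ => cutoff d (he0 n) (by positivity : (0:ℝ) < (n:ℝ) + 1)
  have hT2 : ∀ n, _ := fun n => time_deriv hT hsm hw0 hR (φ := fun x => ψ n x ^ 2) ((hψ n).continuous.pow 2)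
    (by simp_rw [sq]; exact (hψs n).mul_right) (fun y hy => ((hok n).2.1 y hy).1)
    (fun y hy => ((hok n).2.1 y hy).2.1.continuousAt.continuousWithinAt)
  have hconv : ∀ t ∈ Icc (0:ℝ) T, Integrable (fun x => w t x ^ (1 + q)) ∧
      Filter.Tendsto (fun n : ℕ => ∫ x, ψ n x ^ 2 * β (1 / ((n:ℝ) + 1)) (w t x)) Filter.atTop (nhds (∫ x, w t x ^ (1 + q))) := by
    intro t ht
    obtain ⟨M, hM⟩ := hub t ht
    have cu := (hu t ht).continuous
    have hM0 : 0 ≤ M := (hw0 t ht 0).trans (hM 0)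
    have hbd : ∀ x, w t x * (w t x + 1) ^ q ≤ w t x * (M + 1) ^ q := fun x =>
      mul_le_mul_of_nonneg_left (Real.rpow_le_rpow (by linarith [hw0 t ht x]) (by linarith [hM x]) hq.le) (hw0 t ht x)
    have hint := (hui t ht).mul_const ((M + 1) ^ q)
    refine ⟨hint.mono' (cu.rpow_const fun x => Or.inr (by positivity)).aestronglyMeasurable (Filter.Eventually.of_forall fun x => ?_), ?_⟩
    · have h0 := hw0 t ht x
      rw [Real.norm_of_nonneg (by positivity), Real.rpow_add_of_nonneg h0 zero_le_one hq.le, Real.rpow_one]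
      exact mul_le_mul_of_nonneg_left (Real.rpow_le_rpow h0 (by linarith [hM x]) hq.le) h0
    · refine tendsto_integral_of_dominated_convergence (fun x => w t x * (M + 1) ^ q) (fun n => ?_) hint (fun n => ?_) ?_
      · have cβ : Continuous (fun x => β (1 / ((n:ℝ) + 1)) (w t x)) := continuous_iff_continuousAt.2 fun x =>
          ContinuousAt.comp (g := β (1 / ((n:ℝ) + 1))) ((hok n).2.1 _ (hw0 t ht x)).1.continuousAt cu.continuousAt
        exact (((hψ n).continuous.pow 2).mul cβ).aestronglyMeasurable
      · refine Filter.Eventually.of_forall fun x => ?_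
        obtain ⟨-, -, -, b0, -, bK, -⟩ := (hok n).2.1 _ (hw0 t ht x)
        obtain ⟨p0, p1⟩ := h01 n x
        rw [Real.norm_of_nonneg (by positivity)]
        have : ψ n x ^ 2 ≤ 1 := pow_le_one₀ p0 p1
        calc _ ≤ 1 * β (1 / ((n:ℝ) + 1)) (w t x) := mul_le_mul_of_nonneg_right this b0
          _ ≤ _ := by rw [one_mul]; exact bK.trans (hbd x)
      · refine Filter.Eventually.of_forall fun x => ?_
        refine (hlim _ (hw0 t ht x)).congr' ?_
        obtain ⟨N, hN⟩ := exists_nat_ge ‖x‖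
        filter_upwards [Filter.eventually_ge_atTop N] with n hn
        have : (N:ℝ) ≤ n := by exact_mod_cast hn
        rw [hψ1 n x (by linarith)]; ring
  refine ⟨fun t ht => (hconv t ht).1, fun s t hs hst ht => ?_⟩
  have hsub : Icc s t ⊆ Icc 0 T := Icc_subset_Icc hs ht
  have hsub' : Ioo s t ⊆ Ioo 0 T := Ioo_subset_Ioo hs ht
  have hle := fun n (τ : ℝ) (hτ : τ ∈ Ioo s t) => energy_ineq hq (hok n) (he0 n) (he1 n) (hψ n) (hψs n) (h01 n) (hp1 n) (hp2 n)
    (hu τ (hsub (Ioo_subset_Icc_self hτ))) (hw0 τ (hsub (Ioo_subset_Icc_self hτ))) (hui τ (hsub (Ioo_subset_Icc_self hτ)))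
    (hw1 τ (hsub (Ioo_subset_Icc_self hτ))) (hb τ (hsub (Ioo_subset_Icc_self hτ))) (hbc τ (hsub (Ioo_subset_Icc_self hτ)))
    (hB τ (hsub (Ioo_subset_Icc_self hτ))) (hL τ (hsub (Ioo_subset_Icc_self hτ))) hσ hκ
  have hA : 0 ≤ σ * 4 * d + 2 * d * Bd := by positivity
  constructor
  · refine gronwall_seq (F := fun t => ∫ x, w t x ^ (1 + q)) hst hA (by positivity) (fun n => (hT2 n).1.mono hsub) (fun n τ hτ => (hT2 n).2 τ (hsub' hτ)) (fun n τ hτ => ?_)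
      (hconv s ⟨hs, hst.trans ht⟩).2 (hconv t ⟨hs.trans hst, ht⟩).2
    have h1 := (hle n τ hτ).1
    have h2 := mul_le_mul_of_nonneg_left (heK n) hA
    linarith
  · intro Cx hC0 hCσ hH
    have hA2 : 0 ≤ σ * 4 * d + 2 * d * Bd + Cx * (2 * d * q) := by positivity
    have := gronwall_seq (F := fun t => ∫ x, w t x ^ (1 + q)) hst hA2 le_rfl (fun n => (hT2 n).1.mono hsub) (fun n τ hτ => (hT2 n).2 τ (hsub' hτ)) (fun n τ hτ => ?_)
      (hconv s ⟨hs, hst.trans ht⟩).2 (hconv t ⟨hs.trans hst, ht⟩).2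
    · simpa using this
    have h1 := (hle n τ hτ).2 Cx hC0 hCσ (hH τ (Ioo_subset_Icc_self hτ))
    have h2 := mul_le_mul_of_nonneg_left (heK n) hA2
    linarith

theorem bootstrap {F : ℝ → ℝ} {T c Y : ℝ} (hc : 0 ≤ c) (hF0 : ∀ t ∈ Icc (0:ℝ) T, 0 ≤ F t)
    (h1 : ∀ s t, 0 ≤ s → s ≤ t → t ≤ T → F t ≤ Real.exp (c * (t - s)) * F s)
    (h2 : ∀ s t, 0 ≤ s → s ≤ t → t ≤ T → (∀ τ ∈ Icc s t, F τ ≤ Y) → F t ≤ F s)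
    (hY : 2 * F 0 ≤ Y) : ∀ t ∈ Icc (0:ℝ) T, F t ≤ F 0 := by
  set δ := Real.log 2 / (c + 1) with hδ
  have hl : 0 < Real.log 2 := Real.log_pos (by norm_num)
  have hδ0 : 0 < δ := by positivity
  have hδ2 : c * δ ≤ Real.log 2 := by
    rw [hδ, mul_div_assoc', div_le_iff₀ (by positivity)]; nlinarith
  have main : ∀ n : ℕ, ∀ t ∈ Icc (0:ℝ) T, t ≤ n * δ → F t ≤ F 0 := by
    intro n
    induction n with
    | zero =>
      intro t ht h
      have : t = 0 := le_antisymm (by simpa using h) ht.1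
      rw [this]
    | succ n ih =>
      intro t ht h
      by_cases hn : t ≤ n * δ
      · exact ih t ht hn
      push Not at hn
      push_cast at h
      have hs0 : (0:ℝ) ≤ n * δ := by positivity
      have hs : F (n * δ) ≤ F 0 := ih _ ⟨hs0, hn.le.trans ht.2⟩ le_rfl
      refine (h2 _ t hs0 hn.le ht.2 fun τ hτ => ?_).trans hs
      have hf := hF0 _ ⟨hs0, hn.le.trans ht.2⟩
      refine (h1 _ τ hs0 hτ.1 (hτ.2.trans ht.2)).trans ?_
      have : Real.exp (c * (τ - n * δ)) ≤ 2 := by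
        rw [← Real.le_log_iff_exp_le (by norm_num)]
        refine le_trans (mul_le_mul_of_nonneg_left ?_ hc) hδ2
        linarith [hτ.2]
      nlinarith
  intro t ht
  obtain ⟨n, hn⟩ := exists_nat_ge (t / δ)
  exact main n t ht (by rwa [div_le_iff₀ hδ0] at hn)

theorem main_real {d : ℕ} (hd : 3 ≤ d) {lam : ℝ} (hlam0 : 0 < lam) (hlamd : lam < (d : ℝ) - 2)
    {σ : ℝ} (hσ : 0 < σ) : ∃ X : ℝ, 0 < X ∧ ∀ κ : ℝ, |κ| = 1 → ∀ T : ℝ, 0 < T →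
      ∀ ρ : EuclideanSpace ℝ (Fin d) → ℝ, ContDiff ℝ (⊤ : ℕ∞) ρ → HasCompactSupport ρ → (∀ x, 0 ≤ ρ x) → ∫ x, ρ x = 1 →
      ∀ w : ℝ → EuclideanSpace ℝ (Fin d) → ℝ, IsAggregationSolution σ κ T (gradient (riesz lam ρ)) w →
      (∀ t ∈ Icc (0:ℝ) T, Integrable (fun x => w t x ^ ((d:ℝ) / (d - lam)))) ∧
      (2 * ∫ x, w 0 x ^ ((d:ℝ) / (d - lam)) ≤ X ^ ((d:ℝ) / (d - lam)) →
      ∀ t ∈ Icc (0:ℝ) T, ∫ x, w t x ^ ((d:ℝ) / (d - lam)) ≤ ∫ x, w 0 x ^ ((d:ℝ) / (d - lam))) := by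
  obtain ⟨C, hC0, hC⟩ := hls_apply hd hlam0 hlamd
  have hdl : 0 < (d:ℝ) - lam := by linarith
  set q := lam / ((d:ℝ) - lam) with hqd
  have hq : 0 < q := by positivity
  have hpq : (d:ℝ) / (d - lam) = 1 + q := by rw [hqd]; field_simp; ring
  have hd1 : 1 ≤ d := by omega
  have hld : lam < d := by linarith
  set X := σ * 2 / ((C + 1) * (2 + q)) with hX
  have hX0 : 0 < X := by positivity
  have hCX : C * X * ((2 + q) / 2) ≤ σ := by
    have : C * X * ((2 + q) / 2) = σ * (C / (C + 1)) := by rw [hX]; field_simp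
    rw [this]
    have : C / (C + 1) ≤ 1 := by rw [div_le_one (by positivity)]; linarith
    nlinarith
  refine ⟨X, hX0, fun κ hκ T hT ρ hρ hρs hρ0 hρ1 w hw => ?_⟩
  obtain ⟨hsm, hS, hw0, hw1, hR⟩ := hw
  have hu : ∀ t ∈ Icc (0:ℝ) T, ContDiff ℝ (⊤ : ℕ∞) (w t) := fun t ht => by
    obtain ⟨S, hS⟩ := hS t ht
    rw [funext hS]; exact S.smooth _
  have hui : ∀ t ∈ Icc (0:ℝ) T, Integrable (w t) := fun t ht => by
    obtain ⟨S, hS⟩ := hS t ht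
    rw [funext hS]; exact S.integrable
  have hub : ∀ t ∈ Icc (0:ℝ) T, ∃ M, ∀ x, w t x ≤ M := fun t ht => by
    obtain ⟨S, hS⟩ := hS t ht
    obtain ⟨M, hM⟩ := S.decay 0 0
    refine ⟨M, fun x => ?_⟩
    have := hM.2 x
    simp only [pow_zero, one_mul, norm_iteratedFDeriv_zero] at this
    rw [hS]; exact (le_abs_self _).trans this
  choose Bf hBf0 hBf using fun i => riesz_bdd hd1 hlam0 hld (pd_smooth i hρ).continuous (pd_supp i hρs)
  obtain ⟨L, hL0, hL⟩ := riesz_bdd hd1 hlam0 hld (lapl_smooth hρ).continuous (lapl_supp hρs)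
  have hdiv : ∀ t ∈ Icc (0:ℝ) T, ∀ x, ∑ i, pd i (cv lam (w t) (pd i ρ)) x = cv lam (w t) (lapl ρ) x := fun t ht x =>
    cv_lapl hd1 hlam0 hld (hui t ht) hρ hρs x
  obtain ⟨hint, hstep⟩ := limit_step hq hσ hκ hT hsm hu hui hub hw0 hw1 (b := fun t i => cv lam (w t) (pd i ρ))
    (fun t ht x => by
      have := hR t ht x
      convert this using 4 with i
      unfold diverg
      refine Finset.sum_congr rfl fun i _ => ?_
      unfold pd
      congr 2
      ext z
      rw [PiLp.smul_apply, smul_eq_mul, drift_coord hd1 hlam0 hld (hui t ht) hρ hρs]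
      rfl)
    (fun t ht i => cv_differentiable hd1 hlam0 hld (hui t ht) (pd_smooth i hρ) (pd_supp i hρs))
    (fun t ht i => by
      rw [cv_pd hd1 hlam0 hld (hui t ht) (pd_smooth i hρ) (pd_supp i hρs)]
      exact (cv_differentiable hd1 hlam0 hld (hui t ht) (pd_smooth i (pd_smooth i hρ)) (pd_supp i (pd_supp i hρs))).continuous)
    (Bd := ∑ i, Bf i) (L := L) (Finset.sum_nonneg fun i _ => hBf0 i) hL0
    (fun t ht i x => (cv_bdd (hui t ht) (hw0 t ht) (hw1 t ht) (hBf i) x).trans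
      (Finset.single_le_sum (f := Bf) (fun i _ => hBf0 i) (Finset.mem_univ i)))
    (fun t ht x => by
      rw [hdiv t ht]; exact cv_bdd (hui t ht) (hw0 t ht) (hw1 t ht) hL x)
  simp_rw [hpq] at hC ⊢
  refine ⟨hint, fun h2 => ?_⟩
  refine bootstrap (F := fun t => ∫ x, w t x ^ (1 + q)) (c := q * L) (Y := X ^ (1 + q)) (by positivity)
    (fun t ht => integral_nonneg fun x => Real.rpow_nonneg (hw0 t ht x) _)
    (fun s t h0 hst ht => (hstep s t h0 hst ht).1) (fun s t h0 hst ht hY => ?_) h2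
  refine (hstep s t h0 hst ht).2 (C * X) (by positivity) hCX fun τ hτ v hv hvs => ?_
  have hτ' : τ ∈ Icc 0 T := ⟨h0.trans hτ.1, hτ.2.trans ht⟩
  simp_rw [hdiv τ hτ']
  refine hC ρ hρ hρs hρ0 hρ1 (w τ) (hu τ hτ').continuous (hui τ hτ') (hw0 τ hτ') X hX0 ?_ v hv hvs
  rw [← ofReal_integral_eq_lintegral_ofReal (hint τ hτ') (Filter.Eventually.of_forall fun x => Real.rpow_nonneg (hw0 τ hτ' x) _)]
  exact ENNReal.ofReal_le_ofReal (hY τ hτ)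

theorem eLpNorm_eq_real {d : ℕ} {p : ℝ} (hp : 0 < p) {u : EuclideanSpace ℝ (Fin d) → ℝ} (hu0 : ∀ x, 0 ≤ u x)
    (hi : Integrable (fun x => u x ^ p)) :
    eLpNorm u (ENNReal.ofReal p) volume = ENNReal.ofReal ((∫ x, u x ^ p) ^ (1 / p)) := by
  have h0 : ∀ x, 0 ≤ u x ^ p := fun x => Real.rpow_nonneg (hu0 x) _
  rw [eLpNorm_eq_lintegral_rpow_enorm_toReal (by simpa using hp) (by simp), ENNReal.toReal_ofReal hp.le,
    ← ENNReal.ofReal_rpow_of_nonneg (integral_nonneg h0) (by positivity),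
    ofReal_integral_eq_lintegral_ofReal hi (Filter.Eventually.of_forall h0)]
  congr 2
  ext x
  rw [← ENNReal.ofReal_rpow_of_nonneg (hu0 x) hp.le, ← ofReal_norm, Real.norm_of_nonneg (hu0 x)]

/-- For `d ≥ 3`, `0 < λ < d-2`, `σ > 0` there is `C* > 0` depending only on `d`, `λ`, `σ`
(independent of `η`, `T`, `κ`, `χ`) such that every classical Schwartz-class solution of
the intermediate equation `∂_t w = σΔw − κ div(w ∇V^η * w)` with
`‖w(0)‖_{L^{p*}} ≤ C*`, `p* = d/(d−λ)`, satisfies `‖w(t)‖_{L^{p*}} ≤ ‖w(0)‖_{L^{p*}}`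
for all `t ∈ [0,T]`. -/
theorem intermediate_equation_Lpstar_decay
    (d : ℕ) (hd : 3 ≤ d) (lam : ℝ) (hlam0 : 0 < lam) (hlamd : lam < (d : ℝ) - 2)
    (σ : ℝ) (hσ : 0 < σ) :
    ∃ Cstar : ℝ, 0 < Cstar ∧
      ∀ (κ : ℝ), (κ = 1 ∨ κ = -1) →
      ∀ (T : ℝ), 0 < T →
      ∀ (η : ℝ), 0 < η →
      ∀ (χ : EuclideanSpace ℝ (Fin d) → ℝ),
        ContDiff ℝ (⊤ : ℕ∞) χ → HasCompactSupport χ → (∀ x, 0 ≤ χ x) → (∫ x, χ x) = 1 →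
      ∀ (w : ℝ → EuclideanSpace ℝ (Fin d) → ℝ),
        IsAggregationSolution σ κ T (gradient (Veta lam χ η)) w →
        eLpNorm (w 0) (ENNReal.ofReal ((d : ℝ) / ((d : ℝ) - lam))) volume
          ≤ ENNReal.ofReal Cstar →
      ∀ t ∈ Icc (0:ℝ) T,
        eLpNorm (w t) (ENNReal.ofReal ((d : ℝ) / ((d : ℝ) - lam))) volume
          ≤ eLpNorm (w 0) (ENNReal.ofReal ((d : ℝ) / ((d : ℝ) - lam))) volume := by
  obtain ⟨X, hX0, hX⟩ := main_real hd hlam0 hlamd hσ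
  have hdl : 0 < (d:ℝ) - lam := by linarith
  have hp1 : 1 ≤ (d:ℝ) / (d - lam) := by rw [one_le_div hdl]; linarith
  set p := (d:ℝ) / (d - lam) with hp
  have hp0 : 0 < p := by linarith
  refine ⟨X / 2, by positivity, fun κ hκ T hT η hη χ hχ hχs hχ0 hχ1 w hw hle t ht => ?_⟩
  have hκ' : |κ| = 1 := by rcases hκ with h | h <;> simp [h]
  set ρ : EuclideanSpace ℝ (Fin d) → ℝ := fun x => η ^ (-(d:ℝ)) * χ (η⁻¹ • x) with hρ
  have hρ1 : ∫ x, ρ x = 1 := by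
    rw [hρ, integral_const_mul, Measure.integral_comp_inv_smul, hχ1]
    simp only [finrank_euclideanSpace, Fintype.card_fin, smul_eq_mul, mul_one]
    rw [abs_of_pos (by positivity), Real.rpow_neg hη.le, Real.rpow_natCast]
    exact inv_mul_cancel₀ (by positivity)
  have hs : ∀ t ∈ Icc (0:ℝ) T, ∀ x, 0 ≤ w t x := hw.2.2.1
  obtain ⟨hi, hdec⟩ := hX κ hκ' T hT ρ (contDiff_const.mul (hχ.comp (contDiff_const_smul _)))
    ((hχs.comp_smul (inv_ne_zero hη.ne')).mul_left) (fun x => mul_nonneg (by positivity) (hχ0 _)) hρ1 w hw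
  have h0m : (0:ℝ) ∈ Icc 0 T := ⟨le_rfl, hT.le⟩
  have hI0 : 0 ≤ ∫ x, w 0 x ^ p := integral_nonneg fun x => Real.rpow_nonneg (hs 0 h0m x) _
  have hIt : 0 ≤ ∫ x, w t x ^ p := integral_nonneg fun x => Real.rpow_nonneg (hs t ht x) _
  rw [eLpNorm_eq_real hp0 (hs 0 h0m) (hi 0 h0m)] at hle ⊢
  rw [eLpNorm_eq_real hp0 (hs t ht) (hi t ht)]
  refine ENNReal.ofReal_le_ofReal (Real.rpow_le_rpow hIt (hdec ?_ t ht) (by positivity))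
  rw [ENNReal.ofReal_le_ofReal_iff (by positivity), one_div, Real.rpow_inv_le_iff_of_pos hI0 (by positivity) hp0,
    Real.div_rpow hX0.le (by norm_num)] at hle
  have h2 : (2:ℝ) ≤ 2 ^ p := by simpa using Real.rpow_le_rpow_of_exponent_le (by norm_num : (1:ℝ) ≤ 2) hp1
  rw [le_div_iff₀ (by positivity)] at hle
  nlinarith
end
end
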